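/- Assume (H2). There exist constants C₁ > 1 and C₀' > 0, depending only on a₀ and C₀, such that for every ε₀ ∈ (0, 1/(2C₁)), every λ > 1 and every η ∈ (0, 1/2), if ε₀⁻²/C₀' ≤ β := b(x₀, e^{t₀}), then for every τ ∈ (0,1): (1 - τ)² (|K| β / (2π e^{t₀})) Σ_{k=0}^∞ [Λ_m(λ) - 1/4 - C₀'/(τ ε₀)² - (2k+1)β]₊⁰ ≤ N(λ; q̂^Ã_K), where Λ_m(λ) = (1 + η²)⁻¹ ( λ/(1 + ε₀ C₁) - (ε₀⁴/η²) C₁ β² ), and [ρ]₊⁰ = 1 if ρ > 0 and 0 otherwise. -/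

import Mathlib

open MeasureTheory Real Filter

noncomputable section

/-- The upper half-plane ℍ as a subset of ℝ². -/
def UHP : Set (ℝ × ℝ) := {p : ℝ × ℝ | 0 < p.2}

/-- The hyperbolic measure `dv = y⁻² dx dy` on ℍ. -/
def volH : Measure (ℝ × ℝ) :=
  (volume.restrict UHP).withDensity fun p => ENNReal.ofReal ((p.2 ^ 2)⁻¹)

/-- x-derivative of a complex function on ℝ². -/
def dX (f : ℝ × ℝ → ℂ) (p : ℝ × ℝ) : ℂ := fderiv ℝ f p (1, 0)

/-- y-derivative of a complex function on ℝ². -/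
def dY (f : ℝ × ℝ → ℂ) (p : ℝ × ℝ) : ℂ := fderiv ℝ f p (0, 1)

/-- x-derivative of a real function on ℝ². -/
def dXr (f : ℝ × ℝ → ℝ) (p : ℝ × ℝ) : ℝ := fderiv ℝ f p (1, 0)

/-- y-derivative of a real function on ℝ². -/
def dYr (f : ℝ × ℝ → ℝ) (p : ℝ × ℝ) : ℝ := fderiv ℝ f p (0, 1)

/-- The magnetic field `b̃ = y² (∂ₓA₂ - ∂_yA₁)`. -/
def fieldB (A₁ A₂ : ℝ × ℝ → ℝ) (p : ℝ × ℝ) : ℝ := p.2 ^ 2 * (dXr A₂ p - dYr A₁ p)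

/-- The magnetic intensity `b = |b̃|`. -/
def intenB (A₁ A₂ : ℝ × ℝ → ℝ) (p : ℝ × ℝ) : ℝ := |fieldB A₁ A₂ p|

/-- Smooth compactly supported test functions with support inside a set `Ω`. -/
def IsTestOn (Ω : Set (ℝ × ℝ)) (f : ℝ × ℝ → ℂ) : Prop :=
  ContDiff ℝ (⊤ : ℕ∞) f ∧ HasCompactSupport f ∧ tsupport f ⊆ Ω

/-- The quadratic form of the magnetic Laplacian on ℍ. -/
def qA (A₁ A₂ : ℝ × ℝ → ℝ) (f : ℝ × ℝ → ℂ) : ℝ :=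
  ∫ p, p.2 ^ 2 * (‖-Complex.I * dX f p - (A₁ p : ℂ) * f p‖ ^ 2 +
    ‖-Complex.I * dY f p - (A₂ p : ℂ) * f p‖ ^ 2) ∂volH

/-- hyperbolic distance from `(x,y)` to `(0,1)`. -/
def hDist (p : ℝ × ℝ) : ℝ :=
  2 * Real.arsinh (Real.sqrt (p.1 ^ 2 + (p.2 - 1) ^ 2) / (2 * Real.sqrt p.2))

/-- (H1) : the magnetic intensity tends to +∞ at infinity. -/
def H1 (A₁ A₂ : ℝ × ℝ → ℝ) : Prop :=
  ∀ M : ℝ, ∃ R : ℝ, ∀ p ∈ UHP, R ≤ hDist p → M ≤ intenB A₁ A₂ p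

/-- (H2) : control of the derivative of the magnetic field. -/
def H2 (C₀ : ℝ) (A₁ A₂ : ℝ × ℝ → ℝ) : Prop :=
  ∀ p ∈ UHP, p.2 * Real.sqrt ((dXr (fieldB A₁ A₂) p) ^ 2 + (dYr (fieldB A₁ A₂) p) ^ 2)
    ≤ C₀ * (intenB A₁ A₂ p + 1)

/-- Counting function of a quadratic form `q` with form domain `dom` and squared
norm `nsq`, via Glazman's lemma. -/
def NN (q : (ℝ × ℝ → ℂ) → ℝ) (dom : Set (ℝ × ℝ → ℂ)) (nsq : (ℝ × ℝ → ℂ) → ℝ)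
    (lam : ℝ) : ℕ :=
  sSup {n : ℕ | ∃ V : Submodule ℂ (ℝ × ℝ → ℂ), (V : Set (ℝ × ℝ → ℂ)) ⊆ dom ∧
    Module.finrank ℂ V = n ∧ ∀ u ∈ V, u ≠ 0 → q u < lam * nsq u}

/-- Heaviside function `[ρ]₊⁰`. -/
def heav (ρ : ℝ) : ℝ := if 0 < ρ then 1 else 0


/-- The rectangle `K = X₀ + K₀` with `K₀ = (-ε₀ a e^{t₀}/2, ε₀ a e^{t₀}/2) × (-ε₀/2, ε₀/2)`. -/
def Krect (x₀ t₀ a ε₀ : ℝ) : Set (ℝ × ℝ) :=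
  Set.Ioo (x₀ - ε₀ * a * Real.exp t₀ / 2) (x₀ + ε₀ * a * Real.exp t₀ / 2) ×ˢ
    Set.Ioo (t₀ - ε₀ / 2) (t₀ + ε₀ / 2)

/-- `Ã₁(x,t) = -∫_{e^{t₀}}^{e^t} b̃(x,s) s⁻² ds`. -/
def Atil (A₁ A₂ : ℝ × ℝ → ℝ) (t₀ : ℝ) (p : ℝ × ℝ) : ℝ :=
  -∫ s in Real.exp t₀..Real.exp p.2, fieldB A₁ A₂ (p.1, s) / s ^ 2

/-- `A₁⁰(x,t) = -(t - t₀) e^{-t₀} b̃₀`. -/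
def Azero (t₀ b₀ : ℝ) (p : ℝ × ℝ) : ℝ := -(p.2 - t₀) * Real.exp (-t₀) * b₀

/-- The Dirichlet form `q̂^Ã_K`. -/
def qhatK (A₁ A₂ : ℝ × ℝ → ℝ) (x₀ t₀ a ε₀ : ℝ) (w : ℝ × ℝ → ℂ) : ℝ :=
  ∫ p in Krect x₀ t₀ a ε₀,
    (Real.exp (2 * p.2) * ‖-Complex.I * dX w p - (Atil A₁ A₂ t₀ p : ℂ) * w p‖ ^ 2
      + ‖dY w p‖ ^ 2 + (1/4) * ‖w p‖ ^ 2)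

/-- The Dirichlet form `q̂^{Ã,0}_K` (with frozen factor `e^{2t₀}`). -/
def qhatK0 (A₁ A₂ : ℝ × ℝ → ℝ) (x₀ t₀ a ε₀ : ℝ) (w : ℝ × ℝ → ℂ) : ℝ :=
  ∫ p in Krect x₀ t₀ a ε₀,
    (Real.exp (2 * t₀) * ‖-Complex.I * dX w p - (Atil A₁ A₂ t₀ p : ℂ) * w p‖ ^ 2
      + ‖dY w p‖ ^ 2 + (1/4) * ‖w p‖ ^ 2)

/-- The Dirichlet form `q^{A⁰,0}_K` of the frozen constant magnetic field `b̃₀`. -/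
def qK0 (x₀ t₀ a ε₀ b₀ : ℝ) (w : ℝ × ℝ → ℂ) : ℝ :=
  ∫ p in Krect x₀ t₀ a ε₀,
    (Real.exp (2 * t₀) * ‖-Complex.I * dX w p - (Azero t₀ b₀ p : ℂ) * w p‖ ^ 2
      + ‖dY w p‖ ^ 2 + (1/4) * ‖w p‖ ^ 2)


/-- Dirichlet eigenvalue counting function of `q̂^Ã_K` on `L²(K)`. -/
def NKA (A₁ A₂ : ℝ × ℝ → ℝ) (x₀ t₀ a ε₀ lam : ℝ) : ℕ :=
  NN (qhatK A₁ A₂ x₀ t₀ a ε₀) {w | IsTestOn (Krect x₀ t₀ a ε₀) w}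
    (fun w => ∫ p in Krect x₀ t₀ a ε₀, ‖w p‖ ^ 2) lam

section
open MeasureTheory Real Filter
open scoped ContDiff
noncomputable section

/-- Cutoff data. -/
structure Cut (L δ C : ℝ) (χ P : ℝ → ℝ) : Prop where
  smooth : ContDiff ℝ ∞ χ
  smoothP : ContDiff ℝ ∞ P
  sq : ∀ x, χ x ^ 2 = P (x + L / 2) - P (x - L / 2)
  P0 : ∀ x, x ≤ -δ / 2 → P x = 0
  P1 : ∀ x, δ / 2 ≤ x → P x = 1
  Pnn : ∀ x, 0 ≤ P x
  Ple : ∀ x, P x ≤ 1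
  dchi : ∀ x, |deriv χ x| ≤ C / δ
  dP : ∀ x, |deriv P x| ≤ C / δ
  supp : ∀ x, (L + δ) / 2 ≤ |x| → χ x = 0

lemma smoothTransition_deriv_bdd : ∃ C : ℝ, 0 < C ∧ ∀ x, |deriv smoothTransition x| ≤ C := by
  have hc : Continuous (deriv smoothTransition) :=
    (smoothTransition.contDiff (n := 1)).continuous_deriv le_rfl
  obtain ⟨C, hC⟩ := (isCompact_Icc (a := (-1:ℝ)) (b := 2)).exists_bound_of_continuousOn hc.continuousOn
  refine ⟨max C 1, by positivity, fun x => ?_⟩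
  by_cases hx : x ∈ Set.Icc (-1:ℝ) 2
  · exact (hC x hx).trans (le_max_left _ _)
  · have : deriv smoothTransition x = 0 := by
      rw [Set.mem_Icc, not_and_or, not_le, not_le] at hx
      rcases hx with hx | hx
      · have : smoothTransition =ᶠ[nhds x] fun _ => 0 := by
          filter_upwards [Iio_mem_nhds hx] with y hy
          exact smoothTransition.zero_of_nonpos (by linarith [Set.mem_Iio.1 hy])
        rw [this.deriv_eq]; simp
      · have : smoothTransition =ᶠ[nhds x] fun _ => 1 := by
          filter_upwards [Ioi_mem_nhds hx] with y hy
          exact smoothTransition.one_of_one_le (by linarith [Set.mem_Ioi.1 hy])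
        rw [this.deriv_eq]; simp
    rw [this]; simp

lemma exists_cut : ∃ C : ℝ, 0 < C ∧ ∀ L δ : ℝ, 0 < δ → δ < L → ∃ χ P, Cut L δ C χ P := by
  obtain ⟨C, hC, hb⟩ := smoothTransition_deriv_bdd
  refine ⟨π * C, by positivity, fun L δ hδ hL => ?_⟩
  set S : ℝ → ℝ := fun x => π / 2 * smoothTransition (x / δ + 1 / 2) with hS
  have hSs : ContDiff ℝ ∞ S := by
    apply contDiff_const.mul
    exact smoothTransition.contDiff.comp ((contDiff_id.div_const _).add contDiff_const)
  have hSd : ∀ x, HasDerivAt S (π / 2 * (deriv smoothTransition (x / δ + 1 / 2) * (1 / δ))) x := by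
    intro x
    apply HasDerivAt.const_mul
    have h1 : HasDerivAt smoothTransition (deriv smoothTransition (x / δ + 1 / 2)) (x / δ + 1 / 2) :=
      ((smoothTransition.contDiff (n := 1)).differentiable (by simp) _).hasDerivAt
    have h2 : HasDerivAt (fun x : ℝ => x / δ + 1 / 2) (1 / δ) x :=
      ((hasDerivAt_id x).div_const δ).add_const _
    exact h1.comp x h2
  have hSb : ∀ x, |π / 2 * (deriv smoothTransition (x / δ + 1 / 2) * (1 / δ))| ≤ π * C / δ / 2 := by
    intro x
    rw [abs_mul, abs_mul, abs_of_pos (by positivity : 0 < π / 2), abs_of_pos (by positivity : 0 < 1 / δ)]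
    have := hb (x / δ + 1 / 2)
    calc _ ≤ π / 2 * (C * (1 / δ)) := by gcongr
      _ = _ := by ring
  have hS0 : ∀ x, x ≤ -δ / 2 → S x = 0 := by
    intro x hx
    have : x / δ + 1 / 2 ≤ 0 := by
      have : x / δ ≤ -1 / 2 := by rw [div_le_iff₀ hδ]; linarith
      linarith
    simp only [hS]; rw [smoothTransition.zero_of_nonpos this, mul_zero]
  have hS1 : ∀ x, δ / 2 ≤ x → S x = π / 2 := by
    intro x hx
    have : 1 ≤ x / δ + 1 / 2 := by
      have : 1 / 2 ≤ x / δ := by rw [le_div_iff₀ hδ]; linarith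
      linarith
    simp only [hS]; rw [smoothTransition.one_of_one_le this, mul_one]
  have hchid : ∀ x, HasDerivAt (fun x => sin (S (x + L / 2)) * cos (S (x - L / 2)))
      ((cos (S (x + L / 2)) * (π / 2 * (deriv smoothTransition ((x + L / 2) / δ + 1 / 2) * (1 / δ)))) * cos (S (x - L / 2)) +
        sin (S (x + L / 2)) * (-sin (S (x - L / 2)) * (π / 2 * (deriv smoothTransition ((x - L / 2) / δ + 1 / 2) * (1 / δ))))) x := by
    intro x
    exact ((hSd (x + L/2)).comp_add_const x (L/2)).sin.mul ((hSd (x - L/2)).comp_sub_const x (L/2)).cos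
  have hPd : ∀ x, HasDerivAt (fun x => sin (S x) ^ 2)
      (2 * sin (S x) * (cos (S x) * (π / 2 * (deriv smoothTransition (x / δ + 1 / 2) * (1 / δ))))) x := by
    intro x
    have := (hSd x).sin.pow 2
    refine this.congr_deriv ?_
    push_cast; ring
  refine ⟨fun x => sin (S (x + L / 2)) * cos (S (x - L / 2)), fun x => sin (S x) ^ 2, ?_⟩
  constructor
  · exact (contDiff_sin.comp (hSs.comp (contDiff_id.add contDiff_const))).mul
      (contDiff_cos.comp (hSs.comp (contDiff_id.sub contDiff_const)))
  · exact (contDiff_sin.comp hSs).pow 2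
  · intro x
    by_cases h : x - L / 2 ≤ -δ / 2
    · simp [hS0 _ h]
    · rw [hS1 (x + L / 2) (by linarith)]
      have := Real.sin_sq_add_cos_sq (S (x - L / 2))
      simp; linarith
  · intro x hx; simp [hS0 x hx]
  · intro x hx; simp [hS1 x hx]
  · intro x; positivity
  · intro x; exact sin_sq_le_one _
  · intro x
    rw [(hchid x).deriv]
    have h1 := hSb (x + L / 2)
    have h2 := hSb (x - L / 2)
    generalize π / 2 * (deriv smoothTransition ((x + L / 2) / δ + 1 / 2) * (1 / δ)) = d1 at h1 ⊢
    generalize π / 2 * (deriv smoothTransition ((x - L / 2) / δ + 1 / 2) * (1 / δ)) = d2 at h2 ⊢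
    refine (abs_add_le _ _).trans ?_
    rw [abs_mul, abs_mul, abs_mul, abs_mul (-sin _), abs_neg]
    have c1 := abs_cos_le_one (S (x + L / 2))
    have c2 := abs_cos_le_one (S (x - L / 2))
    have c3 := abs_sin_le_one (S (x + L / 2))
    have c4 := abs_sin_le_one (S (x - L / 2))
    have e1 : |cos (S (x + L / 2))| * |d1| * |cos (S (x - L / 2))| ≤ 1 * (π * C / δ / 2) * 1 := by gcongr
    have e2 : |sin (S (x + L / 2))| * (|sin (S (x - L / 2))| * |d2|) ≤ 1 * (1 * (π * C / δ / 2)) := by gcongr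
    linarith
  · intro x
    rw [(hPd x).deriv]
    have h1 := hSb x
    generalize π / 2 * (deriv smoothTransition (x / δ + 1 / 2) * (1 / δ)) = d1 at h1 ⊢
    rw [abs_mul, abs_mul, abs_mul, abs_two]
    have c1 := abs_cos_le_one (S x)
    have c3 := abs_sin_le_one (S x)
    calc _ ≤ 2 * 1 * (1 * (π * C / δ / 2)) := by gcongr
      _ = _ := by ring
  · intro x hx
    rcases le_abs.1 hx with h | h
    · have := hS1 (x - L / 2) (by linarith)
      simp [this]
    · have := hS0 (x + L / 2) (by linarith)
      simp [this]

lemma Cut.cont {L δ C : ℝ} {χ P : ℝ → ℝ} (h : Cut L δ C χ P) : Continuous χ := h.smooth.continuous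
lemma Cut.contP {L δ C : ℝ} {χ P : ℝ → ℝ} (h : Cut L δ C χ P) : Continuous P := h.smoothP.continuous
lemma Cut.contD {L δ C : ℝ} {χ P : ℝ → ℝ} (h : Cut L δ C χ P) : Continuous (deriv χ) :=
  h.smooth.continuous_deriv (by simp)
lemma Cut.hasD {L δ C : ℝ} {χ P : ℝ → ℝ} (h : Cut L δ C χ P) (x : ℝ) : HasDerivAt χ (deriv χ x) x :=
  (h.smooth.differentiable (by simp) x).hasDerivAt
lemma Cut.hasDP {L δ C : ℝ} {χ P : ℝ → ℝ} (h : Cut L δ C χ P) (x : ℝ) : HasDerivAt P (deriv P x) x :=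
  (h.smoothP.differentiable (by simp) x).hasDerivAt

lemma Cut.compact {L δ C : ℝ} {χ P : ℝ → ℝ} (h : Cut L δ C χ P) : HasCompactSupport χ := by
  refine HasCompactSupport.intro (K := Set.Icc (-((L + δ) / 2)) ((L + δ) / 2)) isCompact_Icc ?_
  intro x hx
  apply h.supp
  by_contra hh
  rw [not_le, abs_lt] at hh
  exact hx ⟨hh.1.le, hh.2.le⟩

lemma Cut.d_zero {L δ C : ℝ} {χ P : ℝ → ℝ} (h : Cut L δ C χ P) (hL : δ < L) (x : ℝ) (hx : L ≤ |x|) :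
    deriv χ x = 0 := by
  have : χ =ᶠ[nhds x] fun _ => 0 := by
    have : ∀ᶠ y in nhds x, (L + δ) / 2 < |y| :=
      continuous_abs.continuousAt.eventually (lt_mem_nhds (by linarith))
    filter_upwards [this] with y hy using h.supp y hy.le
  rw [this.deriv_eq]; simp

lemma Cut.compactD {L δ C : ℝ} {χ P : ℝ → ℝ} (h : Cut L δ C χ P) : HasCompactSupport (deriv χ) :=
  h.compact.deriv
end
end

section
open MeasureTheory Real Filter
open scoped ContDiff ComplexConjugate
noncomputable section

lemma Cut.integral_periodic {L δ C : ℝ} {χ P : ℝ → ℝ} (h : Cut L δ C χ P) (hδ : 0 < δ) (hL : δ < L)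
    (g : ℝ → ℂ) (hg : Continuous g) (hp : Function.Periodic g L) :
    ∫ x, ((χ x ^ 2 : ℝ) : ℂ) * g x = ∫ x in (0:ℝ)..L, g x := by
  have hs : Function.support (fun x => ((χ x ^ 2 : ℝ) : ℂ) * g x) ⊆ Set.Ioc (-(2*L)) (2*L) := by
    intro x hx
    by_contra hh
    apply hx
    have : χ x = 0 := by
      apply h.supp
      by_contra h2
      rw [not_le, abs_lt] at h2
      exact hh ⟨by linarith, by linarith⟩
    simp [this]
  rw [← intervalIntegral.integral_eq_integral_of_support_subset hs]
  set F : ℝ → ℂ := fun x => (P (x - L / 2) : ℂ) * g x with hF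
  have hPc := h.contP
  have hFc : Continuous F := by fun_prop
  have h1 : (fun x => ((χ x ^ 2 : ℝ) : ℂ) * g x) = fun x => F (x + L) - F x := by
    ext x
    simp only [hF]
    rw [h.sq, hp x, show x + L - L / 2 = x + L / 2 by ring]; push_cast; ring
  have hi : ∀ a b, IntervalIntegrable F volume a b := fun a b => hFc.intervalIntegrable a b
  rw [h1, intervalIntegral.integral_sub ((Continuous.intervalIntegrable (u := fun x => F (x + L)) (by fun_prop) _ _)) (hi _ _),
    intervalIntegral.integral_comp_add_right]
  have e1 := intervalIntegral.integral_add_adjacent_intervals (hi (-(2*L)+L) (2*L)) (hi (2*L) (2*L+L))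
  have e2 := intervalIntegral.integral_add_adjacent_intervals (hi (-(2*L)) (-(2*L)+L)) (hi (-(2*L)+L) (2*L))
  have e3 : ∫ x in (-(2*L))..(-(2*L)+L), F x = 0 := by
    rw [intervalIntegral.integral_congr (g := fun _ => (0:ℂ))]
    · simp
    intro x hx
    rw [Set.uIcc_of_le (by linarith)] at hx
    simp [hF, h.P0 (x - L/2) (by linarith [hx.2])]
  have e4 : ∫ x in (2*L)..(2*L+L), F x = ∫ x in (0:ℝ)..L, g x := by
    rw [intervalIntegral.integral_congr (g := g), hp.intervalIntegral_add_eq (2*L) 0, zero_add]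
    intro x hx
    rw [Set.uIcc_of_le (by linarith)] at hx
    simp [hF, h.P1 (x - L/2) (by linarith [hx.1])]
  rw [← e1, ← e2, e3, e4]; ring

lemma integral_add3 {α : Type*} [MeasurableSpace α] {μ : Measure α} {f g k : α → ℝ} (hf : Integrable f μ)
    (hg : Integrable g μ) (hk : Integrable k μ) :
    ∫ x, (f x + g x + k x) ∂μ = ∫ x, f x ∂μ + ∫ x, g x ∂μ + ∫ x, k x ∂μ := by
  have h1 := integral_add (hf.add hg) hk
  simp only [Pi.add_apply] at h1
  rw [h1, integral_add hf hg]

/-- exponentials -/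
def ee (ν x : ℝ) : ℂ := Complex.exp (Complex.I * (ν * x : ℝ))

lemma ee_cont (ν : ℝ) : Continuous (ee ν) := by unfold ee; fun_prop
lemma ee_hasD (ν x : ℝ) : HasDerivAt (ee ν) (Complex.I * ν * ee ν x) x := by
  unfold ee
  have h1 : HasDerivAt (fun x : ℝ => Complex.I * ((ν * x : ℝ) : ℂ)) (Complex.I * ν) x := by
    apply HasDerivAt.const_mul
    have := ((hasDerivAt_id x).const_mul ν).ofReal_comp
    simpa using this
  have := h1.cexp
  refine this.congr_deriv ?_
  ring
lemma ee_conj (ν μ x : ℝ) : ee ν x * conj (ee μ x) = ee (ν - μ) x := by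
  unfold ee
  rw [← Complex.exp_conj, ← Complex.exp_add]
  congr 1
  simp
  ring
lemma ee_smooth (ν : ℝ) : ContDiff ℝ ∞ (ee ν) := by
  unfold ee
  apply ContDiff.cexp
  apply contDiff_const.mul
  exact Complex.ofRealCLM.contDiff.comp (contDiff_const.mul contDiff_id)

lemma ee_periodic (ν L : ℝ) (n : ℤ) (h : ν * L = 2 * π * n) : Function.Periodic (ee ν) L := by
  intro x
  unfold ee
  rw [mul_add, h, show Complex.I * ((ν * x + 2 * π * n : ℝ) : ℂ) = Complex.I * (ν * x : ℝ) + n * (2 * π * Complex.I) by push_cast; ring,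
    Complex.exp_add, Complex.exp_int_mul_two_pi_mul_I, mul_one]

lemma ee_integral (ν L : ℝ) (hL : 0 < L) (n : ℤ) (h : ν * L = 2 * π * n) (hn : n ≠ 0) (a : ℝ) :
    ∫ x in a..(a + L), ee ν x = 0 := by
  have hν : ν ≠ 0 := by
    rintro rfl
    have : (n:ℝ) ≠ 0 := by exact_mod_cast hn
    have := pi_pos
    simp_all
  have hd : ∀ x ∈ Set.uIcc a (a+L), HasDerivAt (fun x => ee ν x / (Complex.I * ν)) (ee ν x) x := by
    intro x _
    refine ((ee_hasD ν x).div_const _).congr_deriv ?_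
    have : (ν:ℂ) ≠ 0 := by exact_mod_cast hν
    field_simp
  rw [intervalIntegral.integral_eq_sub_of_hasDerivAt hd ((ee_cont ν).intervalIntegrable _ _),
    ee_periodic ν L n h a]
  simp

lemma bilin_integral {ι : Type*} [Fintype ι] (ν : ι → ℝ) (k : ℝ → ℂ) (μ : Measure ℝ) (c : ℂ)
    (hk : ∀ ν, Integrable (fun x => k x * ee ν x) μ)
    (h0 : ∀ i, ∫ x, k x * ee (ν i - ν i) x ∂μ = c)
    (h1 : ∀ i j, i ≠ j → ∫ x, k x * ee (ν i - ν j) x ∂μ = 0) (a b : ι → ℂ) :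
    ∫ x, k x * ((∑ i, a i * ee (ν i) x) * conj (∑ j, b j * ee (ν j) x)) ∂μ
      = c * ∑ i, a i * conj (b i) := by
  have : ∀ x, k x * ((∑ i, a i * ee (ν i) x) * conj (∑ j, b j * ee (ν j) x))
      = ∑ i, ∑ j, (a i * conj (b j)) * (k x * ee (ν i - ν j) x) := by
    intro x
    rw [map_sum, Finset.sum_mul_sum, Finset.mul_sum]
    refine Finset.sum_congr rfl fun i _ => ?_
    rw [Finset.mul_sum]
    refine Finset.sum_congr rfl fun j _ => ?_
    rw [map_mul, ← ee_conj]; ring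
  simp_rw [this]
  rw [integral_finsetSum _ (fun i _ => integrable_finsetSum _ fun j _ => (hk _).const_mul _)]
  rw [Finset.mul_sum]
  refine Finset.sum_congr rfl fun i _ => ?_
  rw [integral_finsetSum _ (fun j _ => (hk _).const_mul _)]
  rw [Finset.sum_eq_single i]
  · rw [integral_const_mul, h0]; ring
  · intro j _ hj
    rw [integral_const_mul, h1 i j hj.symm, mul_zero]
  · simp

/-- frequencies condition -/
def Freq {ι : Type*} (L : ℝ) (ν : ι → ℝ) : Prop :=
  ∀ i j, ∃ n : ℤ, (ν i - ν j) * L = 2 * π * n ∧ (i ≠ j → n ≠ 0)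

section
variable {L δ C : ℝ} {χ P : ℝ → ℝ} {ι : Type*} [Fintype ι] {ν : ι → ℝ}

lemma xcut_sq (h : Cut L δ C χ P) (hδ : 0 < δ) (hL : δ < L) (hν : Freq L ν) (a b : ι → ℂ) :
    ∫ x, ((χ x ^ 2 : ℝ) : ℂ) * ((∑ i, a i * ee (ν i) x) * conj (∑ j, b j * ee (ν j) x))
      = L * ∑ i, a i * conj (b i) := by
  have hLp : 0 < L := hδ.trans hL
  apply bilin_integral
  · intro ν
    have := h.cont
    have := ee_cont ν
    apply Continuous.integrable_of_hasCompactSupport (by fun_prop)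
    apply HasCompactSupport.mul_right
    have := h.compact.comp_left (g := fun y : ℝ => ((y ^ 2 : ℝ) : ℂ)) (by simp)
    exact this
  · intro i
    rw [h.integral_periodic hδ hL _ (ee_cont _) (ee_periodic _ _ 0 (by simp))]
    simp [ee]
  · intro i j hij
    obtain ⟨n, hn, hn0⟩ := hν i j
    rw [h.integral_periodic hδ hL _ (ee_cont _) (ee_periodic _ _ n hn)]
    simpa using ee_integral _ L hLp n hn (hn0 hij) 0

lemma xcut_cross (h : Cut L δ C χ P) (hδ : 0 < δ) (hL : δ < L) (hν : Freq L ν) (a b : ι → ℂ) :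
    ∫ x, ((χ x * deriv χ x : ℝ) : ℂ) * ((∑ i, a i * ee (ν i) x) * conj (∑ j, b j * ee (ν j) x))
      = 0 := by
  have hLp : 0 < L := hδ.trans hL
  have hc := h.cont
  have hcd := h.contD
  have hint : ∀ ν, Integrable (fun x => ((χ x * deriv χ x : ℝ) : ℂ) * ee ν x) := by
    intro ν
    have := ee_cont ν
    apply Continuous.integrable_of_hasCompactSupport (by fun_prop)
    apply HasCompactSupport.mul_right
    have := (h.compact.mul_right (f' := deriv χ)).comp_left (g := fun y : ℝ => (y : ℂ)) (by simp)
    exact this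
  have hint2 : ∀ ν, Integrable (fun x => ((χ x ^ 2 : ℝ) : ℂ) * ee ν x) := by
    intro ν
    have := ee_cont ν
    apply Continuous.integrable_of_hasCompactSupport (by fun_prop)
    apply HasCompactSupport.mul_right
    have := h.compact.comp_left (g := fun y : ℝ => ((y ^ 2 : ℝ) : ℂ)) (by simp)
    exact this
  have key : ∀ ν : ℝ, ∫ x, ((χ x * deriv χ x : ℝ) : ℂ) * ee ν x =
      - (Complex.I * ν / 2) * ∫ x, ((χ x ^ 2 : ℝ) : ℂ) * ee ν x := by
    intro ν
    have hd : ∀ x, HasDerivAt (fun x => ((χ x ^ 2 : ℝ) : ℂ) * ee ν x)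
        (2 * (((χ x * deriv χ x : ℝ) : ℂ) * ee ν x) + Complex.I * ν * (((χ x ^ 2 : ℝ) : ℂ) * ee ν x)) x := by
      intro x
      have h1 := ((h.hasD x).pow 2).ofReal_comp
      refine (h1.mul (ee_hasD ν x)).congr_deriv ?_
      push_cast; simp; ring
    have := integral_eq_zero_of_hasDerivAt_of_integrable hd
      (((hint ν).const_mul 2).add ((hint2 ν).const_mul _)) (hint2 ν)
    rw [integral_add ((hint ν).const_mul 2) ((hint2 ν).const_mul _), integral_const_mul, integral_const_mul] at this
    linear_combination this / 2
  have := bilin_integral ν (fun x => ((χ x * deriv χ x : ℝ) : ℂ)) volume 0 hint ?_ ?_ a b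
  · simpa using this
  · intro i
    rw [key]; simp
  · intro i j hij
    obtain ⟨n, hn, hn0⟩ := hν i j
    rw [key, h.integral_periodic hδ hL _ (ee_cont _) (ee_periodic _ _ n hn)]
    have := ee_integral _ L hLp n hn (hn0 hij) 0
    rw [zero_add] at this
    rw [this, mul_zero]

lemma xcut_norm (h : Cut L δ C χ P) (hδ : 0 < δ) (hL : δ < L) (hν : Freq L ν) (a : ι → ℂ) :
    ∫ x, χ x ^ 2 * ‖∑ i, a i * ee (ν i) x‖ ^ 2 = L * ∑ i, ‖a i‖ ^ 2 := by
  have := xcut_sq h hδ hL hν a a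
  simp_rw [Complex.mul_conj'] at this
  apply Complex.ofReal_injective
  rw [← integral_complex_ofReal]
  push_cast at this ⊢
  exact this

lemma xper_norm (hLp : 0 < L) (hν : Freq L ν) (a : ι → ℂ) :
    ∫ x in Set.Ioc (-L) L, ‖∑ i, a i * ee (ν i) x‖ ^ 2 = 2 * L * ∑ i, ‖a i‖ ^ 2 := by
  have := bilin_integral ν (fun x => 1) (volume.restrict (Set.Ioc (-L) L)) (2 * L) ?_ ?_ ?_ a a
  · simp_rw [Complex.mul_conj', one_mul] at this
    apply Complex.ofReal_injective
    rw [← integral_complex_ofReal]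
    push_cast at this ⊢
    exact this
  · intro ν
    have := ee_cont ν
    exact (Continuous.integrableOn_Ioc (by fun_prop))
  · intro i
    simp [ee]
    rw [max_eq_left (by linarith)]
    push_cast; ring
  · intro i j hij
    obtain ⟨n, hn, hn0⟩ := hν i j
    simp only [one_mul]
    rw [← intervalIntegral.integral_of_le (by linarith)]
    rw [← intervalIntegral.integral_add_adjacent_intervals (b := 0)
      ((ee_cont _).intervalIntegrable _ _) ((ee_cont _).intervalIntegrable _ _)]
    have e1 := ee_integral _ L hLp n hn (hn0 hij) 0
    have e2 := ee_integral _ L hLp n hn (hn0 hij) (-L)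
    simp at e1 e2
    rw [e1, e2, add_zero]

lemma xcut_energy (h : Cut L δ C χ P) (hδ : 0 < δ) (hL : δ < L) (hC : 0 < C) (hν : Freq L ν) (a : ι → ℂ) (A : ℝ) :
    ∫ x, ‖-Complex.I * (((deriv χ x : ℝ) : ℂ) * (∑ i, a i * ee (ν i) x) +
        (χ x : ℂ) * (∑ i, a i * (Complex.I * ν i * ee (ν i) x))) -
        (A : ℂ) * ((χ x : ℂ) * (∑ i, a i * ee (ν i) x))‖ ^ 2
      ≤ L * ∑ i, (ν i - A) ^ 2 * ‖a i‖ ^ 2 + 2 * L * (C / δ) ^ 2 * ∑ i, ‖a i‖ ^ 2 := by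
  have hLp : 0 < L := hδ.trans hL
  have hc := h.cont
  have hcd := h.contD
  have hec := fun ν => ee_cont ν
  set F : ℝ → ℂ := fun x => ∑ i, a i * ee (ν i) x with hF
  set H : ℝ → ℂ := fun x => ∑ i, (((ν i - A : ℝ) : ℂ) * a i) * ee (ν i) x with hH
  have hFc : Continuous F := by fun_prop
  have hHc : Continuous H := by fun_prop
  have hpt : ∀ x, ‖-Complex.I * (((deriv χ x : ℝ) : ℂ) * (∑ i, a i * ee (ν i) x) +
        (χ x : ℂ) * (∑ i, a i * (Complex.I * ν i * ee (ν i) x))) -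
        (A : ℂ) * ((χ x : ℂ) * (∑ i, a i * ee (ν i) x))‖ ^ 2 =
      χ x ^ 2 * ‖H x‖ ^ 2 + deriv χ x ^ 2 * ‖F x‖ ^ 2 + 2 * (χ x * deriv χ x * (F x * conj (H x)).im) := by
    intro x
    have : -Complex.I * (((deriv χ x : ℝ) : ℂ) * (∑ i, a i * ee (ν i) x) +
        (χ x : ℂ) * (∑ i, a i * (Complex.I * ν i * ee (ν i) x))) -
        (A : ℂ) * ((χ x : ℂ) * (∑ i, a i * ee (ν i) x)) = χ x * H x - Complex.I * (((deriv χ x : ℝ) : ℂ) * F x) := by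
      have e : H x = -Complex.I * (∑ i, a i * (Complex.I * ν i * ee (ν i) x)) - A * F x := by
        simp only [hH, hF]
        rw [Finset.mul_sum, Finset.mul_sum, ← Finset.sum_sub_distrib]
        refine Finset.sum_congr rfl fun i _ => ?_
        push_cast
        linear_combination ((a i * ν i * ee (ν i) x)) * Complex.I_mul_I
      rw [e]; simp only [hF]; ring
    rw [this]
    simp only [← Complex.normSq_eq_norm_sq, Complex.normSq_apply]
    simp
    ring
  simp_rw [hpt]
  have hs1 : HasCompactSupport (fun x => χ x ^ 2) := h.compact.comp_left (g := fun y : ℝ => y ^ 2) (by simp)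
  have hs2 : HasCompactSupport (fun x => deriv χ x ^ 2) := h.compactD.comp_left (g := fun y : ℝ => y ^ 2) (by simp)
  have hs3 : HasCompactSupport (fun x => χ x * deriv χ x) := h.compact.mul_right
  have i1 : Integrable (fun x => χ x ^ 2 * ‖H x‖ ^ 2) :=
    Continuous.integrable_of_hasCompactSupport (by fun_prop) hs1.mul_right
  have i2 : Integrable (fun x => deriv χ x ^ 2 * ‖F x‖ ^ 2) :=
    Continuous.integrable_of_hasCompactSupport (by fun_prop) hs2.mul_right
  have i3' : Continuous fun x => (F x * conj (H x)).im := by fun_prop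
  have i3 : Integrable (fun x => χ x * deriv χ x * (F x * conj (H x)).im) :=
    Continuous.integrable_of_hasCompactSupport (by fun_prop) hs3.mul_right
  rw [integral_add3 i1 i2 (i3.const_mul 2), integral_const_mul]
  have e1 : ∫ x, χ x ^ 2 * ‖H x‖ ^ 2 = L * ∑ i, (ν i - A) ^ 2 * ‖a i‖ ^ 2 := by
    rw [xcut_norm h hδ hL hν]
    congr 1
    refine Finset.sum_congr rfl fun i _ => ?_
    rw [norm_mul, mul_pow, Complex.norm_real, Real.norm_eq_abs, sq_abs]
  have e3 : ∫ x, χ x * deriv χ x * (F x * conj (H x)).im = 0 := by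
    have := xcut_cross h hδ hL hν a (fun i => ((ν i - A : ℝ) : ℂ) * a i)
    have h2 := congrArg Complex.im this
    have i4 : Integrable (fun x => ((χ x * deriv χ x : ℝ) : ℂ) * (F x * conj (H x))) := by
      apply Continuous.integrable_of_hasCompactSupport (by fun_prop)
      apply HasCompactSupport.mul_right
      exact hs3.comp_left (g := fun y : ℝ => (y : ℂ)) (by simp)
    have h3 := integral_im (𝕜 := ℂ) i4
    simp only [RCLike.im_to_complex] at h3
    rw [h2] at h3
    simp only [Complex.im_ofReal_mul, Complex.zero_im] at h3
    exact h3
  have e2 : ∫ x, deriv χ x ^ 2 * ‖F x‖ ^ 2 ≤ 2 * L * (C / δ) ^ 2 * ∑ i, ‖a i‖ ^ 2 := by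
    have hle : ∫ x, deriv χ x ^ 2 * ‖F x‖ ^ 2 = ∫ x in Set.Ioc (-L) L, deriv χ x ^ 2 * ‖F x‖ ^ 2 := by
      symm
      apply setIntegral_eq_integral_of_forall_compl_eq_zero
      intro x hx
      rw [h.d_zero hL x]
      · simp
      · by_contra hh
        rw [not_le, abs_lt] at hh
        exact hx ⟨hh.1, hh.2.le⟩
    rw [hle]
    calc _ ≤ ∫ x in Set.Ioc (-L) L, (C / δ) ^ 2 * ‖F x‖ ^ 2 := by
          apply setIntegral_mono i2.integrableOn (Continuous.integrableOn_Ioc (by fun_prop))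
          intro x
          show deriv χ x ^ 2 * ‖F x‖ ^ 2 ≤ (C / δ) ^ 2 * ‖F x‖ ^ 2
          have := h.dchi x
          rw [← sq_abs]
          gcongr
      _ = _ := by
          rw [integral_const_mul, xper_norm hLp hν]; ring
  rw [e1, e3]
  linarith
end
end
end

section
open MeasureTheory Real Filter Polynomial
open scoped ContDiff ComplexConjugate
noncomputable section

/-- polynomial times Gaussian -/
def pg (β : ℝ) (p : ℂ[X]) (t : ℝ) : ℂ := p.eval (t : ℂ) * ((rexp (-(β / 2) * t ^ 2) : ℝ) : ℂ)

lemma pg_add (β : ℝ) (p q : ℂ[X]) (t : ℝ) : pg β (p + q) t = pg β p t + pg β q t := by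
  simp [pg, add_mul]
lemma pg_smul (β : ℝ) (c : ℂ) (p : ℂ[X]) (t : ℝ) : pg β (c • p) t = c * pg β p t := by
  simp [pg, mul_assoc]
lemma pg_sub (β : ℝ) (p q : ℂ[X]) (t : ℝ) : pg β (p - q) t = pg β p t - pg β q t := by
  simp [pg, sub_mul]
lemma pg_X (β : ℝ) (p : ℂ[X]) (t : ℝ) : pg β (X * p) t = t * pg β p t := by
  simp [pg, mul_assoc]
lemma pg_C (β : ℝ) (c : ℂ) (p : ℂ[X]) (t : ℝ) : pg β (C c * p) t = c * pg β p t := by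
  simp [pg, mul_assoc]

lemma pg_smooth (β : ℝ) (p : ℂ[X]) : ContDiff ℝ ∞ (pg β p) := by
  unfold pg
  apply ContDiff.mul
  · have h1 : ContDiff ℂ ∞ (fun z : ℂ => p.eval z) := p.differentiable.contDiff
    exact (h1.restrict_scalars ℝ).comp Complex.ofRealCLM.contDiff
  · apply Complex.ofRealCLM.contDiff.comp
    exact Real.contDiff_exp.comp (contDiff_const.mul (contDiff_id.pow 2))

lemma pg_cont (β : ℝ) (p : ℂ[X]) : Continuous (pg β p) := (pg_smooth β p).continuous

lemma pg_hasD (β : ℝ) (p : ℂ[X]) (t : ℝ) :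
    HasDerivAt (pg β p) (pg β (derivative p - C (β : ℂ) * (X * p)) t) t := by
  have h1 : HasDerivAt (fun t : ℝ => p.eval (t : ℂ)) ((derivative p).eval (t : ℂ)) t :=
    (p.hasDerivAt (t : ℂ)).comp_ofReal
  have h2 : HasDerivAt (fun t : ℝ => rexp (-(β / 2) * t ^ 2)) (rexp (-(β / 2) * t ^ 2) * (-(β / 2) * (2 * t))) t := by
    apply HasDerivAt.exp
    apply HasDerivAt.const_mul
    simpa using hasDerivAt_pow 2 t
  refine (h1.mul h2.ofReal_comp).congr_deriv ?_
  simp [pg]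
  ring

lemma pg_integrable (β : ℝ) (hβ : 0 < β) (p : ℂ[X]) : Integrable (pg β p) := by
  have hmon : ∀ n : ℕ, Integrable (fun t : ℝ => (t : ℂ) ^ n * ((rexp (-(β / 2) * t ^ 2) : ℝ) : ℂ)) := by
    intro n
    have := (integrable_rpow_mul_exp_neg_mul_sq (b := β / 2) (by positivity) (s := n)
      (by have : (0:ℝ) ≤ n := by positivity
          linarith)).ofReal (𝕜 := ℂ)
    refine this.congr (Eventually.of_forall fun t => ?_)
    simp
  have : pg β p = fun t : ℝ => ∑ i ∈ p.support, p.coeff i * ((t : ℂ) ^ i * ((rexp (-(β / 2) * t ^ 2) : ℝ) : ℂ)) := by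
    ext t
    rw [pg, eval_eq_sum, Polynomial.sum, Finset.sum_mul]
    refine Finset.sum_congr rfl fun i _ => by ring
  rw [this]
  exact integrable_finsetSum _ fun i _ => (hmon i).const_mul _

/-- conjugate polynomial -/
def cj (p : ℂ[X]) : ℂ[X] := p.map (starRingEnd ℂ)

lemma pg_conj (β : ℝ) (p : ℂ[X]) (t : ℝ) : conj (pg β p t) = pg β (cj p) t := by
  simp only [pg, cj, map_mul, Complex.conj_ofReal]
  congr 1
  have := hom_eval₂ p (RingHom.id ℂ) (starRingEnd ℂ) (t : ℂ)
  rw [eval_map, eval, this]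
  simp

lemma pg_mul (β : ℝ) (p q : ℂ[X]) (t : ℝ) : pg β p t * pg β q t = pg (2 * β) (p * q) t := by
  simp only [pg, eval_mul]
  have : rexp (-(2 * β / 2) * t ^ 2) = rexp (-(β / 2) * t ^ 2) * rexp (-(β / 2) * t ^ 2) := by
    rw [← Real.exp_add]; congr 1; ring
  rw [this]; push_cast; ring

lemma pg_ibp (β : ℝ) (hβ : 0 < β) (p : ℂ[X]) : ∫ t, pg β (derivative p - C (β : ℂ) * (X * p)) t = 0 :=
  integral_eq_zero_of_hasDerivAt_of_integrable (pg_hasD β p) (pg_integrable β hβ _) (pg_integrable β hβ _)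

/-- integral as a linear map -/
def PI (β : ℝ) (hβ : 0 < β) : ℂ[X] →ₗ[ℂ] ℂ where
  toFun p := ∫ t, pg β p t
  map_add' p q := by
    simp_rw [pg_add]
    exact integral_add (pg_integrable β hβ p) (pg_integrable β hβ q)
  map_smul' c p := by
    simp_rw [pg_smul]
    rw [integral_const_mul]; rfl

lemma PI_apply (β : ℝ) (hβ : 0 < β) (p : ℂ[X]) : PI β hβ p = ∫ t, pg β p t := rfl

lemma PI_ibp (β : ℝ) (hβ : 0 < β) (p : ℂ[X]) :
    PI β hβ (derivative p) = β * PI β hβ (X * p) := by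
  have := pg_ibp β hβ p
  rw [← PI_apply β hβ, map_sub, ← smul_eq_C_mul, map_smul, smul_eq_mul] at this
  linear_combination this

/-- square norm -/
def nsP (β : ℝ) (p : ℂ[X]) : ℝ := ∫ t, ‖pg β p t‖ ^ 2

lemma pg_normsq (β : ℝ) (p : ℂ[X]) (t : ℝ) : ((‖pg β p t‖ ^ 2 : ℝ) : ℂ) = pg (2 * β) (p * cj p) t := by
  rw [← pg_mul, ← pg_conj, Complex.mul_conj']; push_cast; rfl

lemma PI_self (β : ℝ) (hβ : 0 < 2 * β) (p : ℂ[X]) : PI (2 * β) hβ (p * cj p) = nsP β p := by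
  unfold nsP
  rw [← integral_complex_ofReal, PI_apply]
  simp_rw [pg_normsq]

lemma pg_sq_integrable (β : ℝ) (hβ : 0 < β) (p : ℂ[X]) : Integrable (fun t => ‖pg β p t‖ ^ 2) := by
  have := (pg_integrable (2 * β) (by positivity) (p * cj p)).re
  refine this.congr (Eventually.of_forall fun t => ?_)
  simp only [← pg_normsq]
  exact Complex.ofReal_re _

lemma nsP_nonneg (β : ℝ) (p : ℂ[X]) : 0 ≤ nsP β p := integral_nonneg fun t => by positivity

lemma cj_derivative (p : ℂ[X]) : cj (derivative p) = derivative (cj p) := by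
  simp [cj, derivative_map]
lemma cj_X_mul (p : ℂ[X]) : cj (X * p) = X * cj p := by simp [cj]
lemma cj_C_mul (b : ℝ) (p : ℂ[X]) : cj (C (b : ℂ) * p) = C (b : ℂ) * cj p := by simp [cj]
lemma cj_sub (p q : ℂ[X]) : cj (p - q) = cj p - cj q := by simp [cj]

lemma nsP_astar (β : ℝ) (hβ : 0 < β) (q : ℂ[X]) :
    nsP β (C ((2 * β : ℝ) : ℂ) * (X * q) - derivative q) = 2 * β * nsP β q + nsP β (derivative q) := by
  have h2 : 0 < 2 * β := by positivity
  apply Complex.ofReal_injective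
  rw [Complex.ofReal_add, Complex.ofReal_mul _ (nsP β q), ← PI_self β h2, ← PI_self β h2, ← PI_self β h2]
  simp only [cj_sub, cj_C_mul, cj_derivative, cj_X_mul]
  have e := PI_ibp (2 * β) h2 (X * (q * cj q))
  set c : ℂ := ((2 * β : ℝ) : ℂ) with hc
  have e1 : (C c * (X * q) - derivative q) * (C c * (X * cj q) - derivative (cj q)) =
      (c * c) • (X * (X * (q * cj q))) - c • (derivative (X * (q * cj q))) + c • (q * cj q)
      + derivative q * derivative (cj q) := by
    simp only [smul_eq_C_mul, derivative_mul, derivative_X, C_mul]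
    ring
  rw [e1]
  simp only [map_add, map_sub, map_smul, smul_eq_mul]
  rw [e]
  ring

lemma nsP_deriv_le (β : ℝ) (hβ : 0 < β) (m : ℕ) : ∀ p : ℂ[X], p.natDegree ≤ m →
    nsP β (derivative p) ≤ 2 * m * β * nsP β p := by
  induction m with
  | zero =>
    intro p hp
    rw [derivative_of_natDegree_zero (by omega)]
    simp [nsP, pg]
  | succ m ih =>
    intro p hp
    have h2 : 0 < 2 * β := by positivity
    set q := derivative p with hq
    have h1 := ih q ((natDegree_derivative_le p).trans (by omega))
    have h3 := nsP_astar β hβ q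
    set r := C ((2 * β : ℝ) : ℂ) * (X * q) - derivative q with hr
    set k : ℝ := 2 * ((m + 1 : ℕ) : ℝ) * β with hk
    have hk0 : 0 < k := by positivity
    have h4 := nsP_nonneg β (r - C (k : ℂ) * p)
    have h5 : nsP β (r - C (k : ℂ) * p) = nsP β r - 2 * k * nsP β q + k ^ 2 * nsP β p := by
      apply Complex.ofReal_injective
      push_cast
      rw [← PI_self β h2, ← PI_self β h2, ← PI_self β h2, ← PI_self β h2]
      simp only [cj_sub, cj_C_mul]
      have ea := PI_ibp (2 * β) h2 (p * cj q)
      have eb := PI_ibp (2 * β) h2 (cj p * q)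
      have e1 : (r - C (k : ℂ) * p) * (cj r - C (k : ℂ) * cj p) =
          r * cj r - (k : ℂ) • (p * cj r) - (k : ℂ) • (cj p * r) + ((k : ℂ) ^ 2) • (p * cj p) := by
        simp only [smul_eq_C_mul, C_pow]
        ring
      have e2 : p * cj r = ((2 * β : ℝ) : ℂ) • (X * (p * cj q)) - derivative (p * cj q) + q * cj q := by
        simp only [hr, cj_sub, cj_C_mul, cj_X_mul, cj_derivative, smul_eq_C_mul, derivative_mul, ← hq]
        ring
      have e3 : cj p * r = ((2 * β : ℝ) : ℂ) • (X * (cj p * q)) - derivative (cj p * q) + q * cj q := by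
        simp only [hr, smul_eq_C_mul, derivative_mul, ← cj_derivative, ← hq]
        ring
      rw [e1, e2, e3]
      simp only [map_add, map_sub, map_smul, smul_eq_mul]
      rw [ea, eb]
      ring
    rw [h5, h3] at h4
    have h6 : 2 * β * nsP β q + nsP β (derivative q) ≤ k * nsP β q := by
      rw [hk]; push_cast
      linarith
    have h7 : 0 ≤ k * (k * nsP β p - nsP β q) := by nlinarith
    have := nonneg_of_mul_nonneg_right h7 hk0
    linarith

lemma nsP_energy (β : ℝ) (hβ : 0 < β) (p : ℂ[X]) :
    nsP β (derivative p - C (β : ℂ) * (X * p)) + β ^ 2 * nsP β (X * p) = nsP β (derivative p) + β * nsP β p := by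
  have h2 : 0 < 2 * β := by positivity
  apply Complex.ofReal_injective
  push_cast
  rw [← PI_self β h2, ← PI_self β h2, ← PI_self β h2, ← PI_self β h2]
  simp only [cj_sub, cj_C_mul, cj_derivative, cj_X_mul]
  have e := PI_ibp (2 * β) h2 (X * (p * cj p))
  have e1 : (derivative p - C (β : ℂ) * (X * p)) * (derivative (cj p) - C (β : ℂ) * (X * cj p)) =
      derivative p * derivative (cj p) - (β : ℂ) • (derivative (X * (p * cj p))) + (β : ℂ) • (p * cj p) +
      ((β : ℂ) ^ 2) • (X * (X * (p * cj p))) := by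
    simp only [smul_eq_C_mul, derivative_mul, derivative_X, C_pow]
    ring
  rw [e1, show X * p * (X * cj p) = X * (X * (p * cj p)) by ring]
  simp only [map_add, map_sub, map_smul, smul_eq_mul]
  rw [e]; push_cast
  ring

lemma nsP_pos (β : ℝ) (hβ : 0 < β) (p : ℂ[X]) (hp : p ≠ 0) : 0 < nsP β p := by
  refine lt_of_le_of_ne (nsP_nonneg β p) fun h => hp ?_
  have hc := pg_cont β p
  have h1 := (integral_eq_zero_iff_of_nonneg (fun t => by positivity) (pg_sq_integrable β hβ p)).1 h.symm
  have h2 : (fun t => ‖pg β p t‖ ^ 2) = 0 := by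
    refine (Continuous.ae_eq_iff_eq (μ := volume) (by fun_prop) (by fun_prop)).1 h1
  apply eq_zero_of_infinite_isRoot
  have hinf : (Set.range (fun t : ℝ => (t : ℂ))).Infinite := Set.infinite_range_of_injective Complex.ofReal_injective
  refine hinf.mono ?_
  rintro _ ⟨t, rfl⟩
  have h3 := congrFun h2 t
  simp only [Pi.zero_apply, pow_eq_zero_iff, ne_eq, OfNat.ofNat_ne_zero, not_false_eq_true, norm_eq_zero] at h3
  simp only [pg, mul_eq_zero, Complex.ofReal_eq_zero, (Real.exp_pos _).ne', or_false] at h3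
  exact h3

/-- The energy statement in function form. -/
lemma osc_energy (β : ℝ) (hβ : 0 < β) (m : ℕ) (p : ℂ[X]) (hp : p.natDegree ≤ m) :
    (∫ t, ‖deriv (pg β p) t‖ ^ 2) + β ^ 2 * (∫ t, t ^ 2 * ‖pg β p t‖ ^ 2) ≤ (2 * m + 1) * β * ∫ t, ‖pg β p t‖ ^ 2 := by
  have h1 := nsP_energy β hβ p
  have h2 := nsP_deriv_le β hβ m p hp
  unfold nsP at h1 h2
  simp_rw [pg_X, norm_mul, mul_pow, Complex.norm_real, Real.norm_eq_abs, sq_abs] at h1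
  simp_rw [(pg_hasD β p _).deriv]
  linarith

lemma pg_dsq_integrable (β : ℝ) (hβ : 0 < β) (p : ℂ[X]) : Integrable (fun t => ‖deriv (pg β p) t‖ ^ 2) := by
  simp_rw [(pg_hasD β p _).deriv]
  exact pg_sq_integrable β hβ _

lemma pg_tsq_integrable (β : ℝ) (hβ : 0 < β) (p : ℂ[X]) : Integrable (fun t => t ^ 2 * ‖pg β p t‖ ^ 2) := by
  have := pg_sq_integrable β hβ (X * p)
  simp_rw [pg_X, norm_mul, mul_pow, Complex.norm_real, Real.norm_eq_abs, sq_abs] at this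
  exact this
end
end

section
open MeasureTheory Real Filter Polynomial
open scoped ContDiff ComplexConjugate
noncomputable section

section
variable {L δ K : ℝ} {χ P : ℝ → ℝ}

lemma Cut.sum_sq (h : Cut L δ K χ P) (n : ℕ) (x : ℝ) :
    ∑ j ∈ Finset.range n, χ (x - j * L) ^ 2 = P (x + L / 2) - P (x + L / 2 - n * L) := by
  induction n with
  | zero => simp
  | succ n ih =>
    rw [Finset.sum_range_succ, ih, h.sq]
    rw [show x - n * L + L / 2 = x + L / 2 - n * L by ring,
      show x - n * L - L / 2 = x + L / 2 - ((n + 1 : ℕ) : ℝ) * L by push_cast; ring]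
    ring

lemma Cut.two_mul_d (h : Cut L δ K χ P) (x : ℝ) :
    2 * χ x * deriv χ x = deriv P (x + L / 2) - deriv P (x - L / 2) := by
  have h1 : HasDerivAt (fun x => χ x ^ 2) (2 * χ x * deriv χ x) x := by
    refine ((h.hasD x).pow 2).congr_deriv ?_
    push_cast; ring
  have h2 : HasDerivAt (fun x => P (x + L / 2) - P (x - L / 2)) (deriv P (x + L / 2) - deriv P (x - L / 2)) x :=
    ((h.hasDP (x + L/2)).comp_add_const x (L/2)).sub ((h.hasDP (x - L/2)).comp_sub_const x (L/2))
  have : (fun x => χ x ^ 2) = (fun x => P (x + L / 2) - P (x - L / 2)) := funext h.sq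
  rw [this] at h1
  exact h1.unique h2

lemma Cut.sum_d (h : Cut L δ K χ P) (n : ℕ) (x : ℝ) :
    ∑ j ∈ Finset.range n, 2 * χ (x - j * L) * deriv χ (x - j * L) = deriv P (x + L / 2) - deriv P (x + L / 2 - n * L) := by
  induction n with
  | zero => simp
  | succ n ih =>
    rw [Finset.sum_range_succ, ih, h.two_mul_d]
    rw [show x - n * L + L / 2 = x + L / 2 - n * L by ring,
      show x - n * L - L / 2 = x + L / 2 - ((n + 1 : ℕ) : ℝ) * L by push_cast; ring]
    ring

lemma Cut.sum_dsq (h : Cut L δ K χ P) (hδ : 0 < δ) (hL : δ < L) (n : ℕ) (x : ℝ) :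
    ∑ j ∈ Finset.range n, deriv χ (x - j * L) ^ 2 ≤ 2 * (K / δ) ^ 2 := by
  let G : ℝ → ℝ := fun y => if 0 < y then 1 else 0
  have hG0 : ∀ y, 0 ≤ G y := fun y => by simp only [G]; split_ifs <;> norm_num
  have hG1 : ∀ y, G y ≤ 1 := fun y => by simp only [G]; split_ifs <;> norm_num
  have hpt : ∀ y, deriv χ y ^ 2 ≤ (K / δ) ^ 2 * (G (y + L) - G (y - L)) := by
    intro y
    by_cases hy : L ≤ |y|
    · rw [h.d_zero hL y hy]
      have : G (y + L) - G (y - L) ≥ 0 := by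
        simp only [G]; split_ifs <;> first | (exfalso; linarith) | norm_num
      have := mul_nonneg (sq_nonneg (K / δ)) this
      simpa using this
    · rw [not_le, abs_lt] at hy
      have : G (y + L) - G (y - L) = 1 := by
        simp only [G]; rw [if_pos (by linarith), if_neg (by linarith)]; norm_num
      rw [this, mul_one, ← sq_abs]
      have := h.dchi y
      gcongr
  have hsum : ∑ j ∈ Finset.range n, (G (x - j * L + L) - G (x - j * L - L)) =
      G (x + L) + G x - G (x + L - n * L) - G (x - n * L) := by
    induction n with
    | zero => simp
    | succ n ih =>
      rw [Finset.sum_range_succ, ih]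
      push_cast
      rw [show x - n * L + L = x + L - n * L by ring, show x + L - (n + 1) * L = x - n * L by ring,
        show x - n * L - L = x - (n + 1) * L by ring]
      ring
  calc _ ≤ ∑ j ∈ Finset.range n, (K / δ) ^ 2 * (G (x - j * L + L) - G (x - j * L - L)) :=
        Finset.sum_le_sum fun j _ => hpt _
    _ = (K / δ) ^ 2 * (G (x + L) + G x - G (x + L - n * L) - G (x - n * L)) := by
        rw [← Finset.mul_sum, hsum]
    _ ≤ (K / δ) ^ 2 * 2 := by
        gcongr
        linarith [hG0 (x + L - n * L), hG0 (x - n * L), hG1 (x + L), hG1 x]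
    _ = _ := by ring

lemma Cut.dP_zero (h : Cut L δ K χ P) (x : ℝ) (hx : δ / 2 < |x|) : deriv P x = 0 := by
  rcases lt_abs.1 hx with h1 | h1
  · have : P =ᶠ[nhds x] fun _ => 1 := by
      filter_upwards [Ioi_mem_nhds h1] with y hy using h.P1 y (Set.mem_Ioi.1 hy).le
    rw [this.deriv_eq]; simp
  · have : P =ᶠ[nhds x] fun _ => 0 := by
      filter_upwards [Iio_mem_nhds (show x < -δ / 2 by linarith)] with y hy using h.P0 y (Set.mem_Iio.1 hy).le
    rw [this.deriv_eq]; simp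

/-- pointwise tile-sum bound -/
lemma tile_pt (h : Cut L δ K χ P) (hδ : 0 < δ) (hL : δ < L) (hK : 0 < K) (n : ℕ) (x y s r b : ℝ) (hs : 0 < s) (hr : 0 < r)
    (hin : |y| < s → 0 ≤ x ∧ x ≤ (n - 1) * L) (u v : ℂ) :
    ∑ j ∈ Finset.range n, (b ^ 2 * y ^ 2 * ‖(χ (x - j * L) : ℂ) * u‖ ^ 2 +
      ‖((deriv χ (x - j * L) : ℝ) : ℂ) * u + (χ (x - j * L) : ℂ) * v‖ ^ 2)
     ≤ b ^ 2 * (y ^ 2 * ‖u‖ ^ 2) + ‖v‖ ^ 2 + 2 * (K / δ) ^ 2 * ‖u‖ ^ 2 +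
        K / δ * (1 / (r * s ^ 2) * (y ^ 2 * ‖u‖ ^ 2) + r * ‖v‖ ^ 2) := by
  have hpt : ∀ j ∈ Finset.range n, (b ^ 2 * y ^ 2 * ‖(χ (x - j * L) : ℂ) * u‖ ^ 2 +
      ‖((deriv χ (x - j * L) : ℝ) : ℂ) * u + (χ (x - j * L) : ℂ) * v‖ ^ 2) =
      (b ^ 2 * y ^ 2 * ‖u‖ ^ 2 + ‖v‖ ^ 2) * χ (x - j * L) ^ 2 + ‖u‖ ^ 2 * deriv χ (x - j * L) ^ 2 +
        (u.re * v.re + u.im * v.im) * (2 * χ (x - j * L) * deriv χ (x - j * L)) := by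
    intro j _
    simp only [← Complex.normSq_eq_norm_sq, Complex.normSq_apply]
    simp
    ring
  rw [Finset.sum_congr rfl hpt, Finset.sum_add_distrib, Finset.sum_add_distrib, ← Finset.mul_sum, ← Finset.mul_sum,
    ← Finset.mul_sum, h.sum_d]
  have h1 : ∑ j ∈ Finset.range n, χ (x - j * L) ^ 2 ≤ 1 := by
    rw [h.sum_sq]; linarith [h.Ple (x + L/2), h.Pnn (x + L/2 - n * L)]
  have h2 := h.sum_dsq hδ hL n x
  have h3 : (b ^ 2 * y ^ 2 * ‖u‖ ^ 2 + ‖v‖ ^ 2) * ∑ j ∈ Finset.range n, χ (x - j * L) ^ 2 ≤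
    (b ^ 2 * y ^ 2 * ‖u‖ ^ 2 + ‖v‖ ^ 2) * 1 := by gcongr
  have h4 : ‖u‖ ^ 2 * ∑ j ∈ Finset.range n, deriv χ (x - j * L) ^ 2 ≤ ‖u‖ ^ 2 * (2 * (K / δ) ^ 2) := by gcongr
  have h5 : (u.re * v.re + u.im * v.im) * (deriv P (x + L / 2) - deriv P (x + L / 2 - n * L)) ≤
      K / δ * (1 / (r * s ^ 2) * (y ^ 2 * ‖u‖ ^ 2) + r * ‖v‖ ^ 2) := by
    by_cases hy : |y| < s
    · obtain ⟨ha, hb⟩ := hin hy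
      rw [h.dP_zero (x + L/2) (lt_abs.2 (Or.inl (by linarith))),
        h.dP_zero (x + L/2 - n*L) (lt_abs.2 (Or.inr (by linarith)))]
      simp; positivity
    · have hd : |deriv P (x + L / 2) - deriv P (x + L / 2 - n * L)| ≤ 2 * (K / δ) := by
        refine (abs_sub _ _).trans ?_
        linarith [h.dP (x + L/2), h.dP (x + L/2 - n*L)]
      have hc : |u.re * v.re + u.im * v.im| ≤ 1 / 2 * (1 / r * ‖u‖ ^ 2 + r * ‖v‖ ^ 2) := by
        simp only [← Complex.normSq_eq_norm_sq, Complex.normSq_apply]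
        have hrr : 1 / r * r = 1 := by field_simp
        have hrp : 0 < 1 / r := by positivity
        generalize 1 / r = q at hrr hrp
        have key : ∀ a b : ℝ, 2 * |a * b| ≤ q * a ^ 2 + r * b ^ 2 := by
          intro a b
          rcases abs_cases (a * b) with h | h <;> rw [h.1]
          · nlinarith [mul_nonneg hrp.le (sq_nonneg (a - r * b))]
          · nlinarith [mul_nonneg hrp.le (sq_nonneg (a + r * b))]
        have := abs_add_le (u.re * v.re) (u.im * v.im)
        nlinarith [key u.re v.re, key u.im v.im]
      have hy2 : 1 ≤ y ^ 2 / s ^ 2 := by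
        rw [not_lt] at hy
        rw [le_div_iff₀ (by positivity), one_mul, ← sq_abs y]
        gcongr
      calc _ ≤ |(u.re * v.re + u.im * v.im) * (deriv P (x + L / 2) - deriv P (x + L / 2 - n * L))| := le_abs_self _
        _ ≤ (1 / 2 * (1 / r * ‖u‖ ^ 2 + r * ‖v‖ ^ 2)) * (2 * (K / δ)) := by rw [abs_mul]; gcongr
        _ = K / δ * (1 / r * ‖u‖ ^ 2 * 1 + r * ‖v‖ ^ 2) := by ring
        _ ≤ K / δ * (1 / r * ‖u‖ ^ 2 * (y ^ 2 / s ^ 2) + r * ‖v‖ ^ 2) := by gcongr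
        _ = _ := by field_simp
  linarith

lemma tile_mass_pt (h : Cut L δ K χ P) (hL : δ < L) (n : ℕ) (x y s : ℝ) (hs : 0 < s)
    (hin : |y| < s → 0 ≤ x ∧ x ≤ (n - 1) * L) (u : ℂ) :
    ‖u‖ ^ 2 - 1 / s ^ 2 * (y ^ 2 * ‖u‖ ^ 2) ≤ ∑ j ∈ Finset.range n, ‖(χ (x - j * L) : ℂ) * u‖ ^ 2 := by
  have : ∀ j ∈ Finset.range n, ‖(χ (x - j * L) : ℂ) * u‖ ^ 2 = ‖u‖ ^ 2 * χ (x - j * L) ^ 2 := by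
    intro j _
    rw [norm_mul, mul_pow, Complex.norm_real, Real.norm_eq_abs, sq_abs, mul_comm]
  rw [Finset.sum_congr rfl this, ← Finset.mul_sum]
  by_cases hy : |y| < s
  · obtain ⟨ha, hb⟩ := hin hy
    rw [h.sum_sq, h.P1 _ (by linarith), h.P0 _ (by linarith)]
    have : 0 ≤ 1 / s ^ 2 * (y ^ 2 * ‖u‖ ^ 2) := by positivity
    linarith
  · have hy2 : 1 ≤ y ^ 2 / s ^ 2 := by
      rw [not_lt] at hy
      rw [le_div_iff₀ (by positivity), one_mul, ← sq_abs y]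
      gcongr
    have h1 : ‖u‖ ^ 2 * 1 ≤ ‖u‖ ^ 2 * (y ^ 2 / s ^ 2) := by gcongr
    have h2 : 0 ≤ ‖u‖ ^ 2 * ∑ j ∈ Finset.range n, χ (x - j * L) ^ 2 := by positivity
    have h3 : ‖u‖ ^ 2 * (y ^ 2 / s ^ 2) = 1 / s ^ 2 * (y ^ 2 * ‖u‖ ^ 2) := by field_simp
    linarith

lemma tile_mass_pt_le (h : Cut L δ K χ P) (n : ℕ) (x : ℝ) (u : ℂ) :
    ∑ j ∈ Finset.range n, ‖(χ (x - j * L) : ℂ) * u‖ ^ 2 ≤ ‖u‖ ^ 2 := by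
  have : ∀ j ∈ Finset.range n, ‖(χ (x - j * L) : ℂ) * u‖ ^ 2 = ‖u‖ ^ 2 * χ (x - j * L) ^ 2 := by
    intro j _
    rw [norm_mul, mul_pow, Complex.norm_real, Real.norm_eq_abs, sq_abs, mul_comm]
  rw [Finset.sum_congr rfl this, ← Finset.mul_sum, h.sum_sq]
  have : ‖u‖ ^ 2 * (P (x + L / 2) - P (x + L / 2 - n * L)) ≤ ‖u‖ ^ 2 * 1 := by
    gcongr; linarith [h.Ple (x + L/2), h.Pnn (x + L/2 - n * L)]
  linarith
end

lemma pg_deriv_cont (β : ℝ) (p : ℂ[X]) : Continuous (deriv (pg β p)) :=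
  (pg_smooth β p).continuous_deriv (by simp)

section
variable {L δ K : ℝ} {ψ P : ℝ → ℝ}

def tileE (ψ : ℝ → ℝ) (β : ℝ) (p : ℂ[X]) (d : ℝ) : ℝ :=
  ∫ t, (β ^ 2 * (t + d) ^ 2 * ‖(ψ t : ℂ) * pg β p (t + d)‖ ^ 2 +
    ‖((deriv ψ t : ℝ) : ℂ) * pg β p (t + d) + (ψ t : ℂ) * deriv (pg β p) (t + d)‖ ^ 2)

def tileM (ψ : ℝ → ℝ) (β : ℝ) (p : ℂ[X]) (d : ℝ) : ℝ :=
  ∫ t, ‖(ψ t : ℂ) * pg β p (t + d)‖ ^ 2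

lemma Cut.compact_shift (h : Cut L δ K ψ P) (c : ℝ) : HasCompactSupport (fun y => ψ (y + c)) :=
  h.compact.comp_homeomorph (Homeomorph.addRight c)
lemma Cut.compactD_shift (h : Cut L δ K ψ P) (c : ℝ) : HasCompactSupport (fun y => deriv ψ (y + c)) :=
  h.compactD.comp_homeomorph (Homeomorph.addRight c)

lemma tileM_eq (β : ℝ) (p : ℂ[X]) (L c : ℝ) (j : ℕ) :
    tileM ψ β p (j * L - c) = ∫ y, ‖(ψ (y + c - j * L) : ℂ) * pg β p y‖ ^ 2 := by
  unfold tileM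
  symm
  rw [← integral_add_right_eq_self _ (j * L - c)]
  congr 1; ext t
  rw [show t + (j * L - c) + c - j * L = t by ring]

lemma tileE_eq (β : ℝ) (p : ℂ[X]) (L c : ℝ) (j : ℕ) :
    tileE ψ β p (j * L - c) = ∫ y, (β ^ 2 * y ^ 2 * ‖(ψ (y + c - j * L) : ℂ) * pg β p y‖ ^ 2 +
    ‖((deriv ψ (y + c - j * L) : ℝ) : ℂ) * pg β p y + (ψ (y + c - j * L) : ℂ) * deriv (pg β p) y‖ ^ 2) := by
  unfold tileE
  symm
  rw [← integral_add_right_eq_self _ (j * L - c)]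
  congr 1; ext t
  rw [show t + (j * L - c) + c - j * L = t by ring]

lemma tileM_int (h : Cut L δ K ψ P) (β : ℝ) (p : ℂ[X]) (c : ℝ) :
    Integrable (fun y => ‖(ψ (y + c) : ℂ) * pg β p y‖ ^ 2) := by
  have := h.cont
  have := pg_cont β p
  apply Continuous.integrable_of_hasCompactSupport (by fun_prop)
  apply (h.compact_shift c).mono
  intro x hx
  simp only [Function.mem_support] at *
  contrapose! hx
  simp [hx]

lemma tileE_int (h : Cut L δ K ψ P) (β : ℝ) (p : ℂ[X]) (c : ℝ) :
    Integrable (fun y => (β ^ 2 * y ^ 2 * ‖(ψ (y + c) : ℂ) * pg β p y‖ ^ 2 +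
    ‖((deriv ψ (y + c) : ℝ) : ℂ) * pg β p y + (ψ (y + c) : ℂ) * deriv (pg β p) y‖ ^ 2)) := by
  have h1 := h.cont
  have h2 := h.contD
  have h3 := pg_cont β p
  have h4 := pg_deriv_cont β p
  apply Continuous.integrable_of_hasCompactSupport (by fun_prop)
  have hh := (h.compact_shift c).norm.add (h.compactD_shift c).norm
  apply hh.mono
  intro x hx
  simp only [Function.mem_support] at *
  contrapose! hx
  have e1 : ψ (x + c) = 0 := by
    have := hx
    simp only [Pi.add_apply, Real.norm_eq_abs] at this
    have a1 := abs_nonneg (ψ (x + c)); have a2 := abs_nonneg (deriv ψ (x + c))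
    exact abs_eq_zero.1 (by linarith)
  have e2 : deriv ψ (x + c) = 0 := by
    have := hx
    simp only [Pi.add_apply, Real.norm_eq_abs] at this
    have a1 := abs_nonneg (ψ (x + c)); have a2 := abs_nonneg (deriv ψ (x + c))
    exact abs_eq_zero.1 (by linarith)
  simp [e1, e2]

lemma tile_sum (h : Cut L δ K ψ P) (hδ : 0 < δ) (hL : δ < L) (hK : 0 < K) (β : ℝ) (hβ : 0 < β) (m : ℕ)
    (ε : ℝ) (hε : 0 < ε) :
    ∃ s > 0, ∀ (n : ℕ) (c : ℝ) (p : ℂ[X]), s ≤ c → c ≤ (n - 1) * L - s → p.natDegree ≤ m →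
      ∑ j ∈ Finset.range n, tileE ψ β p (j * L - c) ≤ ((2 * m + 1) * β + 2 * (K / δ) ^ 2 + ε) * nsP β p ∧
      (1 - ε) * nsP β p ≤ ∑ j ∈ Finset.range n, tileM ψ β p (j * L - c) ∧
      ∑ j ∈ Finset.range n, tileM ψ β p (j * L - c) ≤ nsP β p := by
  set M : ℝ := 2 * m + 1 with hM
  have hMp : 0 < M := by positivity
  obtain ⟨r, hr, hr2⟩ : ∃ r > 0, K / δ * r * (M * β) ≤ ε / 2 := by
    refine ⟨ε / 2 / (K / δ * (M * β)), by positivity, le_of_eq ?_⟩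
    field_simp
  obtain ⟨s, hs, hs1, hs2⟩ : ∃ s > 0, K / δ * (1 / (r * s ^ 2)) * (M / β) ≤ ε / 2 ∧ 1 / s ^ 2 * (M / β) ≤ ε := by
    have t : Tendsto (fun s : ℝ => 1 / s ^ 2) atTop (nhds 0) := by
      simp only [one_div]
      exact tendsto_inv_atTop_zero.comp (tendsto_pow_atTop (by norm_num))
    have t1 : Tendsto (fun s : ℝ => K / δ * (1 / r * (1 / s ^ 2)) * (M / β)) atTop (nhds 0) := by
      simpa using ((t.const_mul (1 / r)).const_mul (K / δ)).mul_const (M / β)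
    have t2 : Tendsto (fun s : ℝ => (1 / s ^ 2) * (M / β)) atTop (nhds 0) := by
      simpa using t.mul_const (M / β)
    obtain ⟨s, a, b, c⟩ := ((t1.eventually (ge_mem_nhds (half_pos hε))).and
      ((t2.eventually (ge_mem_nhds hε)).and (eventually_gt_atTop 0))).exists
    refine ⟨s, c, ?_, b⟩
    rwa [one_div_mul_one_div] at a
  refine ⟨s, hs, fun n c p hc1 hc2 hp => ?_⟩
  have hosc := osc_energy β hβ m p hp
  have hN : (∫ t, ‖pg β p t‖ ^ 2) = nsP β p := rfl
  rw [hN, ← hM] at hosc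
  have hN0 := nsP_nonneg β p
  set D := ∫ t, ‖deriv (pg β p) t‖ ^ 2 with hD
  set T := ∫ t, t ^ 2 * ‖pg β p t‖ ^ 2 with hT
  have hD0 : 0 ≤ D := integral_nonneg fun t => by positivity
  have hT0 : 0 ≤ T := integral_nonneg fun t => by positivity
  have hDle : D ≤ M * β * nsP β p := by nlinarith [mul_nonneg (sq_nonneg β) hT0]
  have hTle : T ≤ M / β * nsP β p := by
    have : β ^ 2 * T ≤ M * β * nsP β p := by linarith
    rw [div_mul_eq_mul_div, le_div_iff₀ hβ]
    nlinarith
  have i1 := pg_sq_integrable β hβ p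
  have i2 := pg_dsq_integrable β hβ p
  have i3 := pg_tsq_integrable β hβ p
  have hin : ∀ y, |y| < s → 0 ≤ y + c ∧ y + c ≤ (n - 1) * L := by
    intro y hy
    rw [abs_lt] at hy
    constructor <;> linarith
  have sh : ∀ (y : ℝ) (j : ℕ), y + c - j * L = y + (c - j * L) := fun y j => by ring
  refine ⟨?_, ?_, ?_⟩
  · simp_rw [tileE_eq]
    rw [← integral_finsetSum _ (fun j _ => by simp_rw [sh]; exact tileE_int h β p _)]
    have hle : ∫ y, ∑ j ∈ Finset.range n, (β ^ 2 * y ^ 2 * ‖(ψ (y + c - j * L) : ℂ) * pg β p y‖ ^ 2 +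
      ‖((deriv ψ (y + c - j * L) : ℝ) : ℂ) * pg β p y + (ψ (y + c - j * L) : ℂ) * deriv (pg β p) y‖ ^ 2) ≤
      ∫ y, ((β ^ 2 + K / δ * (1 / (r * s ^ 2))) * (y ^ 2 * ‖pg β p y‖ ^ 2) + (1 + K / δ * r) * ‖deriv (pg β p) y‖ ^ 2
        + 2 * (K / δ) ^ 2 * ‖pg β p y‖ ^ 2) := by
      apply integral_mono
      · apply integrable_finsetSum
        intro j _
        simp_rw [sh]; exact tileE_int h β p _
      · exact ((i3.const_mul _).add (i2.const_mul _)).add (i1.const_mul _)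
      · intro y
        have := tile_pt h hδ hL hK n (y + c) y s r β hs hr (hin y) (pg β p y) (deriv (pg β p) y)
        refine this.trans (le_of_eq ?_)
        ring
    refine hle.trans ?_
    rw [integral_add3 (i3.const_mul _) (i2.const_mul _) (i1.const_mul _), integral_const_mul, integral_const_mul,
      integral_const_mul, hN, ← hD, ← hT]
    have e1 : K / δ * (1 / (r * s ^ 2)) * T ≤ ε / 2 * nsP β p := by
      calc _ ≤ K / δ * (1 / (r * s ^ 2)) * (M / β * nsP β p) := by gcongr
        _ = K / δ * (1 / (r * s ^ 2)) * (M / β) * nsP β p := by ring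
        _ ≤ _ := by gcongr
    have e2 : K / δ * r * D ≤ ε / 2 * nsP β p := by
      calc _ ≤ K / δ * r * (M * β * nsP β p) := by gcongr
        _ = K / δ * r * (M * β) * nsP β p := by ring
        _ ≤ _ := by gcongr
    linarith
  · simp_rw [tileM_eq]
    rw [← integral_finsetSum _ (fun j _ => by simp_rw [sh]; exact tileM_int h β p _)]
    have e1 : 1 / s ^ 2 * T ≤ ε * nsP β p := by
      calc _ ≤ 1 / s ^ 2 * (M / β * nsP β p) := by gcongr
        _ = 1 / s ^ 2 * (M / β) * nsP β p := by ring
        _ ≤ _ := by gcongr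
    calc (1 - ε) * nsP β p ≤ nsP β p - 1 / s ^ 2 * T := by linarith
      _ = ∫ y, (‖pg β p y‖ ^ 2 - 1 / s ^ 2 * (y ^ 2 * ‖pg β p y‖ ^ 2)) := by
          rw [integral_sub i1 (i3.const_mul _), integral_const_mul, hN, ← hT]
      _ ≤ _ := by
          apply integral_mono (i1.sub (i3.const_mul _))
          · apply integrable_finsetSum
            intro j _
            simp_rw [sh]; exact tileM_int h β p _
          · intro y
            exact tile_mass_pt h hL n (y + c) y s hs (hin y) (pg β p y)
  · simp_rw [tileM_eq]
    rw [← integral_finsetSum _ (fun j _ => by simp_rw [sh]; exact tileM_int h β p _), ← hN]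
    apply integral_mono _ i1
    · intro y
      exact tile_mass_pt_le h n (y + c) (pg β p y)
    · apply integrable_finsetSum
      intro j _
      simp_rw [sh]; exact tileM_int h β p _
end
end
end

section
open MeasureTheory Real Filter Polynomial
open scoped ContDiff ComplexConjugate
noncomputable section

lemma IsTestOn.zero_out {Ω : Set (ℝ × ℝ)} {u : ℝ × ℝ → ℂ} (hu : IsTestOn Ω u) (q : ℝ × ℝ) (hq : q ∉ Ω) :
    u q = 0 ∧ dX u q = 0 ∧ dY u q = 0 := by
  have h1 : q ∉ tsupport u := fun h => hq (hu.2.2 h)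
  have h2 : fderiv ℝ u q = 0 := by
    by_contra h
    exact h1 (support_fderiv_subset ℝ h)
  refine ⟨image_eq_zero_of_notMem_tsupport h1, ?_, ?_⟩ <;> simp [dX, dY, h2]

lemma IsTestOn.cX {Ω : Set (ℝ × ℝ)} {u : ℝ × ℝ → ℂ} (hu : IsTestOn Ω u) : Continuous (dX u) := by
  have := hu.1.continuous_fderiv (by simp)
  unfold dX; fun_prop
lemma IsTestOn.cY {Ω : Set (ℝ × ℝ)} {u : ℝ × ℝ → ℂ} (hu : IsTestOn Ω u) : Continuous (dY u) := by
  have := hu.1.continuous_fderiv (by simp)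
  unfold dY; fun_prop
lemma IsTestOn.c {Ω : Set (ℝ × ℝ)} {u : ℝ × ℝ → ℂ} (hu : IsTestOn Ω u) : Continuous u := hu.1.continuous

/-- any continuous function vanishing outside tsupport of a test function is integrable -/
lemma IsTestOn.intg {Ω : Set (ℝ × ℝ)} {u : ℝ × ℝ → ℂ} (hu : IsTestOn Ω u) {E : Type*} [NormedAddCommGroup E]
    {F : ℝ × ℝ → E} (hF : Continuous F)
    (h0 : ∀ q, u q = 0 → dX u q = 0 → dY u q = 0 → F q = 0) : Integrable F := by
  apply hF.integrable_of_hasCompactSupport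
  apply HasCompactSupport.intro hu.2.1
  intro q hq
  have h2 : fderiv ℝ u q = 0 := by
    by_contra h
    exact hq (support_fderiv_subset ℝ h)
  apply h0 _ (image_eq_zero_of_notMem_tsupport hq) <;> simp [dX, dY, h2]

lemma IsTestOn.setInt {Ω : Set (ℝ × ℝ)} {u : ℝ × ℝ → ℂ} (hu : IsTestOn Ω u) {F : ℝ × ℝ → ℝ}
    (h0 : ∀ q, u q = 0 → dX u q = 0 → dY u q = 0 → F q = 0) : ∫ q in Ω, F q = ∫ q, F q := by
  apply setIntegral_eq_integral_of_forall_compl_eq_zero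
  intro q hq
  obtain ⟨a, b, c⟩ := hu.zero_out q hq
  exact h0 q a b c

section
variable {L δ K : ℝ} {χ P : ℝ → ℝ} {ι : Type*} [Fintype ι] {ν : ι → ℝ}

def WW (χ : ℝ → ℝ) (ν : ι → ℝ) (h : ι → ℝ → ℂ) (x₀ : ℝ) (q : ℝ × ℝ) : ℂ :=
  (χ (q.1 - x₀) : ℂ) * ∑ i, h i q.2 * ee (ν i) (q.1 - x₀)

lemma WW_smooth (hχ : ContDiff ℝ ∞ χ) {h : ι → ℝ → ℂ} (hh : ∀ i, ContDiff ℝ ∞ (h i)) (x₀ : ℝ) :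
    ContDiff ℝ ∞ (WW χ ν h x₀) := by
  unfold WW
  have e := fun i => ee_smooth (ν i)
  apply ContDiff.mul
  · exact Complex.ofRealCLM.contDiff.comp (hχ.comp (contDiff_fst.sub contDiff_const))
  · apply ContDiff.sum
    intro i _
    exact ((hh i).comp contDiff_snd).mul ((e i).comp (contDiff_fst.sub contDiff_const))

lemma fderiv_fst_eq {u : ℝ × ℝ → ℂ} (hu : ContDiff ℝ ∞ u) (x t : ℝ) {d : ℂ}
    (h : HasDerivAt (fun x => u (x, t)) d x) : dX u (x, t) = d := by
  have h1 : HasFDerivAt u (fderiv ℝ u (x, t)) (x, t) := (hu.differentiable (by simp) _).hasFDerivAt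
  have h2 : HasDerivAt (fun x : ℝ => (x, t)) ((1:ℝ), (0:ℝ)) x := (hasDerivAt_id x).prodMk (hasDerivAt_const x t)
  exact (h1.comp_hasDerivAt x h2).unique h

lemma fderiv_snd_eq {u : ℝ × ℝ → ℂ} (hu : ContDiff ℝ ∞ u) (x t : ℝ) {d : ℂ}
    (h : HasDerivAt (fun t => u (x, t)) d t) : dY u (x, t) = d := by
  have h1 : HasFDerivAt u (fderiv ℝ u (x, t)) (x, t) := (hu.differentiable (by simp) _).hasFDerivAt
  have h2 : HasDerivAt (fun t : ℝ => (x, t)) ((0:ℝ), (1:ℝ)) t := (hasDerivAt_const t x).prodMk (hasDerivAt_id t)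
  exact (h1.comp_hasDerivAt t h2).unique h

lemma WW_dX (hc : Cut L δ K χ P) {h : ι → ℝ → ℂ} (hh : ∀ i, ContDiff ℝ ∞ (h i)) (x₀ x t : ℝ) :
    dX (WW χ ν h x₀) (x, t) = ((deriv χ (x - x₀) : ℝ) : ℂ) * (∑ i, h i t * ee (ν i) (x - x₀)) +
        (χ (x - x₀) : ℂ) * (∑ i, h i t * (Complex.I * ν i * ee (ν i) (x - x₀))) := by
  apply fderiv_fst_eq (WW_smooth hc.smooth hh x₀)
  simp only [WW]
  apply HasDerivAt.mul
  · exact ((hc.hasD (x - x₀)).comp_sub_const x x₀).ofReal_comp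
  · apply HasDerivAt.fun_sum
    intro i _
    exact ((ee_hasD (ν i) (x - x₀)).comp_sub_const x x₀).const_mul _

lemma WW_dY (hc : Cut L δ K χ P) {h : ι → ℝ → ℂ} (hh : ∀ i, ContDiff ℝ ∞ (h i)) (x₀ x t : ℝ) :
    dY (WW χ ν h x₀) (x, t) = (χ (x - x₀) : ℂ) * (∑ i, deriv (h i) t * ee (ν i) (x - x₀)) := by
  apply fderiv_snd_eq (WW_smooth hc.smooth hh x₀)
  simp only [WW]
  apply HasDerivAt.const_mul
  apply HasDerivAt.fun_sum
  intro i _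
  exact (((hh i).differentiable (by simp) t).hasDerivAt).mul_const _

lemma WW_test (hc : Cut L δ K χ P) {h : ι → ℝ → ℂ} (hh : ∀ i, ContDiff ℝ ∞ (h i)) (x₀ t₀ a ε₀ ρ : ℝ)
    (hL : L + δ < ε₀ * a * rexp t₀) (hρ : ρ < ε₀ / 2) (h0 : ∀ i t, ρ ≤ |t - t₀| → h i t = 0) :
    IsTestOn (Krect x₀ t₀ a ε₀) (WW χ ν h x₀) := by
  have hsub : Function.support (WW χ ν h x₀) ⊆
      Set.Icc (x₀ - (L + δ) / 2) (x₀ + (L + δ) / 2) ×ˢ Set.Icc (t₀ - ρ) (t₀ + ρ) := by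
    intro q hq
    by_contra hn
    apply hq
    unfold WW
    rw [Set.mem_prod, not_and_or] at hn
    rcases hn with hn | hn
    · rw [hc.supp]
      · simp
      · by_contra hlt
        rw [not_le, abs_lt] at hlt
        exact hn ⟨by linarith, by linarith⟩
    · rw [Finset.sum_eq_zero]
      · simp
      intro i _
      rw [h0]
      · simp
      · by_contra hlt
        rw [not_le, abs_lt] at hlt
        exact hn ⟨by linarith, by linarith⟩
  have hcpt : IsCompact (Set.Icc (x₀ - (L + δ) / 2) (x₀ + (L + δ) / 2) ×ˢ Set.Icc (t₀ - ρ) (t₀ + ρ)) :=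
    isCompact_Icc.prod isCompact_Icc
  have hts := closure_minimal hsub hcpt.isClosed
  refine ⟨WW_smooth hc.smooth hh x₀, hcpt.of_isClosed_subset (isClosed_tsupport _) hts, hts.trans ?_⟩
  apply Set.prod_mono <;> apply Set.Icc_subset_Ioo <;> linarith

lemma WW_mass (hc : Cut L δ K χ P) (hδ : 0 < δ) (hL : δ < L) (hν : Freq L ν) {h : ι → ℝ → ℂ}
    (x₀ t₀ a ε₀ : ℝ) (ht : IsTestOn (Krect x₀ t₀ a ε₀) (WW χ ν h x₀)) :
    ∫ q in Krect x₀ t₀ a ε₀, ‖WW χ ν h x₀ q‖ ^ 2 = L * ∫ t, ∑ i, ‖h i t‖ ^ 2 := by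
  rw [ht.setInt (fun q h1 _ _ => by simp [h1])]
  have hi : Integrable (fun q => ‖WW χ ν h x₀ q‖ ^ 2) := by
    have := ht.c
    exact ht.intg (by fun_prop) (fun q h1 _ _ => by simp [h1])
  rw [Measure.volume_eq_prod, integral_prod_symm _ (by rwa [← Measure.volume_eq_prod]), ← integral_const_mul]
  congr 1; ext t
  rw [← xcut_norm hc hδ hL hν (fun i => h i t)]
  symm
  rw [← integral_sub_right_eq_self _ x₀]
  symm
  congr 1; ext x
  simp only [WW]
  rw [norm_mul, mul_pow, Complex.norm_real, Real.norm_eq_abs, sq_abs]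

lemma WW_energy (hc : Cut L δ K χ P) (hδ : 0 < δ) (hL : δ < L) (hK : 0 < K) (hν : Freq L ν) {h : ι → ℝ → ℂ}
    (hh : ∀ i, ContDiff ℝ ∞ (h i)) (hcs : ∀ i, HasCompactSupport (h i)) (x₀ t₀ a ε₀ b₀ : ℝ)
    (ht : IsTestOn (Krect x₀ t₀ a ε₀) (WW χ ν h x₀)) :
    qK0 x₀ t₀ a ε₀ b₀ (WW χ ν h x₀) ≤ L * ∑ i, ∫ t, (rexp (2 * t₀) * (ν i + (t - t₀) * rexp (-t₀) * b₀) ^ 2 * ‖h i t‖ ^ 2 +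
      ‖deriv (h i) t‖ ^ 2 + (2 * rexp (2 * t₀) * (K / δ) ^ 2 + 1 / 4) * ‖h i t‖ ^ 2) := by
  have c0 := ht.c
  have c1 := ht.cX
  have c2 := ht.cY
  have hA : Continuous (Azero t₀ b₀) := by unfold Azero; fun_prop
  have d0 := fun i => (hh i).continuous
  have d1 : ∀ i, Continuous (deriv (h i)) := fun i => (hh i).continuous_deriv (by simp)
  unfold qK0
  rw [ht.setInt (fun q h1 h2 h3 => by simp [h1, h2, h3])]
  have hi : Integrable (fun p => Real.exp (2 * t₀) * ‖-Complex.I * dX (WW χ ν h x₀) p - (Azero t₀ b₀ p : ℂ) * (WW χ ν h x₀) p‖ ^ 2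
      + ‖dY (WW χ ν h x₀) p‖ ^ 2 + (1/4) * ‖(WW χ ν h x₀) p‖ ^ 2) := 
    ht.intg (by fun_prop) (fun q h1 h2 h3 => by simp [h1, h2, h3])
  have hint : ∀ i, Integrable (fun t => (rexp (2 * t₀) * (ν i + (t - t₀) * rexp (-t₀) * b₀) ^ 2 * ‖h i t‖ ^ 2 +
      ‖deriv (h i) t‖ ^ 2 + (2 * rexp (2 * t₀) * (K / δ) ^ 2 + 1 / 4) * ‖h i t‖ ^ 2)) := by
    intro i
    have := d0 i
    have := d1 i
    apply Continuous.integrable_of_hasCompactSupport (by fun_prop)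
    apply HasCompactSupport.intro (hcs i)
    intro t ht
    have e1 : h i t = 0 := image_eq_zero_of_notMem_tsupport ht
    have e2 : deriv (h i) t = 0 := by
      by_contra h
      exact ht (support_deriv_subset h)
    simp [e1, e2]
  rw [Measure.volume_eq_prod] at hi ⊢
  rw [integral_prod_symm _ hi, ← integral_finsetSum _ (fun i _ => hint i), ← integral_const_mul]
  apply integral_mono hi.integral_prod_right
  · apply Integrable.const_mul
    exact integrable_finsetSum _ (fun i _ => hint i)
  intro t
  have hcc := hc.cont
  have hcd := hc.contD
  have hec := fun i => ee_cont (ν i)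
  have I1 : Integrable (fun x => ‖-Complex.I * (((deriv χ x : ℝ) : ℂ) * (∑ i, h i t * ee (ν i) x) +
        (χ x : ℂ) * (∑ i, h i t * (Complex.I * ν i * ee (ν i) x))) -
        ((Azero t₀ b₀ (0, t) : ℝ) : ℂ) * ((χ x : ℂ) * (∑ i, h i t * ee (ν i) x))‖ ^ 2) := by
    apply Continuous.integrable_of_hasCompactSupport (by fun_prop)
    apply HasCompactSupport.intro hc.compact
    intro x hx
    have e1 : χ x = 0 := image_eq_zero_of_notMem_tsupport hx
    have e2 : deriv χ x = 0 := by
      by_contra h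
      exact hx (support_deriv_subset h)
    simp [e1, e2]
  have I2 : ∀ a : ι → ℂ, Integrable (fun x => χ x ^ 2 * ‖∑ i, a i * ee (ν i) x‖ ^ 2) := by
    intro a
    apply Continuous.integrable_of_hasCompactSupport (by fun_prop)
    apply HasCompactSupport.intro hc.compact
    intro x hx
    have e1 : χ x = 0 := image_eq_zero_of_notMem_tsupport hx
    simp [e1]
  obtain ⟨F, hF⟩ : ∃ F : ℝ → ℝ, F = (fun y => Real.exp (2 * t₀) * ‖-Complex.I * (((deriv χ y : ℝ) : ℂ) * (∑ i, h i t * ee (ν i) y) +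
        (χ y : ℂ) * (∑ i, h i t * (Complex.I * ν i * ee (ν i) y))) -
        ((Azero t₀ b₀ (0, t) : ℝ) : ℂ) * ((χ y : ℂ) * (∑ i, h i t * ee (ν i) y))‖ ^ 2 +
        χ y ^ 2 * ‖∑ i, deriv (h i) t * ee (ν i) y‖ ^ 2 + (1/4) * (χ y ^ 2 * ‖∑ i, h i t * ee (ν i) y‖ ^ 2)) := ⟨_, rfl⟩
  have key : ∀ x, Real.exp (2 * t₀) * ‖-Complex.I * dX (WW χ ν h x₀) (x, t) - (Azero t₀ b₀ (x, t) : ℂ) * (WW χ ν h x₀) (x, t)‖ ^ 2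
      + ‖dY (WW χ ν h x₀) (x, t)‖ ^ 2 + (1/4) * ‖(WW χ ν h x₀) (x, t)‖ ^ 2 =
      F (x - x₀) := by
    intro x
    rw [hF, WW_dX hc hh, WW_dY hc hh]
    simp only [WW, norm_mul, mul_pow, Complex.norm_real, Real.norm_eq_abs, sq_abs]
    rfl
  have key2 := (integral_congr_ae (μ := volume) (Eventually.of_forall key)).trans (integral_sub_right_eq_self F x₀)
  refine (le_of_eq key2).trans ?_
  rw [hF, integral_add3 (I1.const_mul _) (I2 _) ((I2 _).const_mul _), integral_const_mul,
    integral_const_mul, xcut_norm hc hδ hL hν, xcut_norm hc hδ hL hν]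
  have hE := xcut_energy hc hδ hL hK hν (fun i => h i t) (Azero t₀ b₀ (0, t))
  have hE2 := mul_le_mul_of_nonneg_left hE (Real.exp_pos (2 * t₀)).le
  refine (add_le_add_left (add_le_add_left hE2 _) _).trans (le_of_eq ?_)
  have e3 : ∀ i, ν i - Azero t₀ b₀ (0, t) = ν i + (t - t₀) * rexp (-t₀) * b₀ := by
    intro i; simp only [Azero]; ring
  simp only [e3]
  simp only [Finset.mul_sum, ← Finset.sum_add_distrib]
  apply Finset.sum_congr rfl
  intro i _
  ring

variable {L' δ' : ℝ} {ψ Q : ℝ → ℝ}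

/-- the tile function -/
def tileW (χ ψ : ℝ → ℝ) (β x₀ t₀ : ℝ) (ν d : ι → ℝ) (p : ι → ℂ[X]) : ℝ × ℝ → ℂ :=
  WW χ ν (fun i t => (ψ (t - t₀) : ℂ) * pg β (p i) (t - t₀ + d i)) x₀

lemma tileW_main (hc : Cut L δ K χ P) (hδ : 0 < δ) (hL : δ < L) (hK : 0 < K) (hν : Freq L ν)
    (hc' : Cut L' δ' K ψ Q) (x₀ t₀ a ε₀ b₀ β σ : ℝ) (hσ : σ ^ 2 = 1) (hb : b₀ = σ * β)
    (hLe : L + δ < ε₀ * a * rexp t₀) (hLe' : L' + δ' < ε₀) (d : ι → ℝ) (hd : ∀ i, ν i = σ * (β * rexp (-t₀) * d i))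
    (p : ι → ℂ[X]) :
    IsTestOn (Krect x₀ t₀ a ε₀) (tileW χ ψ β x₀ t₀ ν d p) ∧
    ∫ q in Krect x₀ t₀ a ε₀, ‖tileW χ ψ β x₀ t₀ ν d p q‖ ^ 2 = L * ∑ i, tileM ψ β (p i) (d i) ∧
    qK0 x₀ t₀ a ε₀ b₀ (tileW χ ψ β x₀ t₀ ν d p) ≤ L * ∑ i, (tileE ψ β (p i) (d i) +
      (2 * rexp (2 * t₀) * (K / δ) ^ 2 + 1 / 4) * tileM ψ β (p i) (d i)) := by
  set h : ι → ℝ → ℂ := fun i t => (ψ (t - t₀) : ℂ) * pg β (p i) (t - t₀ + d i) with hh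
  have hs : ∀ i, ContDiff ℝ ∞ (h i) := by
    intro i
    apply ContDiff.mul
    · exact Complex.ofRealCLM.contDiff.comp (hc'.smooth.comp (contDiff_id.sub contDiff_const))
    · exact (pg_smooth β (p i)).comp ((contDiff_id.sub contDiff_const).add contDiff_const)
  have h0 : ∀ i t, (L' + δ') / 2 ≤ |t - t₀| → h i t = 0 := by
    intro i t ht
    simp only [hh, hc'.supp _ ht]; simp
  have hcs : ∀ i, HasCompactSupport (h i) := by
    intro i
    apply HasCompactSupport.intro (isCompact_Icc (a := t₀ - (L' + δ') / 2) (b := t₀ + (L' + δ') / 2))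
    intro t ht
    apply h0
    by_contra hlt
    rw [not_le, abs_lt] at hlt
    exact ht ⟨by linarith, by linarith⟩
  have hdd : ∀ i t, deriv (h i) t = ((deriv ψ (t - t₀) : ℝ) : ℂ) * pg β (p i) (t - t₀ + d i) +
      (ψ (t - t₀) : ℂ) * deriv (pg β (p i)) (t - t₀ + d i) := by
    intro i t
    apply HasDerivAt.deriv
    apply HasDerivAt.mul
    · exact ((hc'.hasD (t - t₀)).comp_sub_const t t₀).ofReal_comp
    · have h1 : HasDerivAt (pg β (p i)) (deriv (pg β (p i)) (t - t₀ + d i)) (t - t₀ + d i) :=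
        ((pg_smooth β (p i)).differentiable (by simp) _).hasDerivAt
      exact (h1.comp_add_const (t - t₀) (d i)).comp_sub_const t t₀
  have ht : IsTestOn (Krect x₀ t₀ a ε₀) (tileW χ ψ β x₀ t₀ ν d p) :=
    WW_test hc hs x₀ t₀ a ε₀ ((L' + δ') / 2) hLe (by linarith) h0
  have shM : ∀ i, Integrable (fun t => ‖(ψ t : ℂ) * pg β (p i) (t + d i)‖ ^ 2) := by
    intro i
    have := hc'.cont
    have := pg_cont β (p i)
    apply Continuous.integrable_of_hasCompactSupport (by fun_prop)
    apply HasCompactSupport.intro hc'.compact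
    intro x hx
    have e1 : ψ x = 0 := image_eq_zero_of_notMem_tsupport hx
    simp [e1]
  have shE : ∀ i, Integrable (fun t => (β ^ 2 * (t + d i) ^ 2 * ‖(ψ t : ℂ) * pg β (p i) (t + d i)‖ ^ 2 +
    ‖((deriv ψ t : ℝ) : ℂ) * pg β (p i) (t + d i) + (ψ t : ℂ) * deriv (pg β (p i)) (t + d i)‖ ^ 2)) := by
    intro i
    have := hc'.cont
    have := hc'.contD
    have := pg_cont β (p i)
    have := pg_deriv_cont β (p i)
    apply Continuous.integrable_of_hasCompactSupport (by fun_prop)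
    apply HasCompactSupport.intro hc'.compact
    intro x hx
    have e1 : ψ x = 0 := image_eq_zero_of_notMem_tsupport hx
    have e2 : deriv ψ x = 0 := by
      by_contra h
      exact hx (support_deriv_subset h)
    simp [e1, e2]
  refine ⟨ht, ?_, ?_⟩
  · have := WW_mass hc hδ hL hν x₀ t₀ a ε₀ ht
    unfold tileW
    rw [this]
    congr 1
    rw [← integral_sub_right_eq_self _ (-t₀), integral_finsetSum]
    · apply Finset.sum_congr rfl
      intro i _
      unfold tileM
      congr 1; ext t
      simp only [hh, sub_neg_eq_add, add_sub_cancel_right]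
    · intro i _
      simp only [hh, sub_neg_eq_add, add_sub_cancel_right]
      exact shM i
  · refine (WW_energy hc hδ hL hK hν hs hcs x₀ t₀ a ε₀ b₀ ht).trans (le_of_eq ?_)
    congr 1
    apply Finset.sum_congr rfl
    intro i _
    unfold tileM tileE
    rw [← integral_const_mul, ← integral_add (shE i) ((shM i).const_mul _), ← integral_sub_right_eq_self _ (-t₀)]
    congr 1; ext t
    rw [hdd]
    simp only [hh, sub_neg_eq_add, add_sub_cancel_right]
    congr 2
    congr 1
    rw [hd, hb, show rexp (2 * t₀) = rexp t₀ ^ 2 by rw [← Real.exp_nat_mul]; norm_num, Real.exp_neg]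
    have := Real.exp_pos t₀
    field_simp
    linear_combination (d i + t) ^ 2 * β ^ 2 * hσ
end
end
end

section
open MeasureTheory Real Filter
open scoped ContDiff ComplexConjugate
noncomputable section

lemma UHP_open : IsOpen UHP := isOpen_lt continuous_const continuous_snd

lemma fieldB_contDiffOn {A₁ A₂ : ℝ × ℝ → ℝ} (h1 : ContDiffOn ℝ 2 A₁ UHP) (h2 : ContDiffOn ℝ 2 A₂ UHP) :
    ContDiffOn ℝ 1 (fieldB A₁ A₂) UHP := by
  have e1 := h1.fderiv_of_isOpen UHP_open (m := 1) (by norm_num)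
  have e2 := h2.fderiv_of_isOpen UHP_open (m := 1) (by norm_num)
  unfold fieldB dXr dYr
  apply ContDiffOn.mul
  · exact (contDiff_snd.pow 2).contDiffOn
  · exact (e2.clm_apply contDiffOn_const).sub (e1.clm_apply contDiffOn_const)

lemma field_comp_cont {f : ℝ × ℝ → ℝ} (hf : ContDiffOn ℝ 1 f UHP) : Continuous (fun q : ℝ × ℝ => f (q.1, rexp q.2)) := by
  apply hf.continuousOn.comp_continuous (by fun_prop)
  intro q; exact Real.exp_pos _

lemma exp_quarter : rexp (1 / 4) ≤ 2 := by
  have := Real.abs_exp_sub_one_le (x := 1/4) (by norm_num [abs_le])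
  rw [abs_le] at this
  have h := this.2
  rw [abs_of_pos (by norm_num)] at h
  linarith

lemma field_var {f : ℝ × ℝ → ℝ} (hf : ContDiffOn ℝ 1 f UHP) (C₀ : ℝ) (hC₀ : 0 < C₀)
    (hH : ∀ p ∈ UHP, p.2 * Real.sqrt ((dXr f p) ^ 2 + (dYr f p) ^ 2) ≤ C₀ * (|f p| + 1))
    (a₀ a ε₀ x₀ t₀ : ℝ) (ha : 0 < a) (ha₀ : a ≤ a₀) (hε : 0 < ε₀) (hε2 : ε₀ ≤ 1 / 2)
    (hk : C₀ * (a₀ + 1) * ε₀ ≤ 1) (hβ : 1 < |f (x₀, rexp t₀)|) (x r : ℝ)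
    (hx : |x - x₀| ≤ ε₀ * a * rexp t₀ / 2) (hr : |r - t₀| ≤ ε₀ / 2) :
    |f (x, rexp r) - f (x₀, rexp t₀)| ≤ 4 * (C₀ * (a₀ + 1)) * ε₀ * |f (x₀, rexp t₀)| := by
  set k := C₀ * (a₀ + 1) * ε₀ with hkd
  have hkp : 0 < k := by have : 0 < a₀ := ha.trans_le ha₀; positivity
  set b₀ := f (x₀, rexp t₀) with hb₀
  set Y : ℝ → ℝ := fun s => rexp (t₀ + s * (r - t₀)) with hY
  have hYd : ∀ s, HasDerivAt Y (Y s * (r - t₀)) s := by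
    intro s
    have h1 : HasDerivAt (fun s => t₀ + s * (r - t₀)) (r - t₀) s := by
      simpa using ((hasDerivAt_id s).mul_const (r - t₀)).const_add t₀
    exact h1.exp
  set X : ℝ → ℝ := fun s => x₀ + s * (x - x₀) with hX
  have hXd : ∀ s, HasDerivAt X (x - x₀) s := by
    intro s
    have := ((hasDerivAt_id s).mul_const (x - x₀)).const_add x₀
    simp only [id, one_mul] at this
    exact this
  have hYp : ∀ s, 0 < Y s := fun s => Real.exp_pos _
  have hfd : ∀ s, HasDerivAt (fun s => f (X s, Y s) - b₀) (fderiv ℝ f (X s, Y s) (x - x₀, Y s * (r - t₀))) s := by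
    intro s
    have hd : DifferentiableAt ℝ f (X s, Y s) :=
      (hf.differentiableOn (by simp)).differentiableAt (UHP_open.mem_nhds (hYp s))
    exact (hd.hasFDerivAt.comp_hasDerivAt s ((hXd s).prodMk (hYd s))).sub_const b₀
  have hsplit : ∀ s, fderiv ℝ f (X s, Y s) (x - x₀, Y s * (r - t₀)) =
      (x - x₀) * dXr f (X s, Y s) + (Y s * (r - t₀)) * dYr f (X s, Y s) := by
    intro s
    have : ((x - x₀, Y s * (r - t₀)) : ℝ × ℝ) = (x - x₀) • ((1:ℝ), (0:ℝ)) + (Y s * (r - t₀)) • ((0:ℝ), (1:ℝ)) := by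
      ext <;> simp
    rw [this, map_add, map_smul, map_smul]
    rfl
  have hbd : ∀ s ∈ Set.Ico (0:ℝ) 1, ‖fderiv ℝ f (X s, Y s) (x - x₀, Y s * (r - t₀))‖ ≤
      k * ‖f (X s, Y s) - b₀‖ + k * (|b₀| + 1) := by
    intro s hs
    rw [hsplit, Real.norm_eq_abs, Real.norm_eq_abs]
    have h1 := hH (X s, Y s) (hYp s)
    simp only at h1
    set p := (X s, Y s) with hp
    set S := Real.sqrt ((dXr f p) ^ 2 + (dYr f p) ^ 2) with hS
    have hS0 : 0 ≤ S := Real.sqrt_nonneg _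
    have d1 : |dXr f p| ≤ S := Real.abs_le_sqrt (by nlinarith [sq_nonneg (dYr f p)])
    have d2 : |dYr f p| ≤ S := Real.abs_le_sqrt (by nlinarith [sq_nonneg (dXr f p)])
    have hell : rexp t₀ ≤ 2 * Y s := by
      have hle : -(1/4 : ℝ) ≤ s * (r - t₀) := by
        have : |s * (r - t₀)| ≤ 1/4 := by
          rw [abs_mul, abs_of_nonneg hs.1]
          calc s * |r - t₀| ≤ 1 * (ε₀ / 2) := by gcongr; exact hs.2.le
            _ ≤ _ := by linarith
        exact (abs_le.1 this).1
      calc rexp t₀ ≤ rexp (1/4 + (t₀ + s * (r - t₀))) := Real.exp_le_exp.2 (by linarith)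
        _ = rexp (1/4) * Y s := by rw [Real.exp_add]
        _ ≤ 2 * Y s := by gcongr; exact exp_quarter
    have hxx : |x - x₀| ≤ ε₀ * a₀ * Y s := by
      calc _ ≤ _ := hx
        _ ≤ ε₀ * a * (2 * Y s) / 2 := by gcongr
        _ = ε₀ * a * Y s := by ring
        _ ≤ _ := by have := hYp s; gcongr
    have hYs := hYp s
    calc _ ≤ |x - x₀| * |dXr f p| + (Y s * |r - t₀|) * |dYr f p| := by
          refine (abs_add_le _ _).trans (le_of_eq ?_)
          rw [abs_mul, abs_mul, abs_mul, abs_of_pos hYs]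
      _ ≤ (ε₀ * a₀ * Y s) * S + (Y s * (ε₀ / 2)) * S := by
          have : 0 < a₀ := ha.trans_le ha₀
          gcongr
      _ = (ε₀ * (a₀ + 1 / 2)) * (Y s * S) := by ring
      _ ≤ (ε₀ * (a₀ + 1)) * (C₀ * (|f p| + 1)) := by
          have : 0 < a₀ := ha.trans_le ha₀
          gcongr
          norm_num
      _ = k * (|f p| + 1) := by rw [hkd]; ring
      _ ≤ k * (|f p - b₀| + |b₀| + 1) := by
          gcongr
          have := abs_add_le (f p - b₀) b₀
          simpa using this
      _ = _ := by ring
  have hg := norm_le_gronwallBound_of_norm_deriv_right_le (a := 0) (b := 1) (δ := 0)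
    (fun s _ => (hfd s).continuousAt.continuousWithinAt) (fun s _ => (hfd s).hasDerivWithinAt)
    (by simp [hX, hY, hb₀]) hbd 1 (by simp)
  rw [gronwallBound_of_K_ne_0 hkp.ne'] at hg
  simp only [hX, hY, one_mul, add_sub_cancel, Real.norm_eq_abs, zero_mul, zero_add, sub_zero, mul_one] at hg
  refine hg.trans ?_
  rw [mul_div_cancel_left₀ _ hkp.ne']
  have he := Real.abs_exp_sub_one_le (x := k) (by rwa [abs_of_pos hkp])
  rw [abs_of_pos hkp] at he
  have he2 := (abs_le.1 he).2
  calc _ ≤ (|b₀| + 1) * (2 * k) := by gcongr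
    _ ≤ (2 * |b₀|) * (2 * k) := by gcongr; linarith
    _ = _ := by rw [hkd]; ring

section
variable {A₁ A₂ : ℝ × ℝ → ℝ}

lemma Atil_eq (hf : ContDiffOn ℝ 1 (fieldB A₁ A₂) UHP) (t₀ : ℝ) (q : ℝ × ℝ) :
    Atil A₁ A₂ t₀ q = -∫ r in t₀..q.2, fieldB A₁ A₂ (q.1, rexp r) * rexp (-r) := by
  unfold Atil
  congr 1
  rw [← intervalIntegral.integral_comp_mul_deriv' (f := rexp) (f' := rexp)]
  · apply intervalIntegral.integral_congr
    intro r _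
    simp only [Function.comp]
    rw [Real.exp_neg]
    have := Real.exp_pos r
    field_simp
  · intro x _; exact Real.hasDerivAt_exp x
  · exact Real.continuous_exp.continuousOn
  · rintro _ ⟨r, _, rfl⟩
    apply ContinuousWithinAt.div
    · have : ContinuousAt (fieldB A₁ A₂) (q.1, rexp r) :=
        hf.continuousOn.continuousAt (UHP_open.mem_nhds (Real.exp_pos r))
      have h2 : ContinuousAt (fun s : ℝ => (q.1, s)) (rexp r) := by fun_prop
      exact (ContinuousAt.comp' this h2).continuousWithinAt
    · fun_prop
    · have := Real.exp_pos r; positivity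

lemma Atil_cont (hf : ContDiffOn ℝ 1 (fieldB A₁ A₂) UHP) (t₀ : ℝ) : Continuous (Atil A₁ A₂ t₀) := by
  rw [funext (Atil_eq hf t₀)]
  apply Continuous.neg
  apply intervalIntegral.continuous_parametric_intervalIntegral_of_continuous
    (f := fun (q : ℝ × ℝ) r => fieldB A₁ A₂ (q.1, rexp r) * rexp (-r))
  · apply Continuous.mul
    · exact (field_comp_cont hf).comp (f := fun z : (ℝ × ℝ) × ℝ => (z.1.1, z.2)) (by fun_prop)
    · fun_prop
  · fun_prop

lemma Atil_diff (hf : ContDiffOn ℝ 1 (fieldB A₁ A₂) UHP) (C₀ : ℝ) (hC₀ : 0 < C₀) (hH : H2 C₀ A₁ A₂)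
    (a₀ a ε₀ x₀ t₀ : ℝ) (ha : 0 < a) (ha₀ : a ≤ a₀) (hε : 0 < ε₀) (hε2 : ε₀ ≤ 1 / 2)
    (hk : C₀ * (a₀ + 1) * ε₀ ≤ 1) (hβ : 1 < intenB A₁ A₂ (x₀, rexp t₀)) (q : ℝ × ℝ) (hq : q ∈ Krect x₀ t₀ a ε₀) :
    |Atil A₁ A₂ t₀ q - Azero t₀ (fieldB A₁ A₂ (x₀, rexp t₀)) q| ≤
      (8 * (C₀ * (a₀ + 1)) + 1) * ε₀ ^ 2 * intenB A₁ A₂ (x₀, rexp t₀) * rexp (-t₀) := by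
  unfold intenB at *
  set b₀ := fieldB A₁ A₂ (x₀, rexp t₀) with hb₀
  obtain ⟨x, t⟩ := q
  obtain ⟨hx, ht⟩ := hq
  simp only [Set.mem_Ioo] at hx ht
  rw [Atil_eq hf]
  have hcont : Continuous (fun r => fieldB A₁ A₂ (x, rexp r) * rexp (-r)) := by
    apply Continuous.mul
    · exact (field_comp_cont hf).comp (f := fun r => (x, r)) (by fun_prop)
    · fun_prop
  have e1 : Azero t₀ b₀ (x, t) = -∫ r in t₀..t, rexp (-t₀) * b₀ := by
    rw [intervalIntegral.integral_const]; simp [Azero]; ring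
  rw [e1, neg_sub_neg, ← intervalIntegral.integral_sub (by simp) (hcont.intervalIntegrable _ _)]
  have hC : 0 < C₀ * (a₀ + 1) := by have : 0 < a₀ := ha.trans_le ha₀; positivity
  have hb0 : 0 < |b₀| := by linarith
  have hbd : ∀ r ∈ Set.uIoc t₀ t, ‖rexp (-t₀) * b₀ - fieldB A₁ A₂ (x, rexp r) * rexp (-r)‖ ≤
      (8 * (C₀ * (a₀ + 1)) + 1) * ε₀ * |b₀| * rexp (-t₀) := by
    intro r hr
    have hr' : |r - t₀| ≤ ε₀ / 2 := by
      rcases Set.mem_uIoc.1 hr with h | h <;> rw [abs_le] <;> constructor <;> linarith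
    have hv := field_var hf C₀ hC₀ hH a₀ a ε₀ x₀ t₀ ha ha₀ hε hε2 hk hβ x r
      (by rw [abs_le]; constructor <;> linarith) hr'
    rw [← hb₀] at hv
    have hz : |rexp (-(r - t₀)) - 1| ≤ ε₀ := by
      refine (Real.abs_exp_sub_one_le (by rw [abs_neg]; linarith)).trans ?_
      rw [abs_neg]; linarith
    have hz2 : rexp (-(r - t₀)) ≤ 2 := by have := (abs_le.1 hz).2; linarith
    have e2 : rexp (-r) = rexp (-t₀) * rexp (-(r - t₀)) := by rw [← Real.exp_add]; congr 1; ring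
    rw [Real.norm_eq_abs, e2]
    generalize rexp (-(r - t₀)) = z at hz hz2
    generalize fieldB A₁ A₂ (x, rexp r) = g at hv
    by_cases hz0 : 0 ≤ z
    · rw [show rexp (-t₀) * b₀ - g * (rexp (-t₀) * z) = rexp (-t₀) * (-((g - b₀) * z) - b₀ * (z - 1)) by ring,
        abs_mul, abs_of_pos (Real.exp_pos _), mul_comm]
      gcongr
      calc _ ≤ |-((g - b₀) * z)| + |b₀ * (z - 1)| := abs_sub _ _
        _ = |g - b₀| * z + |b₀| * |z - 1| := by rw [abs_neg, abs_mul, abs_mul, abs_of_nonneg hz0]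
        _ ≤ (4 * (C₀ * (a₀ + 1)) * ε₀ * |b₀|) * 2 + |b₀| * ε₀ := by gcongr
        _ = _ := by ring
    · exfalso; have := (abs_le.1 hz).1; linarith
  have := intervalIntegral.norm_integral_le_of_norm_le_const hbd
  rw [Real.norm_eq_abs] at this
  refine this.trans ?_
  calc _ ≤ (8 * (C₀ * (a₀ + 1)) + 1) * ε₀ * |b₀| * rexp (-t₀) * ε₀ := by
        gcongr
        rw [abs_le]; constructor <;> linarith
    _ = _ := by ring

lemma norm_pert (z w : ℂ) (A B η : ℝ) (hη : 0 < η) :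
    ‖z - (A : ℂ) * w‖ ^ 2 ≤ (1 + η ^ 2) * ‖z - (B : ℂ) * w‖ ^ 2 + (1 + 1 / η ^ 2) * ((A - B) ^ 2 * ‖w‖ ^ 2) := by
  have h1 : z - (A : ℂ) * w = (z - (B : ℂ) * w) - ((A - B : ℝ) : ℂ) * w := by push_cast; ring
  have h2 : ‖z - (A : ℂ) * w‖ ≤ ‖z - (B : ℂ) * w‖ + |A - B| * ‖w‖ := by
    rw [h1]; refine (norm_sub_le _ _).trans (le_of_eq ?_)
    rw [norm_mul, Complex.norm_real, Real.norm_eq_abs]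
  rw [← sq_abs (A - B)]
  have h0 := norm_nonneg (z - (A : ℂ) * w)
  generalize ‖z - (A : ℂ) * w‖ = X at *
  generalize ‖z - (B : ℂ) * w‖ = Y at *
  rw [← mul_pow]
  generalize |A - B| * ‖w‖ = Z at *
  have h3 : X ^ 2 ≤ (Y + Z) ^ 2 := by gcongr
  have h4 : 0 ≤ (η * Y - 1 / η * Z) ^ 2 := sq_nonneg _
  have h5 : η * (1 / η) = 1 := by field_simp
  have h6 : 1 / η ^ 2 = (1 / η) ^ 2 := by field_simp
  rw [h6]
  generalize 1 / η = θ at *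
  nlinarith

lemma q_compare (hf : ContDiffOn ℝ 1 (fieldB A₁ A₂) UHP) (C₀ : ℝ) (hC₀ : 0 < C₀) (hH : H2 C₀ A₁ A₂)
    (a₀ a ε₀ x₀ t₀ : ℝ) (ha : 0 < a) (ha₀ : a ≤ a₀) (hε : 0 < ε₀) (hε2 : ε₀ ≤ 1 / 2)
    (hk : C₀ * (a₀ + 1) * ε₀ ≤ 1) (hβ : 1 < intenB A₁ A₂ (x₀, rexp t₀)) (C₁ : ℝ) (hC₁ : 2 ≤ C₁)
    (hC₁' : 2 * (8 * (C₀ * (a₀ + 1)) + 1) ^ 2 ≤ C₁) (η : ℝ) (hη : 0 < η) (hη2 : η < 1 / 2)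
    (w : ℝ × ℝ → ℂ) (hw : IsTestOn (Krect x₀ t₀ a ε₀) w) :
    qhatK A₁ A₂ x₀ t₀ a ε₀ w ≤ (1 + ε₀ * C₁) * ((1 + η ^ 2) * qK0 x₀ t₀ a ε₀ (fieldB A₁ A₂ (x₀, rexp t₀)) w +
      (ε₀ ^ 4 / η ^ 2) * C₁ * intenB A₁ A₂ (x₀, rexp t₀) ^ 2 * ∫ q in Krect x₀ t₀ a ε₀, ‖w q‖ ^ 2) := by
  have hdiff := Atil_diff hf C₀ hC₀ hH a₀ a ε₀ x₀ t₀ ha ha₀ hε hε2 hk hβ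
  have cA := Atil_cont hf t₀
  set b₀ := fieldB A₁ A₂ (x₀, rexp t₀) with hb₀
  set β := intenB A₁ A₂ (x₀, rexp t₀) with hβd
  set C2 := 8 * (C₀ * (a₀ + 1)) + 1 with hC2
  have c0 := hw.c
  have c1 := hw.cX
  have c2 := hw.cY
  have cZ : Continuous (Azero t₀ b₀) := by unfold Azero; fun_prop
  unfold qhatK qK0
  have i1 : Integrable (fun p => (Real.exp (2 * p.2) * ‖-Complex.I * dX w p - (Atil A₁ A₂ t₀ p : ℂ) * w p‖ ^ 2
      + ‖dY w p‖ ^ 2 + (1/4) * ‖w p‖ ^ 2)) := hw.intg (by fun_prop) (fun q h1 h2 h3 => by simp [h1, h2, h3])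
  have i2 : Integrable (fun p => (Real.exp (2 * t₀) * ‖-Complex.I * dX w p - (Azero t₀ b₀ p : ℂ) * w p‖ ^ 2
      + ‖dY w p‖ ^ 2 + (1/4) * ‖w p‖ ^ 2)) := hw.intg (by fun_prop) (fun q h1 h2 h3 => by simp [h1, h2, h3])
  have i3 : Integrable (fun p => ‖w p‖ ^ 2) := hw.intg (by fun_prop) (fun q h1 h2 h3 => by simp [h1])
  rw [← integral_const_mul, ← integral_const_mul, ← integral_add (i2.integrableOn.const_mul _) (i3.integrableOn.const_mul _),
    ← integral_const_mul]
  apply setIntegral_mono_on i1.integrableOn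
  · exact ((i2.integrableOn.const_mul _).add (i3.integrableOn.const_mul _)).const_mul _
  · exact measurableSet_Ioo.prod measurableSet_Ioo
  intro q hq
  have hd := hdiff q hq
  have hp := norm_pert (-Complex.I * dX w q) (w q) (Atil A₁ A₂ t₀ q) (Azero t₀ b₀ q) η hη
  have hexp : rexp (2 * q.2) ≤ rexp (2 * t₀) * (1 + ε₀ * C₁) := by
    have h1 : rexp (2 * q.2) ≤ rexp (2 * t₀) * rexp ε₀ := by
      rw [← Real.exp_add]; apply Real.exp_le_exp.2
      have := hq.2.2; linarith
    have h2 := (abs_le.1 (Real.abs_exp_sub_one_le (x := ε₀) (by rw [abs_of_pos hε]; linarith))).2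
    rw [abs_of_pos hε] at h2
    refine h1.trans ?_
    gcongr
    nlinarith
  have hsq : (Atil A₁ A₂ t₀ q - Azero t₀ b₀ q) ^ 2 ≤ (C2 * ε₀ ^ 2 * β * rexp (-t₀)) ^ 2 := by
    rw [← sq_abs]; gcongr
  have hE : rexp (2 * t₀) * rexp (-t₀) ^ 2 = 1 := by
    rw [← Real.exp_nat_mul, ← Real.exp_add]; simp
  have hfin : rexp (2 * t₀) * ((1 + 1 / η ^ 2) * (Atil A₁ A₂ t₀ q - Azero t₀ b₀ q) ^ 2) ≤ (ε₀ ^ 4 / η ^ 2) * C₁ * β ^ 2 := by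
    calc _ ≤ rexp (2 * t₀) * ((2 / η ^ 2) * (C2 * ε₀ ^ 2 * β * rexp (-t₀)) ^ 2) := by
          gcongr
          have : (1:ℝ) ≤ 1 / η ^ 2 := by rw [le_div_iff₀ (by positivity)]; nlinarith
          have e : 2 / η ^ 2 = 1 / η ^ 2 + 1 / η ^ 2 := by ring
          linarith
      _ = (rexp (2 * t₀) * rexp (-t₀) ^ 2) * (ε₀ ^ 4 / η ^ 2 * (2 * C2 ^ 2) * β ^ 2) := by ring
      _ ≤ _ := by rw [hE, one_mul]; gcongr
  have hC1p : (1:ℝ) ≤ 1 + ε₀ * C₁ := by nlinarith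
  have hN := sq_nonneg ‖w q‖
  have hY := sq_nonneg ‖dY w q‖
  have hX := sq_nonneg ‖-Complex.I * dX w q - (Atil A₁ A₂ t₀ q : ℂ) * w q‖
  have hZ := sq_nonneg ‖-Complex.I * dX w q - (Azero t₀ b₀ q : ℂ) * w q‖
  generalize ‖-Complex.I * dX w q - (Atil A₁ A₂ t₀ q : ℂ) * w q‖ ^ 2 = X at *
  generalize ‖-Complex.I * dX w q - (Azero t₀ b₀ q : ℂ) * w q‖ ^ 2 = Z at *
  generalize ‖w q‖ ^ 2 = N at *
  generalize ‖dY w q‖ ^ 2 = Yy at *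
  have s1 : rexp (2 * q.2) * X ≤ rexp (2 * t₀) * (1 + ε₀ * C₁) * X := by gcongr
  have s2 : rexp (2 * t₀) * X ≤ (1 + η ^ 2) * (rexp (2 * t₀) * Z) + (ε₀ ^ 4 / η ^ 2) * C₁ * β ^ 2 * N := by
    calc _ ≤ rexp (2 * t₀) * ((1 + η ^ 2) * Z + (1 + 1 / η ^ 2) * ((Atil A₁ A₂ t₀ q - Azero t₀ b₀ q) ^ 2 * N)) := by gcongr
      _ = (1 + η ^ 2) * (rexp (2 * t₀) * Z) + (rexp (2 * t₀) * ((1 + 1 / η ^ 2) * (Atil A₁ A₂ t₀ q - Azero t₀ b₀ q) ^ 2)) * N := by ring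
      _ ≤ _ := by gcongr
  have s3 : (1 + ε₀ * C₁) * (rexp (2 * t₀) * X) ≤ (1 + ε₀ * C₁) * ((1 + η ^ 2) * (rexp (2 * t₀) * Z) + (ε₀ ^ 4 / η ^ 2) * C₁ * β ^ 2 * N) := by gcongr
  have s4 : Yy + 1/4 * N ≤ (1 + ε₀ * C₁) * ((1 + η ^ 2) * (Yy + 1/4 * N)) := by
    have : 0 ≤ Yy + 1/4 * N := by positivity
    have h1 : Yy + 1/4 * N ≤ (1 + η ^ 2) * (Yy + 1/4 * N) :=
      le_mul_of_one_le_left this (by linarith [sq_nonneg η])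
    exact h1.trans (le_mul_of_one_le_left (by positivity) hC1p)
  clear hp hfin hsq hd hdiff hexp
  linarith
end
end
end

section
open MeasureTheory Real Filter
open scoped ContDiff ComplexConjugate
noncomputable section

lemma hasD_x {u : ℝ × ℝ → ℂ} (hu : ContDiff ℝ ∞ u) (x t : ℝ) : HasDerivAt (fun x => u (x, t)) (dX u (x, t)) x := by
  have h1 : HasFDerivAt u (fderiv ℝ u (x, t)) (x, t) := (hu.differentiable (by simp) _).hasFDerivAt
  have h2 : HasDerivAt (fun x : ℝ => (x, t)) ((1:ℝ), (0:ℝ)) x := (hasDerivAt_id x).prodMk (hasDerivAt_const x t)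
  exact (h1.comp_hasDerivAt x h2)

lemma hasD_t {u : ℝ × ℝ → ℂ} (hu : ContDiff ℝ ∞ u) (x t : ℝ) : HasDerivAt (fun t => u (x, t)) (dY u (x, t)) t := by
  have h1 : HasFDerivAt u (fderiv ℝ u (x, t)) (x, t) := (hu.differentiable (by simp) _).hasFDerivAt
  have h2 : HasDerivAt (fun t : ℝ => (x, t)) ((0:ℝ), (1:ℝ)) t := (hasDerivAt_const t x).prodMk (hasDerivAt_id t)
  exact (h1.comp_hasDerivAt t h2)

lemma cX_of {u : ℝ × ℝ → ℂ} (hu : ContDiff ℝ ∞ u) : Continuous (dX u) := by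
  have := hu.continuous_fderiv (by simp)
  unfold dX; fun_prop
lemma cY_of {u : ℝ × ℝ → ℂ} (hu : ContDiff ℝ ∞ u) : Continuous (dY u) := by
  have := hu.continuous_fderiv (by simp)
  unfold dY; fun_prop

lemma cs_interval {a b : ℝ} (hab : a < b) {f : ℝ → ℝ} (hf : Continuous f) :
    (∫ x in a..b, f x) ^ 2 ≤ (b - a) * ∫ x in a..b, f x ^ 2 := by
  set I := ∫ x in a..b, f x with hI
  have hba : 0 < b - a := sub_pos.2 hab
  set c := I / (b - a) with hc
  have h0 : 0 ≤ ∫ x in a..b, (f x - c) ^ 2 := intervalIntegral.integral_nonneg hab.le fun x _ => sq_nonneg _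
  have h1 : ∫ x in a..b, (f x - c) ^ 2 = (∫ x in a..b, f x ^ 2) - 2 * c * I + (b - a) * c ^ 2 := by
    have : ∀ x, (f x - c) ^ 2 = (f x ^ 2 - 2 * c * f x) + c ^ 2 := fun x => by ring
    simp_rw [this]
    rw [intervalIntegral.integral_add, intervalIntegral.integral_sub, intervalIntegral.integral_const_mul,
      intervalIntegral.integral_const, smul_eq_mul]
    all_goals apply Continuous.intervalIntegrable; fun_prop
  rw [h1] at h0
  have hcI : c * (b - a) = I := by rw [hc]; field_simp
  nlinarith

lemma cont_int_snd {E : Type*} [NormedAddCommGroup E] [NormedSpace ℝ E] {F : ℝ × ℝ → E} (hF : Continuous F) (c d : ℝ) :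
    Continuous fun x => ∫ t in c..d, F (x, t) :=
  intervalIntegral.continuous_parametric_intervalIntegral_of_continuous' (f := fun x t => F (x, t)) (by exact hF) c d
lemma cont_int_fst {E : Type*} [NormedAddCommGroup E] [NormedSpace ℝ E] {F : ℝ × ℝ → E} (hF : Continuous F) (a b : ℝ) :
    Continuous fun t => ∫ x in a..b, F (x, t) :=
  intervalIntegral.continuous_parametric_intervalIntegral_of_continuous' (f := fun t x => F (x, t))
    (by exact hF.comp continuous_swap) a b

def BB (F : ℝ × ℝ → ℝ) (a b c d : ℝ) : ℝ := ∫ x in a..b, ∫ t in c..d, F (x, t)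

lemma BB_swap {F : ℝ × ℝ → ℝ} (hF : Continuous F) (a b c d : ℝ) : BB F a b c d = ∫ t in c..d, ∫ x in a..b, F (x, t) := by
  unfold BB
  apply intervalIntegral_intervalIntegral_swap
  have : IntegrableOn F (Set.uIcc a b ×ˢ Set.uIcc c d) volume :=
    hF.continuousOn.integrableOn_compact (isCompact_uIcc.prod isCompact_uIcc)
  have h2 := this.mono_set (Set.prod_mono Set.uIoc_subset_uIcc Set.uIoc_subset_uIcc)
  exact h2

lemma cell_pt {u : ℝ × ℝ → ℂ} (hu : ContDiff ℝ ∞ u) {a b c d : ℝ} (hab : a < b) (hcd : c < d)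
    (h0 : ∫ x in a..b, u (x, c) = 0) {x t : ℝ} (hx : x ∈ Set.Icc a b) (ht : t ∈ Set.Icc c d) :
    ‖u (x, t)‖ ^ 2 ≤ 2 * (b - a) * (∫ r in a..b, ‖dX u (r, t)‖ ^ 2) +
      2 * (d - c) / (b - a) * BB (fun q => ‖dY u q‖ ^ 2) a b c d := by
  have hba : 0 < b - a := sub_pos.2 hab
  have hdc : 0 < d - c := sub_pos.2 hcd
  have c0 := hu.continuous
  have c1 := cX_of hu
  have c2 := cY_of hu
  set F := ∫ r in a..b, ‖dX u (r, t)‖ with hF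
  have hFx : ∀ s ∈ Set.Icc a b, ‖u (x, t) - u (s, t)‖ ≤ F := by
    intro s hs
    have h1 := intervalIntegral.integral_eq_sub_of_hasDerivAt (a := s) (b := x) (fun r _ => hasD_x hu r t)
      (Continuous.intervalIntegrable (by fun_prop) _ _)
    rw [← h1]
    refine intervalIntegral.norm_integral_le_abs_integral_norm.trans ?_
    have h2 : |∫ r in s..x, ‖dX u (r, t)‖| ≤ |∫ r in a..b, ‖dX u (r, t)‖| := by
      apply intervalIntegral.abs_integral_mono_interval
      · rw [Set.uIoc_of_le hab.le]
        intro r hr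
        rcases Set.mem_uIoc.1 hr with h | h
        · exact ⟨by linarith [hs.1], by linarith [hx.2]⟩
        · exact ⟨by linarith [hx.1], by linarith [hs.2]⟩
      · exact Eventually.of_forall fun r => norm_nonneg _
      · exact Continuous.intervalIntegrable (by fun_prop) _ _
    refine h2.trans (le_of_eq (abs_of_nonneg ?_))
    exact intervalIntegral.integral_nonneg hab.le fun r _ => norm_nonneg _
  have hGt : ∀ s, ‖u (s, t) - u (s, c)‖ ≤ ∫ r in c..d, ‖dY u (s, r)‖ := by
    intro s
    have h1 := intervalIntegral.integral_eq_sub_of_hasDerivAt (a := c) (b := t) (fun r _ => hasD_t hu s r)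
      (Continuous.intervalIntegrable (by fun_prop) _ _)
    rw [← h1]
    refine (intervalIntegral.norm_integral_le_integral_norm ht.1).trans ?_
    apply intervalIntegral.integral_mono_interval le_rfl ht.1 ht.2
    · exact Eventually.of_forall fun r => norm_nonneg _
    · exact Continuous.intervalIntegrable (by fun_prop) _ _
  set Gf : ℝ → ℝ := fun s => ∫ r in c..d, ‖dY u (s, r)‖ with hGf
  have cG : Continuous Gf := cont_int_snd (F := fun q => ‖dY u q‖) (by fun_prop) c d
  have hid : ((b - a : ℝ) : ℂ) * u (x, t) = ∫ s in a..b, ((u (x, t) - u (s, t)) + (u (s, t) - u (s, c))) := by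
    have : ∀ s, ((u (x, t) - u (s, t)) + (u (s, t) - u (s, c))) = u (x, t) - u (s, c) := fun s => by ring
    simp_rw [this]
    rw [intervalIntegral.integral_sub (by simp) (Continuous.intervalIntegrable (by fun_prop) _ _), h0,
      intervalIntegral.integral_const, sub_zero, Complex.real_smul]
  have hmain : (b - a) * ‖u (x, t)‖ ≤ (b - a) * F + ∫ s in a..b, Gf s := by
    have h1 : (b - a) * ‖u (x, t)‖ = ‖((b - a : ℝ) : ℂ) * u (x, t)‖ := by
      rw [norm_mul, Complex.norm_real, Real.norm_eq_abs, abs_of_pos hba]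
    rw [h1, hid]
    refine (intervalIntegral.norm_integral_le_integral_norm hab.le).trans ?_
    have h2 : ∫ s in a..b, ‖(u (x, t) - u (s, t)) + (u (s, t) - u (s, c))‖ ≤ ∫ s in a..b, (F + Gf s) := by
      apply intervalIntegral.integral_mono_on hab.le
      · exact Continuous.intervalIntegrable (by fun_prop) _ _
      · exact Continuous.intervalIntegrable (by fun_prop) _ _
      · intro s hs
        exact (norm_add_le _ _).trans (add_le_add (hFx s hs) (hGt s))
    refine h2.trans (le_of_eq ?_)
    rw [intervalIntegral.integral_add (by simp) (cG.intervalIntegrable _ _), intervalIntegral.integral_const, smul_eq_mul]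
  have hF2 : F ^ 2 ≤ (b - a) * ∫ r in a..b, ‖dX u (r, t)‖ ^ 2 := cs_interval hab (by fun_prop)
  have hG2 : (∫ s in a..b, Gf s) ^ 2 ≤ (b - a) * ((d - c) * BB (fun q => ‖dY u q‖ ^ 2) a b c d) := by
    refine (cs_interval hab cG).trans ?_
    gcongr
    unfold BB
    rw [← intervalIntegral.integral_const_mul]
    have cH := cont_int_snd (F := fun q => ‖dY u q‖ ^ 2) (by fun_prop) c d
    apply intervalIntegral.integral_mono_on hab.le
    · exact (cG.pow 2).intervalIntegrable _ _
    · exact (cH.const_mul _).intervalIntegrable _ _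
    · intro s _
      exact cs_interval hcd (by fun_prop)
  set G := ∫ s in a..b, Gf s with hG
  have hu0 := norm_nonneg (u (x, t))
  set B := BB (fun q => ‖dY u q‖ ^ 2) a b c d with hB
  have h3 : ((b - a) * ‖u (x, t)‖) ^ 2 ≤ ((b - a) * F + G) ^ 2 := by gcongr
  have h4 : ((b - a) * F + G) ^ 2 ≤ 2 * (b - a) ^ 2 * F ^ 2 + 2 * G ^ 2 := by nlinarith [sq_nonneg ((b - a) * F - G)]
  have h5 : 2 * (b - a) ^ 2 * F ^ 2 ≤ 2 * (b - a) ^ 2 * ((b - a) * ∫ r in a..b, ‖dX u (r, t)‖ ^ 2) := by gcongr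
  have h6 : (b - a) ^ 2 * ‖u (x, t)‖ ^ 2 ≤ (b - a) ^ 2 * (2 * (b - a) * (∫ r in a..b, ‖dX u (r, t)‖ ^ 2) +
      2 * (d - c) / (b - a) * B) := by
    have e : (b - a) ^ 2 * (2 * (b - a) * (∫ r in a..b, ‖dX u (r, t)‖ ^ 2) + 2 * (d - c) / (b - a) * B) =
      2 * (b - a) ^ 2 * ((b - a) * ∫ r in a..b, ‖dX u (r, t)‖ ^ 2) + 2 * ((b - a) * ((d - c) * B)) := by
      field_simp
    rw [e]
    linarith [mul_pow (b - a) ‖u (x, t)‖ 2]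
  exact le_of_mul_le_mul_left h6 (by positivity)

lemma BB_cont {F : ℝ × ℝ → ℝ} (hF : Continuous F) (a b c d : ℝ) :
   IntervalIntegrable (fun x => ∫ t in c..d, F (x, t)) volume a b := (cont_int_snd hF c d).intervalIntegrable _ _

lemma cell {u : ℝ × ℝ → ℂ} (hu : ContDiff ℝ ∞ u) {a b c d : ℝ} (hab : a < b) (hcd : c < d)
    (h0 : ∫ x in a..b, u (x, c) = 0) :
    BB (fun q => ‖u q‖ ^ 2) a b c d ≤ 2 * (b - a) ^ 2 * BB (fun q => ‖dX u q‖ ^ 2) a b c d +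
      2 * (d - c) ^ 2 * BB (fun q => ‖dY u q‖ ^ 2) a b c d := by
  have hba : 0 < b - a := sub_pos.2 hab
  have c0 := hu.continuous
  have c1 := cX_of hu
  have c2 := cY_of hu
  have cF := cont_int_fst (F := fun q => ‖dX u q‖ ^ 2) (by fun_prop) a b
  set H : ℝ → ℝ := fun t => 2 * (b - a) * (∫ r in a..b, ‖dX u (r, t)‖ ^ 2) +
      2 * (d - c) / (b - a) * BB (fun q => ‖dY u q‖ ^ 2) a b c d with hH
  have cH : Continuous H := by fun_prop
  have h1 : BB (fun q => ‖u q‖ ^ 2) a b c d ≤ ∫ x in a..b, ∫ t in c..d, H t := by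
    unfold BB
    apply intervalIntegral.integral_mono_on hab.le
    · exact BB_cont (F := fun q => ‖u q‖ ^ 2) (by fun_prop) _ _ _ _
    · simp
    · intro x hx
      apply intervalIntegral.integral_mono_on hcd.le
      · exact Continuous.intervalIntegrable (by fun_prop) _ _
      · exact cH.intervalIntegrable _ _
      · intro t ht
        exact cell_pt hu hab hcd h0 hx ht
  refine h1.trans (le_of_eq ?_)
  rw [intervalIntegral.integral_const, hH, intervalIntegral.integral_add ((cF.const_mul _).intervalIntegrable _ _) (by simp),
    intervalIntegral.integral_const_mul, ← BB_swap (F := fun q => ‖dX u q‖ ^ 2) (by fun_prop), intervalIntegral.integral_const]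
  simp only [smul_eq_mul]
  field_simp

lemma BB_sum {F : ℝ × ℝ → ℝ} (hF : Continuous F) (X T : ℕ → ℝ) (m : ℕ) :
    ∑ i ∈ Finset.range m, ∑ j ∈ Finset.range m, BB F (X i) (X (i+1)) (T j) (T (j+1)) = BB F (X 0) (X m) (T 0) (T m) := by
  have : ∀ i ∈ Finset.range m, ∑ j ∈ Finset.range m, BB F (X i) (X (i+1)) (T j) (T (j+1)) = BB F (X i) (X (i+1)) (T 0) (T m) := by
    intro i _
    unfold BB
    rw [← intervalIntegral.integral_finsetSum]
    · congr 1; ext x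
      exact intervalIntegral.sum_integral_adjacent_intervals (fun k _ => Continuous.intervalIntegrable (by fun_prop) _ _)
    · intro j _
      exact BB_cont hF _ _ _ _
  rw [Finset.sum_congr rfl this]
  unfold BB
  exact intervalIntegral.sum_integral_adjacent_intervals (fun k _ => BB_cont hF _ _ _ _)

lemma box_poincare {u : ℝ × ℝ → ℂ} (hu : ContDiff ℝ ∞ u) (x₁ t₁ h k : ℝ) (hh : 0 < h) (hk : 0 < k) (m : ℕ)
    (h0 : ∀ i < m, ∀ j < m, ∫ x in (x₁ + i * h)..(x₁ + (i + 1 : ℕ) * h), u (x, t₁ + j * k) = 0) :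
    BB (fun q => ‖u q‖ ^ 2) x₁ (x₁ + m * h) t₁ (t₁ + m * k) ≤
      2 * h ^ 2 * BB (fun q => ‖dX u q‖ ^ 2) x₁ (x₁ + m * h) t₁ (t₁ + m * k) +
      2 * k ^ 2 * BB (fun q => ‖dY u q‖ ^ 2) x₁ (x₁ + m * h) t₁ (t₁ + m * k) := by
  have c0 := hu.continuous
  have c1 := cX_of hu
  have c2 := cY_of hu
  have key : ∀ F : ℝ × ℝ → ℝ, Continuous F → BB F x₁ (x₁ + m * h) t₁ (t₁ + m * k) =
      ∑ i ∈ Finset.range m, ∑ j ∈ Finset.range m, BB F (x₁ + i * h) (x₁ + (i + 1 : ℕ) * h) (t₁ + j * k) (t₁ + (j + 1 : ℕ) * k) := by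
    intro F hF
    have := BB_sum hF (fun i => x₁ + i * h) (fun i => t₁ + i * k) m
    rw [this]; simp
  rw [key _ (by fun_prop), key _ (by fun_prop), key _ (by fun_prop)]
  simp only [Finset.mul_sum, ← Finset.sum_add_distrib]
  apply Finset.sum_le_sum
  intro i hi
  apply Finset.sum_le_sum
  intro j hj
  have := cell hu (a := x₁ + i * h) (b := x₁ + (i + 1 : ℕ) * h) (c := t₁ + j * k) (d := t₁ + (j + 1 : ℕ) * k)
    (by push_cast; linarith) (by push_cast; linarith) (h0 i (Finset.mem_range.1 hi) j (Finset.mem_range.1 hj))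
  have e1 : x₁ + (i + 1 : ℕ) * h - (x₁ + i * h) = h := by push_cast; ring
  have e2 : t₁ + (j + 1 : ℕ) * k - (t₁ + j * k) = k := by push_cast; ring
  rw [e1, e2] at this
  exact this


lemma IsTestOn.BBeq {x₀ t₀ a ε₀ : ℝ} (ha : 0 < a) (hε : 0 < ε₀) {F : ℝ × ℝ → ℝ} (hF : Continuous F) :
    ∫ p in Krect x₀ t₀ a ε₀, F p = BB F (x₀ - ε₀ * a * rexp t₀ / 2) (x₀ + ε₀ * a * rexp t₀ / 2) (t₀ - ε₀ / 2) (t₀ + ε₀ / 2) := by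
  have hpos : 0 < ε₀ * a * rexp t₀ := by positivity
  unfold Krect BB
  have hi : IntegrableOn F (Set.Icc (x₀ - ε₀ * a * rexp t₀ / 2) (x₀ + ε₀ * a * rexp t₀ / 2) ×ˢ
    Set.Icc (t₀ - ε₀ / 2) (t₀ + ε₀ / 2)) volume :=
    hF.continuousOn.integrableOn_compact (isCompact_Icc.prod isCompact_Icc)
  have h2 := hi.mono_set (Set.prod_mono Set.Ioo_subset_Icc_self Set.Ioo_subset_Icc_self)
  rw [Measure.volume_eq_prod] at h2 ⊢
  rw [setIntegral_prod _ h2, intervalIntegral.integral_of_le (by linarith), ← integral_Ioc_eq_integral_Ioo]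
  congr 1; ext x
  rw [intervalIntegral.integral_of_le (by linarith), ← integral_Ioc_eq_integral_Ioo]

lemma test_zero {Ω : Set (ℝ × ℝ)} {u : ℝ × ℝ → ℂ} (hu : IsTestOn Ω u) (h : ∫ p in Ω, ‖u p‖ ^ 2 ≤ 0) : u = 0 := by
  have hc := hu.c
  rw [hu.setInt (fun q h1 h2 h3 => by simp [h1])] at h
  have hi : Integrable (fun p => ‖u p‖ ^ 2) := hu.intg (by fun_prop) (fun q h1 h2 h3 => by simp [h1])
  have h0 : ∫ p, ‖u p‖ ^ 2 = 0 := le_antisymm h (integral_nonneg fun p => by positivity)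
  rw [integral_eq_zero_iff_of_nonneg (fun p => by positivity) hi] at h0
  have h1 := (Continuous.ae_eq_iff_eq volume (by fun_prop) (by fun_prop)).1 h0
  ext p
  have := congrFun h1 p
  simpa using this

lemma energy_bd {A₁ A₂ : ℝ × ℝ → ℝ} (x₀ t₀ a ε₀ B : ℝ) (hA : Continuous (Atil A₁ A₂ t₀))
    (hB : ∀ p ∈ Krect x₀ t₀ a ε₀, |Atil A₁ A₂ t₀ p| ≤ B) {u : ℝ × ℝ → ℂ} (hu : IsTestOn (Krect x₀ t₀ a ε₀) u) :
    ∫ p in Krect x₀ t₀ a ε₀, ‖dX u p‖ ^ 2 ≤ 2 * rexp (ε₀ - 2 * t₀) * qhatK A₁ A₂ x₀ t₀ a ε₀ u +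
        2 * B ^ 2 * ∫ p in Krect x₀ t₀ a ε₀, ‖u p‖ ^ 2 ∧
    ∫ p in Krect x₀ t₀ a ε₀, ‖dY u p‖ ^ 2 ≤ qhatK A₁ A₂ x₀ t₀ a ε₀ u := by
  have c0 := hu.c
  have c1 := hu.cX
  have c2 := hu.cY
  have i1 : Integrable (fun p => (Real.exp (2 * p.2) * ‖-Complex.I * dX u p - (Atil A₁ A₂ t₀ p : ℂ) * u p‖ ^ 2
      + ‖dY u p‖ ^ 2 + (1/4) * ‖u p‖ ^ 2)) := hu.intg (by fun_prop) (fun q h1 h2 h3 => by simp [h1, h2, h3])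
  have i3 : Integrable (fun p => ‖u p‖ ^ 2) := hu.intg (by fun_prop) (fun q h1 h2 h3 => by simp [h1])
  have i4 : Integrable (fun p => ‖dX u p‖ ^ 2) := hu.intg (by fun_prop) (fun q h1 h2 h3 => by simp [h2])
  have i5 : Integrable (fun p => ‖dY u p‖ ^ 2) := hu.intg (by fun_prop) (fun q h1 h2 h3 => by simp [h3])
  have hm : MeasurableSet (Krect x₀ t₀ a ε₀) := measurableSet_Ioo.prod measurableSet_Ioo
  unfold qhatK
  constructor
  · rw [← integral_const_mul, ← integral_const_mul, ← integral_add (i1.integrableOn.const_mul _) (i3.integrableOn.const_mul _)]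
    apply setIntegral_mono_on i4.integrableOn ((i1.integrableOn.const_mul _).add (i3.integrableOn.const_mul _)) hm
    intro q hq
    show ‖dX u q‖ ^ 2 ≤ 2 * rexp (ε₀ - 2 * t₀) * (rexp (2 * q.2) * ‖-Complex.I * dX u q - (Atil A₁ A₂ t₀ q : ℂ) * u q‖ ^ 2
       + ‖dY u q‖ ^ 2 + 1 / 4 * ‖u q‖ ^ 2) + 2 * B ^ 2 * ‖u q‖ ^ 2
    have hb := hB q hq
    have h1 : ‖dX u q‖ ≤ ‖-Complex.I * dX u q - (Atil A₁ A₂ t₀ q : ℂ) * u q‖ + |Atil A₁ A₂ t₀ q| * ‖u q‖ := by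
      have e : ‖dX u q‖ = ‖-Complex.I * dX u q‖ := by simp
      have e2 : |Atil A₁ A₂ t₀ q| * ‖u q‖ = ‖(Atil A₁ A₂ t₀ q : ℂ) * u q‖ := by simp
      rw [e, e2]
      have := norm_add_le (-Complex.I * dX u q - (Atil A₁ A₂ t₀ q : ℂ) * u q) ((Atil A₁ A₂ t₀ q : ℂ) * u q)
      simpa using this
    have hexp : 1 ≤ rexp (ε₀ - 2 * t₀) * rexp (2 * q.2) := by
      rw [← Real.exp_add]; apply Real.one_le_exp
      have := hq.2.1; linarith
    have hB2 : (|Atil A₁ A₂ t₀ q| * ‖u q‖) ≤ B * ‖u q‖ := by gcongr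
    have hX := norm_nonneg (-Complex.I * dX u q - (Atil A₁ A₂ t₀ q : ℂ) * u q)
    have hd := norm_nonneg (dX u q)
    have hN := sq_nonneg ‖u q‖
    have hY := sq_nonneg ‖dY u q‖
    generalize ‖-Complex.I * dX u q - (Atil A₁ A₂ t₀ q : ℂ) * u q‖ = X at *
    have h2 : ‖dX u q‖ ^ 2 ≤ 2 * X ^ 2 + 2 * B ^ 2 * ‖u q‖ ^ 2 := by
      have h3 : ‖dX u q‖ ≤ X + B * ‖u q‖ := by linarith
      have : ‖dX u q‖ ^ 2 ≤ (X + B * ‖u q‖) ^ 2 := by gcongr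
      nlinarith [sq_nonneg (X - B * ‖u q‖)]
    have h4 : X ^ 2 ≤ rexp (ε₀ - 2 * t₀) * rexp (2 * q.2) * X ^ 2 := le_mul_of_one_le_left (sq_nonneg _) hexp
    have h5 : 0 ≤ rexp (ε₀ - 2 * t₀) * (‖dY u q‖ ^ 2 + 1 / 4 * ‖u q‖ ^ 2) := by positivity
    linarith
  · apply setIntegral_mono_on i5.integrableOn i1.integrableOn hm
    intro q hq
    have : 0 ≤ Real.exp (2 * q.2) * ‖-Complex.I * dX u q - (Atil A₁ A₂ t₀ q : ℂ) * u q‖ ^ 2 := by positivity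
    have : 0 ≤ (1/4) * ‖u q‖ ^ 2 := by positivity
    linarith

/-- cell averages as a linear map -/
def cellMap (x₁ t₁ h k : ℝ) (m : ℕ) (V : Submodule ℂ (ℝ × ℝ → ℂ)) (hV : ∀ u ∈ V, Continuous u) :
    V →ₗ[ℂ] (Fin m × Fin m → ℂ) where
  toFun u := fun ij => ∫ x in (x₁ + (ij.1 : ℕ) * h)..(x₁ + ((ij.1 : ℕ) + 1 : ℕ) * h), u.1 (x, t₁ + (ij.2 : ℕ) * k)
  map_add' u v := by
    ext ij
    have c1 := hV _ u.2
    have c2 := hV _ v.2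
    simp only [Submodule.coe_add, Pi.add_apply]
    rw [intervalIntegral.integral_add] <;> apply Continuous.intervalIntegrable <;> fun_prop
  map_smul' c u := by
    ext ij
    simp only [Submodule.coe_smul, Pi.smul_apply, smul_eq_mul, RingHom.id_apply]
    rw [intervalIntegral.integral_const_mul]

lemma finite_neg {A₁ A₂ : ℝ × ℝ → ℝ} (x₀ t₀ a ε₀ lam : ℝ) (ha : 0 < a) (hε : 0 < ε₀) (hlam : 0 < lam) (hA : Continuous (Atil A₁ A₂ t₀)) :
    ∃ M : ℕ, ∀ V : Submodule ℂ (ℝ × ℝ → ℂ), (V : Set (ℝ × ℝ → ℂ)) ⊆ {w | IsTestOn (Krect x₀ t₀ a ε₀) w} →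
      (∀ u ∈ V, u ≠ 0 → qhatK A₁ A₂ x₀ t₀ a ε₀ u < lam * ∫ p in Krect x₀ t₀ a ε₀, ‖u p‖ ^ 2) →
      Module.Finite ℂ V ∧ Module.finrank ℂ V ≤ M := by
  obtain ⟨B, hB⟩ : ∃ B, ∀ p ∈ Krect x₀ t₀ a ε₀, |Atil A₁ A₂ t₀ p| ≤ B := by
    have hcpt : IsCompact (Set.Icc (x₀ - ε₀ * a * rexp t₀ / 2) (x₀ + ε₀ * a * rexp t₀ / 2) ×ˢ
      Set.Icc (t₀ - ε₀ / 2) (t₀ + ε₀ / 2)) := isCompact_Icc.prod isCompact_Icc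
    obtain ⟨B, hB⟩ := hcpt.exists_bound_of_continuousOn hA.continuousOn
    exact ⟨B, fun p hp => hB p (Set.prod_mono Set.Ioo_subset_Icc_self Set.Ioo_subset_Icc_self hp)⟩
  set R := ε₀ * a * rexp t₀ with hR
  have hRpos : 0 < R := by positivity
  set G := 2 * R ^ 2 * (2 * rexp (ε₀ - 2 * t₀) * lam + 2 * B ^ 2) + 2 * ε₀ ^ 2 * lam with hG
  obtain ⟨m0, hm0⟩ := exists_nat_gt G
  set m := m0 + 1 with hm
  have hm1 : (1:ℝ) ≤ m := by rw [hm]; push_cast; linarith [(Nat.cast_nonneg m0 : (0:ℝ) ≤ m0)]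
  have hmG : G < (m:ℝ) ^ 2 := by
    have : (m0:ℝ) < m := by rw [hm]; push_cast; linarith
    nlinarith
  have hmpos : (0:ℝ) < m := by linarith
  refine ⟨m * m, fun V hV hneg => ?_⟩
  have hVc : ∀ u ∈ V, Continuous u := fun u hu => (hV hu).c
  have hinj : Function.Injective (cellMap (x₀ - R / 2) (t₀ - ε₀ / 2) (R / m) (ε₀ / m) m V hVc) := by
    rw [← LinearMap.ker_eq_bot, LinearMap.ker_eq_bot']
    intro u hu0
    have hu : IsTestOn (Krect x₀ t₀ a ε₀) u.1 := hV u.2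
    have c0 := hu.c
    have c1 := hu.cX
    have c2 := hu.cY
    by_contra hne
    have hne' : (u : ℝ × ℝ → ℂ) ≠ 0 := fun h => hne (Subtype.ext h)
    have hlt := hneg u.1 u.2 hne'
    obtain ⟨e1, e2⟩ := energy_bd x₀ t₀ a ε₀ B hA hB hu
    have hp := box_poincare hu.1 (x₀ - R / 2) (t₀ - ε₀ / 2) (R / m) (ε₀ / m) (by positivity) (by positivity) m
      (fun i hi j hj => congrFun hu0 (⟨i, hi⟩, ⟨j, hj⟩))
    have f1 : x₀ - R / 2 + m * (R / m) = x₀ + R / 2 := by field_simp; ring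
    have f2 : t₀ - ε₀ / 2 + m * (ε₀ / m) = t₀ + ε₀ / 2 := by field_simp; ring
    rw [f1, f2, ← IsTestOn.BBeq ha hε (by fun_prop), ← IsTestOn.BBeq ha hε (by fun_prop), ← IsTestOn.BBeq ha hε (by fun_prop)] at hp
    have hD : 0 < ∫ p in Krect x₀ t₀ a ε₀, ‖u.1 p‖ ^ 2 := by
      by_contra h
      exact hne' (test_zero hu (not_lt.1 h))
    set D := ∫ p in Krect x₀ t₀ a ε₀, ‖u.1 p‖ ^ 2 with hDdef
    have g1 : ∫ p in Krect x₀ t₀ a ε₀, ‖dX u.1 p‖ ^ 2 ≤ 2 * rexp (ε₀ - 2 * t₀) * (lam * D) + 2 * B ^ 2 * D := by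
      refine e1.trans ?_
      gcongr
    have g2 : ∫ p in Krect x₀ t₀ a ε₀, ‖dY u.1 p‖ ^ 2 ≤ lam * D := e2.trans hlt.le
    have : D ≤ 2 * (R / m) ^ 2 * (2 * rexp (ε₀ - 2 * t₀) * (lam * D) + 2 * B ^ 2 * D) + 2 * (ε₀ / m) ^ 2 * (lam * D) := by
      refine hp.trans ?_
      gcongr
    have e : 2 * (R / m) ^ 2 * (2 * rexp (ε₀ - 2 * t₀) * (lam * D) + 2 * B ^ 2 * D) + 2 * (ε₀ / m) ^ 2 * (lam * D) = G / m ^ 2 * D := by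
      rw [hG]; field_simp
    rw [e] at this
    have hG1 : G / (m:ℝ) ^ 2 < 1 := by rw [div_lt_one (by positivity)]; exact hmG
    nlinarith
  have hfin : Module.Finite ℂ V := Module.Finite.of_injective _ hinj
  refine ⟨hfin, ?_⟩
  have := LinearMap.finrank_le_finrank_of_injective hinj
  simpa using this
end
end

section
open MeasureTheory Real Filter
open scoped ContDiff ComplexConjugate
noncomputable section

def Tst (Ω : Set (ℝ × ℝ)) : Submodule ℂ (ℝ × ℝ → ℂ) where
  carrier := {w | IsTestOn Ω w}
  add_mem' := by
    rintro u v ⟨h1, h2, h3⟩ ⟨k1, k2, k3⟩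
    refine ⟨h1.add k1, h2.add k2, ?_⟩
    exact (tsupport_add u v).trans (Set.union_subset h3 k3)
  zero_mem' := ⟨contDiff_const, HasCompactSupport.zero, by simp⟩
  smul_mem' := by
    rintro c u ⟨h1, h2, h3⟩
    refine ⟨contDiff_const.smul h1, h2.smul_left (f := fun _ => c), ?_⟩
    exact (closure_mono (Function.support_const_smul_subset c u)).trans h3

lemma dX_add {Ω Ω' : Set (ℝ × ℝ)} {u v : ℝ × ℝ → ℂ} (hu : IsTestOn Ω u) (hv : IsTestOn Ω' v) (q : ℝ × ℝ) :
    dX (u + v) q = dX u q + dX v q := by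
  unfold dX
  rw [fderiv_add (hu.1.differentiable (by simp) _) (hv.1.differentiable (by simp) _)]; simp
lemma dY_add {Ω Ω' : Set (ℝ × ℝ)} {u v : ℝ × ℝ → ℂ} (hu : IsTestOn Ω u) (hv : IsTestOn Ω' v) (q : ℝ × ℝ) :
    dY (u + v) q = dY u q + dY v q := by
  unfold dY
  rw [fderiv_add (hu.1.differentiable (by simp) _) (hv.1.differentiable (by simp) _)]; simp
lemma dX_smul {Ω : Set (ℝ × ℝ)} {u : ℝ × ℝ → ℂ} (hu : IsTestOn Ω u) (c : ℂ) (q : ℝ × ℝ) :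
    dX (c • u) q = c * dX u q := by
  unfold dX
  rw [fderiv_const_smul (hu.1.differentiable (by simp) _)]; simp
lemma dY_smul {Ω : Set (ℝ × ℝ)} {u : ℝ × ℝ → ℂ} (hu : IsTestOn Ω u) (c : ℂ) (q : ℝ × ℝ) :
    dY (c • u) q = c * dY u q := by
  unfold dY
  rw [fderiv_const_smul (hu.1.differentiable (by simp) _)]; simp

def bfi (A : ℝ × ℝ → ℝ) (lam : ℝ) (u v : ℝ × ℝ → ℂ) (q : ℝ × ℝ) : ℂ :=
  ((rexp (2 * q.2) : ℝ) : ℂ) * ((-Complex.I * dX u q - (A q : ℂ) * u q) * conj (-Complex.I * dX v q - (A q : ℂ) * v q))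
    + dY u q * conj (dY v q) + ((1 / 4 - lam : ℝ) : ℂ) * (u q * conj (v q))

def Bf (A : ℝ × ℝ → ℝ) (lam : ℝ) (Ω : Set (ℝ × ℝ)) (u v : ℝ × ℝ → ℂ) : ℂ := ∫ q in Ω, bfi A lam u v q

section
variable {A : ℝ × ℝ → ℝ} {lam : ℝ} {Ω : Set (ℝ × ℝ)} {u v w : ℝ × ℝ → ℂ}

lemma bfi_int (hA : Continuous A) (hu : IsTestOn Ω u) (hv : IsTestOn Ω v) : Integrable (bfi A lam u v) := by
  have a0 := hu.c
  have a1 := hu.cX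
  have a2 := hu.cY
  have b0 := hv.c
  have b1 := hv.cX
  have b2 := hv.cY
  apply hu.intg
  · unfold bfi; fun_prop
  · intro q h1 h2 h3
    simp [bfi, h1, h2, h3]

lemma Bf_add (hA : Continuous A) (hu : IsTestOn Ω u) (hv : IsTestOn Ω v) (hw : IsTestOn Ω w) :
    Bf A lam Ω (u + v) w = Bf A lam Ω u w + Bf A lam Ω v w := by
  unfold Bf
  rw [← integral_add (bfi_int hA hu hw).integrableOn (bfi_int hA hv hw).integrableOn]
  congr 1; ext q
  simp only [bfi, dX_add hu hv, dY_add hu hv, Pi.add_apply]; ring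

lemma Bf_smul (hu : IsTestOn Ω u) (c : ℂ) :
    Bf A lam Ω (c • u) w = c * Bf A lam Ω u w := by
  unfold Bf
  rw [← integral_const_mul]
  congr 1; ext q
  simp only [bfi, dX_smul hu, dY_smul hu, Pi.smul_apply, smul_eq_mul]; ring

lemma Bf_conj : Bf A lam Ω u w = conj (Bf A lam Ω w u) := by
  unfold Bf
  rw [← integral_conj]
  congr 1; ext q
  simp only [bfi, map_add, map_mul, map_sub, map_neg, Complex.conj_conj, Complex.conj_ofReal]; ring

def Qf (A : ℝ × ℝ → ℝ) (lam : ℝ) (Ω : Set (ℝ × ℝ)) (u : ℝ × ℝ → ℂ) : ℝ := (Bf A lam Ω u u).re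

lemma Qf_eq (hA : Continuous A) (hu : IsTestOn Ω u) : Qf A lam Ω u =
   (∫ p in Ω, (Real.exp (2 * p.2) * ‖-Complex.I * dX u p - (A p : ℂ) * u p‖ ^ 2
      + ‖dY u p‖ ^ 2 + (1/4) * ‖u p‖ ^ 2)) - lam * ∫ p in Ω, ‖u p‖ ^ 2 := by
  have a0 := hu.c
  have a1 := hu.cX
  have a2 := hu.cY
  have i1 : Integrable (fun p => (Real.exp (2 * p.2) * ‖-Complex.I * dX u p - (A p : ℂ) * u p‖ ^ 2
      + ‖dY u p‖ ^ 2 + (1/4) * ‖u p‖ ^ 2)) := hu.intg (by fun_prop) (fun q h1 h2 h3 => by simp [h1, h2, h3])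
  have i3 : Integrable (fun p => ‖u p‖ ^ 2) := hu.intg (by fun_prop) (fun q h1 h2 h3 => by simp [h1])
  have e : ∀ q, bfi A lam u u q = (((Real.exp (2 * q.2) * ‖-Complex.I * dX u q - (A q : ℂ) * u q‖ ^ 2
      + ‖dY u q‖ ^ 2 + (1/4) * ‖u q‖ ^ 2) - lam * ‖u q‖ ^ 2 : ℝ) : ℂ) := by
    intro q
    unfold bfi
    rw [Complex.mul_conj', Complex.mul_conj', Complex.mul_conj']
    push_cast; ring
  unfold Qf Bf
  simp_rw [e]
  rw [integral_complex_ofReal, Complex.ofReal_re, integral_sub i1.integrableOn (i3.integrableOn.const_mul _), integral_const_mul]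

lemma Qf_add (hA : Continuous A) (hu : IsTestOn Ω u) (hv : IsTestOn Ω v) (h0 : Bf A lam Ω u v = 0) (c : ℂ) :
    Qf A lam Ω (v + c • u) = Qf A lam Ω v + ‖c‖ ^ 2 * Qf A lam Ω u := by
  have hcu : IsTestOn Ω (c • u) := (Tst Ω).smul_mem c hu
  have hs : IsTestOn Ω (v + c • u) := (Tst Ω).add_mem hv hcu
  have h0' : Bf A lam Ω v u = 0 := by rw [Bf_conj, h0, map_zero]
  unfold Qf
  rw [Bf_add hA hv hcu hs, Bf_conj (u := v) (w := v + c • u), Bf_add hA hv hcu hv, Bf_smul hu, Bf_smul hu, Bf_conj (u := u) (w := v + c • u),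
    Bf_add hA hv hcu hu, Bf_smul hu, h0, h0']
  simp only [mul_zero, add_zero, zero_add, map_mul, Complex.add_re]
  rw [← Complex.normSq_eq_norm_sq, ← mul_assoc, Complex.mul_conj, Complex.re_ofReal_mul, Complex.conj_re, Complex.conj_re]
end

lemma max_funcs {A₁ A₂ : ℝ × ℝ → ℝ} (x₀ t₀ a ε₀ lam : ℝ) (ha : 0 < a) (hε : 0 < ε₀) (hlam : 0 < lam) (hA : Continuous (Atil A₁ A₂ t₀)) :
    ∃ Φ : Fin (NKA A₁ A₂ x₀ t₀ a ε₀ lam) → (Tst (Krect x₀ t₀ a ε₀) →ₗ[ℂ] ℂ),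
      ∀ u : Tst (Krect x₀ t₀ a ε₀), (∀ i, Φ i u = 0) →
        lam * (∫ p in Krect x₀ t₀ a ε₀, ‖u.1 p‖ ^ 2) ≤ qhatK A₁ A₂ x₀ t₀ a ε₀ u.1 := by
  obtain ⟨M, hM⟩ := finite_neg (A₁ := A₁) (A₂ := A₂) x₀ t₀ a ε₀ lam ha hε hlam hA
  set Ω := Krect x₀ t₀ a ε₀ with hΩ
  set S := {n : ℕ | ∃ V : Submodule ℂ (ℝ × ℝ → ℂ), (V : Set (ℝ × ℝ → ℂ)) ⊆ {w | IsTestOn Ω w} ∧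
    Module.finrank ℂ V = n ∧ ∀ u ∈ V, u ≠ 0 → qhatK A₁ A₂ x₀ t₀ a ε₀ u < lam * (fun w : ℝ × ℝ → ℂ => ∫ p in Ω, ‖w p‖ ^ 2) u} with hS
  have hN : NKA A₁ A₂ x₀ t₀ a ε₀ lam = sSup S := rfl
  have hbdd : BddAbove S := ⟨M, by rintro n ⟨V, h1, h2, h3⟩; rw [← h2]; exact (hM V h1 h3).2⟩
  have hne : S.Nonempty := ⟨0, ⊥, by
    intro u hu
    have : u = 0 := by simpa using hu
    subst this
    exact (Tst Ω).zero_mem, by simp, by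
    intro u hu h; exact absurd (by simpa using hu) h⟩
  obtain ⟨V, hV1, hV2, hV3⟩ := Nat.sSup_mem hne hbdd
  rw [← hN] at hV2
  have hfin := (hM V hV1 hV3).1
  have hQ : ∀ u, IsTestOn Ω u → Qf (Atil A₁ A₂ t₀) lam Ω u = qhatK A₁ A₂ x₀ t₀ a ε₀ u - lam * ∫ p in Ω, ‖u p‖ ^ 2 :=
    fun u hu => Qf_eq hA hu
  let b := Module.finBasisOfFinrankEq ℂ V hV2
  refine ⟨fun i => 
    { toFun := fun u => Bf (Atil A₁ A₂ t₀) lam Ω u.1 (b i).1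
      map_add' := fun u v => Bf_add hA u.2 v.2 (hV1 (b i).2)
      map_smul' := fun c u => Bf_smul u.2 c }, ?_⟩
  rintro ⟨u, hu⟩ h0
  replace hu : IsTestOn Ω u := hu
  by_contra hlt
  have hneg : Qf (Atil A₁ A₂ t₀) lam Ω u < 0 := by rw [hQ u hu]; linarith [not_le.1 hlt]
  have hall : ∀ v ∈ V, Bf (Atil A₁ A₂ t₀) lam Ω u v = 0 := by
    let ψ : V →ₗ[ℂ] ℂ :=
      { toFun := fun v => Bf (Atil A₁ A₂ t₀) lam Ω v.1 u
        map_add' := fun v w => Bf_add hA (hV1 v.2) (hV1 w.2) hu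
        map_smul' := fun c v => Bf_smul (hV1 v.2) c }
    have : ψ = 0 := b.ext fun i => by
      show Bf (Atil A₁ A₂ t₀) lam Ω (b i).1 u = 0
      rw [Bf_conj]
      have : Bf (Atil A₁ A₂ t₀) lam Ω u (b i).1 = 0 := h0 i
      rw [this, map_zero]
    intro v hv
    rw [Bf_conj]
    have h : Bf (Atil A₁ A₂ t₀) lam Ω v u = 0 := congrArg (fun f => f ⟨v, hv⟩) this
    rw [h, map_zero]
  have huV : u ∉ V := by
    intro h
    have := hall u h
    unfold Qf at hneg
    rw [this] at hneg
    simp at hneg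
  have hu0 : u ≠ 0 := fun h => huV (h ▸ V.zero_mem)
  have hmem : NKA A₁ A₂ x₀ t₀ a ε₀ lam + 1 ∈ S := by
    refine ⟨V ⊔ Submodule.span ℂ {u}, ?_, ?_, ?_⟩
    · have : V ⊔ Submodule.span ℂ {u} ≤ Tst Ω := by
        refine sup_le hV1 ?_
        rw [Submodule.span_singleton_le_iff_mem]; exact hu
      exact this
    · have h1 := Submodule.finrank_sup_add_finrank_inf_eq V (Submodule.span ℂ {u})
      have h2 : V ⊓ Submodule.span ℂ {u} = ⊥ := by
        rw [← disjoint_iff]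
        rw [Submodule.disjoint_span_singleton' hu0]; exact huV
      rw [h2, finrank_bot, hV2, finrank_span_singleton hu0] at h1
      simpa using h1
    · intro w hw hw0
      obtain ⟨v, hv, z, hz, rfl⟩ := Submodule.mem_sup.1 hw
      obtain ⟨c, rfl⟩ := Submodule.mem_span_singleton.1 hz
      have hvt : IsTestOn Ω v := hV1 hv
      have ht : IsTestOn Ω (v + c • u) := (Tst Ω).add_mem hvt ((Tst Ω).smul_mem c hu)
      have key := Qf_add hA hu hvt (hall v hv) c
      have hlt' : Qf (Atil A₁ A₂ t₀) lam Ω (v + c • u) < 0 := by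
        rw [key]
        by_cases hv0 : v = 0
        · subst hv0
          have hc : c ≠ 0 := by rintro rfl; simp at hw0
          have : Qf (Atil A₁ A₂ t₀) lam Ω 0 = 0 := by
            unfold Qf
            have := Bf_smul (A := Atil A₁ A₂ t₀) (lam := lam) (Ω := Ω) (w := 0) hu 0
            rw [zero_smul, zero_mul] at this
            rw [this]; rfl
          rw [this]
          have : 0 < ‖c‖ ^ 2 := by positivity
          nlinarith
        · have h1 := hV3 v hv hv0
          have h2 := hQ v hvt
          have : 0 ≤ ‖c‖ ^ 2 := by positivity
          simp only at h1
          nlinarith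
      rw [hQ _ ht] at hlt'
      show _ < lam * ∫ p in Ω, ‖(v + c • u) p‖ ^ 2
      linarith
  have := le_csSup hbdd hmem
  rw [← hN] at this
  omega
end
end

section
open MeasureTheory Real Filter Polynomial
open scoped ContDiff ComplexConjugate
noncomputable section

section
variable {L δ K L' δ' : ℝ} {χ P ψ Q : ℝ → ℝ}

lemma tileW_add {ι : Type*} [Fintype ι] (β x₀ t₀ : ℝ) (ν d : ι → ℝ) (p q : ι → ℂ[X]) :
    tileW χ ψ β x₀ t₀ ν d (fun i => p i + q i) = tileW χ ψ β x₀ t₀ ν d p + tileW χ ψ β x₀ t₀ ν d q := by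
  ext z
  simp only [tileW, WW, pg_add, Pi.add_apply, ← mul_add, ← Finset.sum_add_distrib]
  congr 1
  apply Finset.sum_congr rfl
  intro i _; ring

lemma tileW_smul {ι : Type*} [Fintype ι] (β x₀ t₀ : ℝ) (ν d : ι → ℝ) (c : ℂ) (p : ι → ℂ[X]) :
    tileW χ ψ β x₀ t₀ ν d (fun i => c • p i) = c • tileW χ ψ β x₀ t₀ ν d p := by
  ext z
  simp only [tileW, WW, pg_smul, Pi.smul_apply, smul_eq_mul]
  rw [mul_left_comm]
  congr 1
  rw [Finset.mul_sum]
  apply Finset.sum_congr rfl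
  intro i _; ring

def tileLin {ι : Type*} [Fintype ι] (β x₀ t₀ : ℝ) (ν d : ι → ℝ) (χ ψ : ℝ → ℝ) (Ω : Set (ℝ × ℝ)) (M : ℕ)
    (h : ∀ p, IsTestOn Ω (tileW χ ψ β x₀ t₀ ν d p)) : (ι → degreeLT ℂ M) →ₗ[ℂ] Tst Ω where
  toFun p := ⟨tileW χ ψ β x₀ t₀ ν d (fun i => (p i : ℂ[X])), h _⟩
  map_add' p q := Subtype.ext (tileW_add β x₀ t₀ ν d _ _)
  map_smul' c p := Subtype.ext (tileW_smul β x₀ t₀ ν d c _)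

lemma finrank_degLT (k M : ℕ) : Module.finrank ℂ (Fin k → degreeLT ℂ M) = k * M := by
  have : Module.finrank ℂ (degreeLT ℂ M) = M := by
    rw [(degreeLTEquiv ℂ M).finrank_eq]; simp
  have hf : Module.Finite ℂ (degreeLT ℂ M) := Module.Finite.equiv (degreeLTEquiv ℂ M).symm
  have hfr : Module.Free ℂ (degreeLT ℂ M) := inferInstance
  rw [Module.finrank_pi_fintype]; simp [this]

lemma count_step (hc : Cut L δ K χ P) (hδ : 0 < δ) (hL : δ < L) (hK : 0 < K)
    (hc' : Cut L' δ' K ψ Q) (hδ' : 0 < δ') (hL' : δ' < L') (x₀ t₀ a ε₀ b₀ β σ : ℝ) (hβ : 0 < β) (hσ : σ = 1 ∨ σ = -1) (hb : b₀ = σ * β)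
    (hLe : L + δ < ε₀ * a * rexp t₀) (hLe' : L' + δ' < ε₀) (N m : ℕ) (Lam : ℝ)
    (Φ : Fin N → (Tst (Krect x₀ t₀ a ε₀) →ₗ[ℂ] ℂ))
    (hΦ : ∀ u : Tst (Krect x₀ t₀ a ε₀), (∀ i, Φ i u = 0) →
        Lam * (∫ p in Krect x₀ t₀ a ε₀, ‖u.1 p‖ ^ 2) ≤ qK0 x₀ t₀ a ε₀ b₀ u.1)
    (hgap : (2 * m + 1) * β + 2 * (K / δ') ^ 2 + (2 * rexp (2 * t₀) * (K / δ) ^ 2 + 1 / 4) < Lam) :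
    ∃ D : ℝ, ∀ n k : ℕ, k * (2 * π * rexp t₀ / (L * β)) + D ≤ n * L' → k * (m + 1) ≤ n * N := by
  set E0 := (2 * m + 1) * β + 2 * (K / δ') ^ 2 with hE0
  set c := 2 * rexp (2 * t₀) * (K / δ) ^ 2 + 1 / 4 with hcdef
  have hLpos : 0 < L := hδ.trans hL
  have hLpos' : 0 < L' := hδ'.trans hL'
  have hE0p : 0 < E0 := by positivity
  set γ := Lam - c - E0 with hγ
  have hγp : 0 < γ := by linarith
  set ε := γ / (2 * (1 + E0 + γ)) with hε
  have hεp : 0 < ε := by positivity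
  have hεe : ε * (1 + E0 + γ) = γ / 2 := by rw [hε]; field_simp
  obtain ⟨s, hs, hts⟩ := tile_sum hc' hδ' hL' hK β hβ m ε hεp
  set κ := 2 * π * rexp t₀ / (L * β) with hκ
  have hκp : 0 < κ := by positivity
  obtain ⟨m0, hm0⟩ := exists_nat_ge (s / κ)
  rw [div_le_iff₀ hκp] at hm0
  refine ⟨m0 * κ + s + L', fun n k hnk => ?_⟩
  by_contra hlt
  push Not at hlt
  set cc : Fin k → ℝ := fun i => (m0 + (i : ℕ)) * κ with hcc
  have hcc1 : ∀ i, s ≤ cc i := by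
    intro i
    simp only [hcc]
    have : (0:ℝ) ≤ (i : ℕ) * κ := by positivity
    linarith
  have hcc2 : ∀ i, cc i ≤ (n - 1) * L' - s := by
    intro i
    simp only [hcc]
    have h1 : ((i : ℕ) : ℝ) ≤ k := by exact_mod_cast i.2.le
    have : ((i : ℕ) : ℝ) * κ ≤ k * κ := by gcongr
    linarith
  set d : ℕ → Fin k → ℝ := fun j i => j * L' - cc i with hd
  set ν : ℕ → Fin k → ℝ := fun j i => σ * (β * rexp (-t₀) * d j i) with hν
  have hσ2 : σ ^ 2 = 1 := by rcases hσ with rfl | rfl <;> norm_num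
  have hFreq : ∀ j, Freq L (ν j) := by
    intro j i i'
    have e : (ν j i - ν j i') * L = 2 * π * (σ * (((i' : ℕ) : ℝ) - ((i : ℕ) : ℝ))) := by
      have hx : rexp (-t₀) * rexp t₀ = 1 := by rw [← Real.exp_add]; simp
      simp only [hν, hd, hcc, hκ]
      have : (σ * (β * rexp (-t₀) * (↑j * L' - (↑m0 + ↑↑i) * (2 * π * rexp t₀ / (L * β)))) -
        σ * (β * rexp (-t₀) * (↑j * L' - (↑m0 + ↑↑i') * (2 * π * rexp t₀ / (L * β))))) * L =
        2 * π * (σ * (((i' : ℕ) : ℝ) - ((i : ℕ) : ℝ))) * (rexp (-t₀) * rexp t₀) := by field_simp; ring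
      rw [this, hx, mul_one]
    rw [e]
    rcases hσ with h | h
    · refine ⟨((i' : ℕ) : ℤ) - ((i : ℕ) : ℤ), by rw [h]; push_cast; ring, fun hne h0 => hne (Fin.ext (by omega))⟩
    · refine ⟨((i : ℕ) : ℤ) - ((i' : ℕ) : ℤ), by rw [h]; push_cast; ring, fun hne h0 => hne (Fin.ext (by omega))⟩
  have hmain := fun j => tileW_main hc hδ hL hK (hFreq j) hc' x₀ t₀ a ε₀ b₀ β σ hσ2 hb hLe hLe' (d j) (fun i => rfl)
  let T : ℕ → (Fin k → degreeLT ℂ (m + 1)) →ₗ[ℂ] Tst (Krect x₀ t₀ a ε₀) :=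
    fun j => tileLin β x₀ t₀ (ν j) (d j) χ ψ (Krect x₀ t₀ a ε₀) (m + 1) (fun p => (hmain j p).1)
  let Ψ : (Fin k → degreeLT ℂ (m + 1)) →ₗ[ℂ] (Fin n × Fin N → ℂ) :=
    LinearMap.pi fun ji => (Φ ji.2).comp (T ji.1)
  have hf : Module.Finite ℂ (degreeLT ℂ (m + 1)) := Module.Finite.equiv (degreeLTEquiv ℂ (m + 1)).symm
  have hker : LinearMap.ker Ψ ≠ ⊥ := by
    apply LinearMap.ker_ne_bot_of_finrank_lt
    rw [finrank_degLT]
    simpa using hlt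
  obtain ⟨p, hp0, hpne⟩ := (Submodule.ne_bot_iff _).1 hker
  have hp1 : ∀ j < n, ∀ i, Φ i (T j p) = 0 := by
    intro j hj i
    exact congrFun (LinearMap.mem_ker.1 hp0) (⟨j, hj⟩, i)
  set pp : Fin k → ℂ[X] := fun i => (p i : ℂ[X]) with hpp
  have hdeg : ∀ i, (pp i).natDegree ≤ m := by
    intro i
    have := mem_degreeLT.1 (p i).2
    rw [natDegree_le_iff_degree_le]
    exact degree_le_of_natDegree_le (Nat.lt_succ_iff.1 (by
      by_cases h0 : pp i = 0
      · rw [h0]; simp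
      · rw [natDegree_lt_iff_degree_lt h0]; exact this))
  have hN0 : 0 < ∑ i, nsP β (pp i) := by
    obtain ⟨i, hi⟩ : ∃ i, p i ≠ 0 := by
      by_contra h; push Not at h; exact hpne (funext h)
    exact Finset.sum_pos' (fun i _ => nsP_nonneg β (pp i)) ⟨i, Finset.mem_univ _, nsP_pos β hβ (pp i) (fun h => hi (Subtype.ext h))⟩
  have hj : ∀ j ∈ Finset.range n, (Lam - c) * ∑ i, tileM ψ β (pp i) (d j i) ≤ ∑ i, tileE ψ β (pp i) (d j i) := by
    intro j hj
    have h1 := hΦ (T j p) (hp1 j (Finset.mem_range.1 hj))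
    obtain ⟨_, h2, h3⟩ := hmain j pp
    have h4 : Lam * (L * ∑ i, tileM ψ β (pp i) (d j i)) ≤ L * ∑ i, (tileE ψ β (pp i) (d j i) + c * tileM ψ β (pp i) (d j i)) := by
      rw [← h2]; exact h1.trans h3
    rw [Finset.sum_add_distrib, ← Finset.mul_sum] at h4
    have h5 : L * ((Lam - c) * ∑ i, tileM ψ β (pp i) (d j i)) ≤ L * ∑ i, tileE ψ β (pp i) (d j i) := by linarith
    exact le_of_mul_le_mul_left h5 hLpos
  have hsum := Finset.sum_le_sum hj
  rw [← Finset.mul_sum, Finset.sum_comm, Finset.sum_comm (f := fun j i => tileE ψ β (pp i) (d j i))] at hsum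
  have hEs : ∑ i, ∑ j ∈ Finset.range n, tileE ψ β (pp i) (d j i) ≤ (E0 + ε) * ∑ i, nsP β (pp i) := by
    rw [Finset.mul_sum]
    exact Finset.sum_le_sum fun i _ => (hts n (cc i) (pp i) (hcc1 i) (hcc2 i) (hdeg i)).1
  have hMs : (1 - ε) * ∑ i, nsP β (pp i) ≤ ∑ i, ∑ j ∈ Finset.range n, tileM ψ β (pp i) (d j i) := by
    rw [Finset.mul_sum]
    exact Finset.sum_le_sum fun i _ => (hts n (cc i) (pp i) (hcc1 i) (hcc2 i) (hdeg i)).2.1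
  have hLc : Lam - c = E0 + γ := by rw [hγ]; ring
  rw [hLc] at hsum
  have h6 : (E0 + γ) * ((1 - ε) * ∑ i, nsP β (pp i)) ≤ (E0 + ε) * ∑ i, nsP β (pp i) := by
    refine le_trans ?_ (hsum.trans hEs)
    gcongr
  rw [← mul_assoc] at h6
  have h7 := le_of_mul_le_mul_right h6 hN0
  nlinarith

lemma count_bound (N m : ℕ) (κ L' D : ℝ) (hκ : 0 < κ) (hL' : 0 < L')
    (h : ∀ n k : ℕ, k * κ + D ≤ n * L' → k * (m + 1) ≤ n * N) : (m + 1) * (L' / κ) ≤ N := by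
  by_contra hlt
  push Not at hlt
  set g : ℝ := (m + 1) - κ * N / L' with hg
  have hgp : 0 < g := by
    rw [hg, sub_pos, div_lt_iff₀ hL']
    rw [← mul_div_assoc, lt_div_iff₀ hκ] at hlt
    linarith
  obtain ⟨k, hk⟩ := exists_nat_gt ((|D| / L' + 1) * N / g)
  rw [div_lt_iff₀ hgp] at hk
  set n := ⌈(k * κ + |D|) / L'⌉₊ with hn
  have h1 : (k * κ + |D|) / L' ≤ n := Nat.le_ceil _
  have h2 : (n : ℝ) < (k * κ + |D|) / L' + 1 := Nat.ceil_lt_add_one (by positivity)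
  have h3 := h n k (by rw [div_le_iff₀ hL'] at h1; linarith [le_abs_self D])
  have h4 : (k : ℝ) * (m + 1) ≤ n * N := by exact_mod_cast h3
  have h5 : (n : ℝ) * N ≤ ((k * κ + |D|) / L' + 1) * N := by gcongr
  have h6 : ((k * κ + |D|) / L' + 1) * N = k * (κ * N / L') + (|D| / L' + 1) * N := by ring
  have h7 : (k : ℝ) * g = k * (m + 1) - k * (κ * N / L') := by rw [hg]; ring
  linarith
end
end
end

section
open MeasureTheory Real Filter
noncomputable section

lemma tsum_heav (Λ β : ℝ) (hβ : 0 < β) : ∃ M : ℕ, ∑' k : ℕ, heav (Λ - (2 * (k : ℝ) + 1) * β) = M ∧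
    (∀ m : ℕ, M = m + 1 → (2 * (m : ℝ) + 1) * β < Λ) := by
  have hk : ∀ k : ℕ, k < ⌈(Λ / β - 1) / 2⌉₊ ↔ 0 < Λ - (2 * (k : ℝ) + 1) * β := by
    intro k
    rw [Nat.lt_ceil, lt_div_iff₀ (by norm_num), lt_sub_iff_add_lt, lt_div_iff₀ hβ, sub_pos]
    constructor <;> intro h <;> linarith
  refine ⟨⌈(Λ / β - 1) / 2⌉₊, ?_, fun m hm => ?_⟩
  · rw [tsum_eq_sum (s := Finset.range ⌈(Λ / β - 1) / 2⌉₊)]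
    · rw [Finset.sum_congr rfl (g := fun _ => (1:ℝ))]
      · simp
      · intro k h
        unfold heav
        rw [if_pos ((hk k).1 (Finset.mem_range.1 h))]
    · intro k h
      rw [Finset.mem_range] at h
      unfold heav
      rw [if_neg fun h' => h ((hk k).2 h')]
  · have := (hk m).1 (by omega)
    linarith

lemma ims_const (K τ ε₀ a a₀ t₀ : ℝ) (hK : 0 < K) (hτ : 0 < τ) (hε : 0 < ε₀) (ha : 0 < a) (ha₀ : 1 < a₀) (ha1 : 1 / a₀ < a) :
    2 * (K / (τ * ε₀ / 4)) ^ 2 + 2 * rexp (2 * t₀) * (K / (τ * (ε₀ * a * rexp t₀) / 4)) ^ 2 ≤ 64 * K ^ 2 * a₀ ^ 2 / (τ * ε₀) ^ 2 := by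
  have e : 2 * (K / (τ * ε₀ / 4)) ^ 2 + 2 * rexp (2 * t₀) * (K / (τ * (ε₀ * a * rexp t₀) / 4)) ^ 2 =
      32 * K ^ 2 * (1 + (1 / a) ^ 2) / (τ * ε₀) ^ 2 := by
    have : rexp (2 * t₀) = rexp t₀ ^ 2 := by rw [← Real.exp_nat_mul]; norm_num
    rw [this]
    have hp := Real.exp_pos t₀
    generalize rexp t₀ = E at *
    field_simp
    ring
  rw [e]
  have h1 : 1 / a ≤ a₀ := by
    rw [div_le_iff₀ ha]; rw [div_lt_iff₀ (by linarith)] at ha1; linarith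
  have h2 : (1 / a) ^ 2 ≤ a₀ ^ 2 := by gcongr
  have h3 : 1 ≤ a₀ ^ 2 := by nlinarith
  have h4 : 32 * K ^ 2 * (1 + (1 / a) ^ 2) ≤ 64 * K ^ 2 * a₀ ^ 2 := by
    have : 0 < K ^ 2 := by positivity
    nlinarith
  gcongr

set_option maxHeartbeats 1000000 in
theorem final_aux
    (C₀ : ℝ) (hC₀ : 0 < C₀) (a₀ : ℝ) (ha₀ : 1 < a₀) :
    ∃ C₁ : ℝ, 1 < C₁ ∧ ∃ C₀' > 0,
      ∀ A₁ A₂ : ℝ × ℝ → ℝ, ContDiffOn ℝ 2 A₁ UHP → ContDiffOn ℝ 2 A₂ UHP →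
      H2 C₀ A₁ A₂ →
      ∀ a : ℝ, 1 / a₀ < a → a ≤ a₀ →
      ∀ ε₀ : ℝ, 0 < ε₀ → ε₀ < 1 / (2 * C₁) →
      ∀ x₀ t₀ : ℝ, 1 < intenB A₁ A₂ (x₀, Real.exp t₀) →
      ∀ lam : ℝ, 1 < lam → ∀ η : ℝ, 0 < η → η < 1 / 2 →
      (ε₀⁻¹) ^ 2 / C₀' ≤ intenB A₁ A₂ (x₀, Real.exp t₀) →
      ∀ τ : ℝ, 0 < τ → τ < 1 →
        (1 - τ) ^ 2 * ((a * ε₀ ^ 2 * Real.exp t₀) * intenB A₁ A₂ (x₀, Real.exp t₀) /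
              (2 * π * Real.exp t₀)) *
            ∑' k : ℕ, heav
              ((1 + η ^ 2)⁻¹ * (lam / (1 + ε₀ * C₁) -
                  (ε₀ ^ 4 / η ^ 2) * C₁ * intenB A₁ A₂ (x₀, Real.exp t₀) ^ 2)
                - 1/4 - C₀' / (τ * ε₀) ^ 2
                - (2 * (k : ℝ) + 1) * intenB A₁ A₂ (x₀, Real.exp t₀))
          ≤ (NKA A₁ A₂ x₀ t₀ a ε₀ lam : ℝ) := by
  obtain ⟨K, hK, hcut⟩ := exists_cut
  set C₁ := 2 * (8 * (C₀ * (a₀ + 1)) + 1) ^ 2 with hC₁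
  have hX : 0 < C₀ * (a₀ + 1) := by positivity
  have hC2 : 2 ≤ C₁ := by nlinarith
  have hC3 : C₀ * (a₀ + 1) ≤ C₁ := by nlinarith
  refine ⟨C₁, by linarith, 64 * K ^ 2 * a₀ ^ 2, by positivity, ?_⟩
  intro A₁ A₂ hA1 hA2 hH a ha1 ha2 ε₀ hε hε1 x₀ t₀ hβ1 lam hlam η hη hη2 _ τ hτ hτ1
  have ha : 0 < a := lt_trans (by positivity) ha1
  have hεC : ε₀ * C₁ < 1 / 2 := by
    rw [lt_div_iff₀ (by linarith)] at hε1; linarith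
  have hε2 : ε₀ ≤ 1 / 2 := by nlinarith
  have hk : C₀ * (a₀ + 1) * ε₀ ≤ 1 := by nlinarith
  have hf := fieldB_contDiffOn hA1 hA2
  have cA := Atil_cont hf t₀
  have hcomp := q_compare hf C₀ hC₀ hH a₀ a ε₀ x₀ t₀ ha ha2 hε hε2 hk hβ1 C₁ hC2 le_rfl η hη hη2
  obtain ⟨Φ, hΦ⟩ := max_funcs (A₁ := A₁) (A₂ := A₂) x₀ t₀ a ε₀ lam ha hε (by linarith) cA
  generalize NKA A₁ A₂ x₀ t₀ a ε₀ lam = N at *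
  set b₀ := fieldB A₁ A₂ (x₀, rexp t₀) with hb₀
  have hβb : intenB A₁ A₂ (x₀, rexp t₀) = |b₀| := rfl
  set β := intenB A₁ A₂ (x₀, rexp t₀) with hβ
  have hβ0 : 0 < β := by linarith
  set Lam := (1 + η ^ 2)⁻¹ * (lam / (1 + ε₀ * C₁) - (ε₀ ^ 4 / η ^ 2) * C₁ * β ^ 2) with hLam
  have hΦ' : ∀ u : Tst (Krect x₀ t₀ a ε₀), (∀ i, Φ i u = 0) →
        Lam * (∫ p in Krect x₀ t₀ a ε₀, ‖u.1 p‖ ^ 2) ≤ qK0 x₀ t₀ a ε₀ b₀ u.1 := by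
    intro u hu
    have h1 := (hΦ u hu).trans (hcomp u.1 u.2)
    generalize (∫ p in Krect x₀ t₀ a ε₀, ‖u.1 p‖ ^ 2) = D at *
    generalize qK0 x₀ t₀ a ε₀ b₀ u.1 = q at *
    have hp : 0 < 1 + ε₀ * C₁ := by positivity
    have hp2 : 0 < 1 + η ^ 2 := by positivity
    have h2 : lam / (1 + ε₀ * C₁) * D ≤ (1 + η ^ 2) * q + ε₀ ^ 4 / η ^ 2 * C₁ * β ^ 2 * D := by
      rw [div_mul_eq_mul_div, div_le_iff₀ hp]; linarith
    rw [hLam, mul_assoc, inv_mul_le_iff₀ hp2]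
    linarith
  obtain ⟨M, hM, hM2⟩ := tsum_heav (Lam - 1 / 4 - 64 * K ^ 2 * a₀ ^ 2 / (τ * ε₀) ^ 2) β hβ0
  rw [hM]
  rcases Nat.eq_zero_or_pos M with h0 | hMpos
  · rw [h0]; simp
  obtain ⟨m, rfl⟩ : ∃ m, M = m + 1 := ⟨M - 1, by omega⟩
  have hgap := hM2 m rfl
  obtain ⟨σ, hσ, hbσ⟩ : ∃ σ : ℝ, (σ = 1 ∨ σ = -1) ∧ b₀ = σ * β := by
    rcases abs_cases b₀ with ⟨h, _⟩ | ⟨h, _⟩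
    · exact ⟨1, Or.inl rfl, by rw [hβb, h]; ring⟩
    · exact ⟨-1, Or.inr rfl, by rw [hβb, h]; ring⟩
  set R := ε₀ * a * rexp t₀ with hR
  have hRp : 0 < R := by positivity
  have hd1 : 0 < τ * R / 4 := by positivity
  have hl1 : τ * R / 4 < (1 - τ / 2) * R := by nlinarith
  have hd2 : 0 < τ * ε₀ / 4 := by positivity
  have hl2 : τ * ε₀ / 4 < (1 - τ / 2) * ε₀ := by nlinarith
  obtain ⟨χ, P, hc⟩ := hcut _ _ hd1 hl1
  obtain ⟨ψ, Q, hc'⟩ := hcut _ _ hd2 hl2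
  have hims : 2 * (K / (τ * ε₀ / 4)) ^ 2 + 2 * rexp (2 * t₀) * (K / (τ * R / 4)) ^ 2 ≤ 64 * K ^ 2 * a₀ ^ 2 / (τ * ε₀) ^ 2 := ims_const K τ ε₀ a a₀ t₀ hK hτ hε ha ha₀ ha1
  obtain ⟨D, hD⟩ := count_step hc hd1 hl1 hK hc' hd2 hl2 x₀ t₀ a ε₀ b₀ β σ hβ0 hσ hbσ (by nlinarith) (by nlinarith)
    N m Lam Φ hΦ' (by linarith)
  have hLR : 0 < (1 - τ / 2) * R := hd1.trans hl1
  have hfin := count_bound N m _ _ D (by positivity) (hd2.trans hl2) hD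
  refine le_trans ?_ hfin
  have e : (m + 1 : ℝ) * ((1 - τ / 2) * ε₀ / (2 * π * rexp t₀ / ((1 - τ / 2) * R * β))) =
      (1 - τ / 2) ^ 2 * (a * ε₀ ^ 2 * rexp t₀ * β / (2 * π * rexp t₀)) * (m + 1) := by
    rw [hR]; clear_value β; field_simp
  rw [e]
  push_cast
  have : 0 ≤ 1 - τ := by linarith
  gcongr
  linarith
end
end

/-- lower bound for the counting function of `q̂^Ã_K`. -/
theorem counting_lower_bound_variable_field
    (C₀ : ℝ) (hC₀ : 0 < C₀) (a₀ : ℝ) (ha₀ : 1 < a₀) :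
    ∃ C₁ : ℝ, 1 < C₁ ∧ ∃ C₀' > 0,
      ∀ A₁ A₂ : ℝ × ℝ → ℝ, ContDiffOn ℝ 2 A₁ UHP → ContDiffOn ℝ 2 A₂ UHP →
      H2 C₀ A₁ A₂ →
      ∀ a : ℝ, 1 / a₀ < a → a ≤ a₀ →
      ∀ ε₀ : ℝ, 0 < ε₀ → ε₀ < 1 / (2 * C₁) →
      ∀ x₀ t₀ : ℝ, 1 < intenB A₁ A₂ (x₀, Real.exp t₀) →
      ∀ lam : ℝ, 1 < lam → ∀ η : ℝ, 0 < η → η < 1 / 2 →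
      (ε₀⁻¹) ^ 2 / C₀' ≤ intenB A₁ A₂ (x₀, Real.exp t₀) →
      ∀ τ : ℝ, 0 < τ → τ < 1 →
        (1 - τ) ^ 2 * ((a * ε₀ ^ 2 * Real.exp t₀) * intenB A₁ A₂ (x₀, Real.exp t₀) /
              (2 * π * Real.exp t₀)) *
            ∑' k : ℕ, heav
              ((1 + η ^ 2)⁻¹ * (lam / (1 + ε₀ * C₁) -
                  (ε₀ ^ 4 / η ^ 2) * C₁ * intenB A₁ A₂ (x₀, Real.exp t₀) ^ 2)
                - 1/4 - C₀' / (τ * ε₀) ^ 2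
                - (2 * (k : ℝ) + 1) * intenB A₁ A₂ (x₀, Real.exp t₀))
          ≤ (NKA A₁ A₂ x₀ t₀ a ε₀ lam : ℝ) := by
  exact final_aux C₀ hC₀ a₀ ha₀
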